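/- Let 1 ≤ t < ∞ and let μ be a finite positive measure supported in a compact set K such that R^t(K,μ) is irreducible and abpe(R^t(K,μ)) = Ω, where Ω is open with K = closure(Ω). Let A : ℝ → ℝ be Lipschitz with graph LG, fix 0 < α < 1/‖A′‖_∞, suppose for each w ∈ ∂_I^{LG}K the upper cone Γ^+(w,α) is outer, and write μ = μ_a + μ_s with μ_a = (1/2π)·h·ℋ¹ restricted to ∂_I^{LG}K and μ_s singular with respect to ℋ¹ restricted to ∂_I^{LG}K. If the diameters of all connected components of ℂ ∖ K are bounded away from zero, then μ_a(∂_I^{LG}K ∖ ∂_{II}^{LG}K) = 0. -/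

import Mathlib

/-!
By Hahn–Banach and Radon–Nikodym, a characteristic function fails to lie in `R^t(K, μ)` only if it
is not annihilated by some density `g` which annihilates `Rat(K)` and defines a bounded functional on
`L^t(μ)` (`indicator_rtMem`). The heart of the matter is that every such `g` vanishes `μ_a`-almost
everywhere on the set `E₀` of type I points that are not of type II (`annihilator_vanishes`). Granting
this, the characteristic functions of all measurable subsets of a suitable hull of `E₀` lie in
`R^t(K, μ)`; irreducibility forces each of these sets to be null or conull, and as `μ_a` has no atoms
the hull is null.

To see that `g` vanishes on `E₀`, let `w` be a Lebesgue point on the graph at which `g μ` has a nonzero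
density `b` with respect to `dz` (`errM_small`). The Cauchy transform of `g μ` vanishes off `K`, in
particular on the discs in the upper cone at `w` given by outerness. By the jump relation for the
graph (`main_term`), it is nearly equal to `-2πi b` on discs in the lower cone at `w`, at every small
scale, in the sense of the predicate `Good` (`cone_good`).

It remains to show that a point `x` is an analytic bounded point evaluation as soon as the Cauchy
transform `F`, normalised to be nearly `1`, is `Good` on a disc about `x` (`good_abpe`); then the lower
cone at `w` is inner, so that `w` is of type II. The basic tool is `cut_estimate`: a connected set of
size comparable to the disc cannot be covered by discs on which `F` is small, as one sees by testing
`∂̄F` against a cut-off branch of `√((z-a)(z-b))` defined off the covering discs. Since `F` vanishes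
off `K` and the components of the complement are not small, a smaller disc about `x` lies in `K`.
Moreover `r F` is the Cauchy transform of `r g μ` for `r ∈ Rat(K)`, so `∫ |r F|` over the disc is at most
a constant times the norm of `r` in `L^t(μ)`; and Thomson's scheme of coloured discs, with
`cut_estimate` in place of estimates for analytic capacity, bounds `|r|` near `x` by this integral
(`good_bounded_eval`).
-/

open MeasureTheory Metric Filter Set Complex Topology Bornology
open scoped ENNReal NNReal Real

noncomputable section

/-- Admissible-function quantity defining analytic capacity of a compact set. -/
def capAux (F : Set ℂ) : ℝ :=
  sSup {r : ℝ | ∃ f : ℂ → ℂ, DifferentiableOn ℂ f Fᶜ ∧ (∀ z ∈ Fᶜ, ‖f z‖ ≤ 1) ∧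
    ∃ f0 d : ℂ, Tendsto f (cobounded ℂ) (𝓝 f0) ∧
      Tendsto (fun z => z * (f z - f0)) (cobounded ℂ) (𝓝 d) ∧ r = ‖d‖}

/-- Analytic capacity of an arbitrary set. -/
def anCap (E : Set ℂ) : ℝ :=
  sSup {r : ℝ | ∃ F : Set ℂ, IsCompact F ∧ F ⊆ E ∧ r = capAux F}

/-- Nontangential approach region Γ_σ(z). -/
def ntRegion (σ : ℝ) (z : ℂ) : Set ℂ :=
  interior (convexHull ℝ ({z} ∪ ball (0 : ℂ) σ))

/-- Cauchy transform of the complex measure ρ dμ. -/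
def cauchyT (μ : Measure ℂ) (ρ : ℂ → ℂ) (l : ℂ) : ℂ :=
  ∫ w, (w - l)⁻¹ * ρ w ∂μ

/-- The set U(ρ dμ) of absolute convergence of the Cauchy transform. -/
def cauchyDom (μ : Measure ℂ) (ρ : ℂ → ℂ) : Set ℂ :=
  {l | Integrable (fun w => (w - l)⁻¹ * ρ w) μ}

/-- 1-dimensional radial maximal function of a (positive) measure. -/
def radialMax (m : Measure ℂ) (z : ℂ) : ℝ≥0∞ :=
  ⨆ (r : ℝ) (_ : 0 < r), m (ball z r) / ENNReal.ofReal r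

/-- Normalized arclength measure `dθ/2π` on the unit circle. -/
def circleMeasure : Measure ℂ :=
  (ENNReal.ofReal (2 * Real.pi))⁻¹ •
    (Measure.map (fun θ : ℝ => Complex.exp ((θ : ℂ) * Complex.I))
      (volume.restrict (Ico (0:ℝ) (2 * Real.pi))))

/-- Rational functions with poles off K. -/
def RatOn (K : Set ℂ) : Set (ℂ → ℂ) :=
  {f | ∃ p q : Polynomial ℂ, (∀ z ∈ K, q.eval z ≠ 0) ∧ f = fun z => p.eval z / q.eval z}

/-- The `L^t(μ)` norm, for a real exponent `t`. -/
def tnorm (t : ℝ) (μ : Measure ℂ) (f : ℂ → ℂ) : ℝ :=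
  (∫ z, ‖f z‖ ^ t ∂μ) ^ (1 / t)

/-- `C` is a bound for the evaluation functional at `l` on `Rat(K) ⊆ L^t(μ)`. -/
def EvalBound (t : ℝ) (K : Set ℂ) (μ : Measure ℂ) (l : ℂ) (C : ℝ) : Prop :=
  ∀ f ∈ RatOn K, ‖f l‖ ≤ C * tnorm t μ f

/-- The norm `M_λ` of the evaluation functional at `l` on `R^t(K,μ)`. -/
def evalNorm (t : ℝ) (K : Set ℂ) (μ : Measure ℂ) (l : ℂ) : ℝ :=
  sInf {C : ℝ | 0 ≤ C ∧ EvalBound t K μ l C}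

/-- Analytic bounded point evaluations of `R^t(K,μ)`: points having a neighborhood of
bounded point evaluations with uniformly bounded evaluation functionals (equivalently,
on which all evaluations extend analytically). -/
def abpeSet (t : ℝ) (K : Set ℂ) (μ : Measure ℂ) : Set ℂ :=
  {l | ∃ δ : ℝ, 0 < δ ∧ ∃ C : ℝ, ∀ w ∈ ball l δ, EvalBound t K μ w C}

/-- Membership in `R^t(K,μ)`, the closure of `Rat(K)` in `L^t(μ)`. -/
def RtMem (t : ℝ) (K : Set ℂ) (μ : Measure ℂ) (f : ℂ → ℂ) : Prop :=
  ∃ r : ℕ → ℂ → ℂ, (∀ n, r n ∈ RatOn K) ∧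
    Tendsto (fun n => ∫ z, ‖r n z - f z‖ ^ t ∂μ) atTop (𝓝 0)

/-- `R^t(K,μ)` is irreducible: it contains no nontrivial characteristic function. -/
def RtIrred (t : ℝ) (K : Set ℂ) (μ : Measure ℂ) : Prop :=
  ∀ E : Set ℂ, MeasurableSet E → RtMem t K μ (E.indicator 1) → μ E = 0 ∨ μ Eᶜ = 0

/-- The strong outer boundary `∂_so Ω`. -/
def strongOuter (Ω : Set ℂ) : Set ℂ :=
  {z | z ∈ frontier Ω ∧ ∃ δ : ℝ, 0 < δ ∧ δ < 1 ∧ ntRegion (1/2) z ∩ ball z δ ⊆ Ω}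

/-- The open cone with vertical axis at `l` of aperture `α`. -/
def coneAt (l : ℂ) (α : ℝ) : Set ℂ := {z | |z.re - l.re| < α * |z.im - l.im|}

def coneUp (l : ℂ) (α : ℝ) : Set ℂ := {z | z ∈ coneAt l α ∧ l.im < z.im}

def coneDown (l : ℂ) (α : ℝ) : Set ℂ := {z | z ∈ coneAt l α ∧ z.im < l.im}

def coneUpT (δ : ℝ) (l : ℂ) (α : ℝ) : Set ℂ := ball l δ ∩ coneUp l α

def coneDownT (δ : ℝ) (l : ℂ) (α : ℝ) : Set ℂ := ball l δ ∩ coneDown l α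

/-- The graph of `A : ℝ → ℝ` inside `ℂ`. -/
def lipGraph (A : ℝ → ℝ) : Set ℂ := {z | z.im = A z.re}

/-- The upper cone at `l` is outer for `K`. -/
def upperOuter (K : Set ℂ) (l : ℂ) (α : ℝ) : Prop :=
  ∃ δl εl : ℝ, 0 < δl ∧ 0 < εl ∧ ∀ δ : ℝ, 0 < δ → δ < δl →
    ∃ lδ : ℂ, ball lδ (εl * δ) ⊆ Kᶜ ∩ coneUpT δ l α

/-- The lower cone at `l` is outer for `K`. -/
def lowerOuter (K : Set ℂ) (l : ℂ) (α : ℝ) : Prop :=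
  ∃ δl εl : ℝ, 0 < δl ∧ 0 < εl ∧ ∀ δ : ℝ, 0 < δ → δ < δl →
    ∃ lδ : ℂ, ball lδ (εl * δ) ⊆ Kᶜ ∩ coneDownT δ l α

/-- The type I boundary `∂_{I,α}^{LG} K`. -/
def typeI (K : Set ℂ) (A : ℝ → ℝ) (α : ℝ) : Set ℂ :=
  {l | l ∈ lipGraph A ∧ l ∈ frontier K ∧ (upperOuter K l α ∨ lowerOuter K l α)}

def upperInner (Ω : Set ℂ) (l : ℂ) (α : ℝ) : Prop := ∃ δ : ℝ, 0 < δ ∧ coneUpT δ l α ⊆ Ω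

def lowerInner (Ω : Set ℂ) (l : ℂ) (α : ℝ) : Prop := ∃ δ : ℝ, 0 < δ ∧ coneDownT δ l α ⊆ Ω

/-- The type II boundary `∂_{II,α}^{LG} K`. -/
def typeII (K : Set ℂ) (A : ℝ → ℝ) (Ω : Set ℂ) (α : ℝ) : Set ℂ :=
  {l | l ∈ typeI K A α ∧ (upperInner Ω l α ∨ lowerInner Ω l α)}

/-- One-dimensional Hausdorff measure on `ℂ`. -/
def H1m : Measure ℂ := Measure.hausdorffMeasure 1

/-- Support of a positive measure. -/
def suppM (ν : Measure ℂ) : Set ℂ := {z | ∀ r : ℝ, 0 < r → 0 < ν (ball z r)}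

/-! ### The `∂̄`-operator, area potentials and the Cauchy–Pompeiu formula -/

/-- The Wirtinger derivative `∂φ/∂z̄`. -/
def dbar (φ : ℂ → ℂ) (z : ℂ) : ℂ := (fderiv ℝ φ z 1 + I * fderiv ℝ φ z I) / 2

lemma polar_pt_norm (θ : ℝ) : ‖((Real.cos θ : ℂ) + Real.sin θ * I)‖ = 1 := by
  have := Complex.norm_exp_ofReal_mul_I θ
  rwa [Complex.exp_mul_I, ← Complex.ofReal_cos, ← Complex.ofReal_sin] at this

lemma lintegral_inv_ball_zero {ρ : ℝ} (hρ : 0 < ρ) :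
    ∫⁻ l in ball (0:ℂ) ρ, ‖l⁻¹‖ₑ ≤ ENNReal.ofReal (2 * π * ρ) := by
  rw [← lintegral_indicator measurableSet_ball, ← Complex.lintegral_comp_polarCoord_symm]
  have hm : MeasurableSet (polarCoord.target) := polarCoord.open_target.measurableSet
  calc ∫⁻ p in polarCoord.target, ENNReal.ofReal p.1 •
        (ball (0:ℂ) ρ).indicator (fun l => ‖l⁻¹‖ₑ) (Complex.polarCoord.symm p)
      ≤ ∫⁻ p in polarCoord.target, (Ioo 0 ρ ×ˢ Ioo (-π) π).indicator 1 p := by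
        refine setLIntegral_mono' hm ?_
        rintro ⟨r, θ⟩ ⟨hr, hθ⟩
        simp only [mem_Ioi] at hr
        by_cases hb : Complex.polarCoord.symm (r, θ) ∈ ball (0:ℂ) ρ
        · have hb' := hb
          rw [mem_ball_zero_iff, Complex.norm_polarCoord_symm, abs_of_pos hr] at hb'
          have hmem : (r, θ) ∈ Ioo 0 ρ ×ˢ Ioo (-π) π := ⟨⟨hr, hb'⟩, hθ⟩
          rw [indicator_of_mem hb, indicator_of_mem hmem, ← ofReal_norm, norm_inv,
            Complex.norm_polarCoord_symm, abs_of_pos hr, smul_eq_mul,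
            ← ENNReal.ofReal_mul hr.le, mul_inv_cancel₀ hr.ne']
          simp
        · rw [indicator_of_notMem hb]; simp
    _ ≤ ∫⁻ p, (Ioo 0 ρ ×ˢ Ioo (-π) π).indicator 1 p := setLIntegral_le_lintegral _ _
    _ = ENNReal.ofReal (2 * π * ρ) := by
        rw [lintegral_indicator_one (measurableSet_Ioo.prod measurableSet_Ioo),
          Measure.volume_eq_prod, Measure.prod_prod, Real.volume_Ioo, Real.volume_Ioo,
          ← ENNReal.ofReal_mul (by linarith)]
        congr 1; ring

lemma lintegral_inv_ball_center (z : ℂ) {ρ : ℝ} (hρ : 0 < ρ) :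
    ∫⁻ l in ball z ρ, ‖(z - l)⁻¹‖ₑ ≤ ENNReal.ofReal (2 * π * ρ) := by
  refine le_trans (le_of_eq ?_) (lintegral_inv_ball_zero hρ)
  rw [← lintegral_indicator measurableSet_ball, ← lintegral_indicator measurableSet_ball]
  rw [← lintegral_add_left_eq_self _ z]
  congr 1; ext l
  simp only [indicator, mem_ball, dist_self_add_left]
  simp [norm_neg, ← ofReal_norm]

lemma volume_ball_le (x : ℂ) {ρ : ℝ} (hρ : 0 < ρ) :
    volume (ball x ρ) = ENNReal.ofReal (π * ρ ^ 2) := by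
  rw [Complex.volume_ball, ← ENNReal.ofReal_pow hρ.le, mul_comm, ← ENNReal.ofReal_coe_nnreal,
    ← ENNReal.ofReal_mul (by positivity)]
  rfl

/-- The area potential of a disc is at most of the order of its radius. -/
lemma pot_le (z x : ℂ) {ρ : ℝ} (hρ : 0 < ρ) :
    ∫⁻ l in ball x ρ, ‖(z - l)⁻¹‖ₑ ≤ ENNReal.ofReal (3 * π * ρ) := by
  have h1 : ∫⁻ l in ball x ρ, ‖(z - l)⁻¹‖ₑ ≤
      (∫⁻ l in ball z ρ, ‖(z - l)⁻¹‖ₑ) + ∫⁻ l in ball x ρ, ENNReal.ofReal (ρ⁻¹) := by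
    rw [← lintegral_indicator measurableSet_ball, ← lintegral_indicator measurableSet_ball,
      ← lintegral_indicator measurableSet_ball, ← lintegral_add_right]
    · refine lintegral_mono fun l => ?_
      by_cases hx : l ∈ ball x ρ
      · rw [indicator_of_mem hx, indicator_of_mem hx]
        by_cases hz : l ∈ ball z ρ
        · rw [indicator_of_mem hz]; exact le_self_add
        · rw [indicator_of_notMem hz, zero_add, ← ofReal_norm, norm_inv]
          rw [mem_ball, dist_comm, dist_eq_norm, not_lt] at hz
          gcongr
      · rw [indicator_of_notMem hx]; exact zero_le
    · exact measurable_const.indicator measurableSet_ball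
  refine h1.trans ?_
  rw [setLIntegral_const, volume_ball_le x hρ, ← ENNReal.ofReal_mul (by positivity)]
  refine (add_le_add_left (lintegral_inv_ball_center z hρ) _).trans ?_
  rw [← ENNReal.ofReal_add (by positivity) (by positivity)]
  refine ENNReal.ofReal_le_ofReal (le_of_eq ?_)
  field_simp; ring

/-- The area potential of a disc at a distant point. -/
lemma pot_far (z x : ℂ) {ρ : ℝ} (hρ : 0 < ρ) (hz : 2 * ρ ≤ ‖z - x‖) :
    ∫⁻ l in ball x ρ, ‖(z - l)⁻¹‖ₑ ≤ ENNReal.ofReal (2 * π * ρ ^ 2 / ‖z - x‖) := by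
  have hzx : 0 < ‖z - x‖ := by linarith
  calc ∫⁻ l in ball x ρ, ‖(z - l)⁻¹‖ₑ ≤ ∫⁻ l in ball x ρ, ENNReal.ofReal (2 / ‖z - x‖) := by
        refine setLIntegral_mono' measurableSet_ball fun l hl => ?_
        rw [mem_ball, dist_eq_norm] at hl
        rw [← ofReal_norm, norm_inv]
        refine ENNReal.ofReal_le_ofReal ?_
        have h1 : ‖z - x‖ ≤ ‖z - l‖ + ‖l - x‖ := norm_sub_le_norm_sub_add_norm_sub z l x
        rw [inv_eq_one_div, div_le_div_iff₀ (by linarith) hzx]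
        linarith
    _ = _ := by
        rw [setLIntegral_const, volume_ball_le x hρ, ← ENNReal.ofReal_mul (by positivity)]
        congr 1; ring

lemma exists_norm_support {φ : ℂ → ℂ} (hs : HasCompactSupport φ) (z : ℂ) :
    ∃ M : ℝ, 0 < M ∧ ∀ w : ℂ, M ≤ ‖w‖ → z + w ∉ tsupport φ := by
  obtain ⟨M, hM⟩ := hs.isCompact.isBounded.exists_norm_le
  refine ⟨|M| + ‖z‖ + 1, by positivity, fun w hw hmem => ?_⟩
  have h1 := hM _ hmem
  have h2 : ‖w‖ ≤ ‖z + w‖ + ‖z‖ := by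
    have := norm_sub_le (z + w) z
    simpa using this
  have := le_abs_self M
  linarith

lemma polar_integrable {G : ℝ × ℝ → ℂ} (hG : Continuous G) {M : ℝ}
    (hM : ∀ p : ℝ × ℝ, M ≤ p.1 → G p = 0) :
    IntegrableOn G (Ioi 0 ×ˢ Ioo (-π) π) := by
  have h1 : IntegrableOn G (Icc 0 M ×ˢ Icc (-π) π) :=
    hG.continuousOn.integrableOn_compact (isCompact_Icc.prod isCompact_Icc)
  refine h1.of_forall_sdiff_eq_zero ?_ ?_
  · exact measurableSet_Ioi.prod measurableSet_Ioo
  rintro ⟨r, θ⟩ ⟨⟨hr, hθ⟩, hn⟩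
  apply hM
  by_contra hlt
  exact hn ⟨⟨le_of_lt hr, le_of_lt (not_le.1 hlt)⟩, Ioo_subset_Icc_self hθ⟩

/-- The Cauchy–Pompeiu formula for compactly supported functions, computed in polar coordinates. -/
lemma pompeiu {φ : ℂ → ℂ} (hφ : ContDiff ℝ 1 φ) (hs : HasCompactSupport φ) (z : ℂ) :
    ∫ l, dbar φ l * (z - l)⁻¹ = π * φ z := by
  obtain ⟨M, hM0, hM⟩ := exists_norm_support hs z
  have hdc : Continuous (fderiv ℝ φ) := hφ.continuous_fderiv (by norm_num)
  have hz : ∀ w : ℂ, M ≤ ‖w‖ → fderiv ℝ φ (z + w) = 0 := fun w hw =>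
    image_eq_zero_of_notMem_tsupport fun h => hM w hw (tsupport_fderiv_subset ℝ h)
  let e : ℝ → ℂ := fun θ => (Real.cos θ : ℂ) + Real.sin θ * I
  have he : Continuous e := by fun_prop
  let G1 : ℝ × ℝ → ℂ := fun p => fderiv ℝ φ (z + p.1 * e p.2) (e p.2)
  let G2 : ℝ × ℝ → ℂ := fun p => fderiv ℝ φ (z + p.1 * e p.2) (I * e p.2)
  have hG1c : Continuous G1 := by
    refine Continuous.clm_apply (hdc.comp ?_) (by fun_prop)
    fun_prop
  have hG2c : Continuous G2 := by
    refine Continuous.clm_apply (hdc.comp ?_) (by fun_prop)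
    fun_prop
  have hne : ∀ p : ℝ × ℝ, M ≤ p.1 → M ≤ ‖(p.1 : ℂ) * e p.2‖ := fun p hp => by
    rw [norm_mul, polar_pt_norm, mul_one, Complex.norm_real]
    exact hp.trans (le_abs_self _)
  have hG1z : ∀ p : ℝ × ℝ, M ≤ p.1 → G1 p = 0 := fun p hp => by
    simp only [G1]; rw [hz _ (hne p hp)]; rfl
  have hG2z : ∀ p : ℝ × ℝ, M ≤ p.1 → G2 p = 0 := fun p hp => by
    simp only [G2]; rw [hz _ (hne p hp)]; rfl
  have hI1 := polar_integrable hG1c hG1z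
  have hI2 := polar_integrable hG2c hG2z
  have hkey : ∫ l, dbar φ l * (z - l)⁻¹ =
      ∫ p in Ioi (0:ℝ) ×ˢ Ioo (-π) π, (-(1/2 : ℂ)) * (G1 p + I * G2 p) := by
    rw [← integral_add_left_eq_self _ z, ← Complex.integral_comp_polarCoord_symm]
    refine setIntegral_congr_fun (measurableSet_Ioi.prod measurableSet_Ioo) ?_
    rintro ⟨r, θ⟩ ⟨hr, hθ⟩
    simp only [mem_Ioi] at hr
    simp only [Complex.polarCoord_symm_apply, G1, G2]
    change r • (dbar φ (z + r * e θ) * (z - (z + r * e θ))⁻¹) = _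
    set D := fderiv ℝ φ (z + r * e θ) with hD
    have hr' : (r:ℂ) ≠ 0 := by exact_mod_cast hr.ne'
    have he0 : e θ ≠ 0 := by
      intro h; have := polar_pt_norm θ; change ‖e θ‖ = 1 at this; rw [h] at this; simp at this
    have d1 : D (e θ) = Real.cos θ * D 1 + Real.sin θ * D I := by
      have : e θ = Real.cos θ • (1:ℂ) + Real.sin θ • I := by simp [e]
      rw [this, map_add, map_smul, map_smul]; simp
    have d2 : D (I * e θ) = -Real.sin θ * D 1 + Real.cos θ * D I := by
      have : I * e θ = (-Real.sin θ) • (1:ℂ) + Real.cos θ • I := by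
        simp only [e, real_smul]; push_cast; linear_combination Complex.sin θ * I_sq
      rw [this, map_add, map_smul, map_smul]; simp
    have hinv : (e θ)⁻¹ = Real.cos θ - Real.sin θ * I := by
      refine inv_eq_of_mul_eq_one_right ?_
      simp only [e]
      have := Complex.sin_sq_add_cos_sq (θ:ℂ)
      push_cast
      linear_combination this - (Complex.sin θ)^2 * I_sq
    simp only [dbar, ← hD]
    rw [d1, d2, real_smul]
    have : (z - (z + r * e θ))⁻¹ = -((r:ℂ)⁻¹ * (Real.cos θ - Real.sin θ * I)) := by
      rw [← hinv, ← mul_inv, ← inv_neg]; congr 1; ring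
    rw [this]
    field_simp
    push_cast
    linear_combination (Complex.sin θ * D I) * I_sq
  rw [hkey, integral_const_mul, integral_add hI1 (hI2.const_mul I), integral_const_mul]
  have hi2 : ∫ p in Ioi (0:ℝ) ×ˢ Ioo (-π) π, G2 p = 0 := by
    rw [Measure.volume_eq_prod] at hI2 ⊢
    rw [setIntegral_prod _ hI2]
    refine setIntegral_eq_zero_of_forall_eq_zero fun r hr => ?_
    simp only [mem_Ioi] at hr
    rw [← integral_Ioc_eq_integral_Ioo, ← intervalIntegral.integral_of_le (by linarith [Real.pi_pos])]
    have hder : ∀ θ ∈ uIcc (-π) π, HasDerivAt (fun θ : ℝ => (r:ℂ)⁻¹ * φ (z + r * e θ)) (G2 (r, θ)) θ := by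
      intro θ _
      have h1 : HasDerivAt e (I * e θ) θ := by
        have h := ((Real.hasDerivAt_cos θ).ofReal_comp).add
          (((Real.hasDerivAt_sin θ).ofReal_comp).mul_const I)
        refine HasDerivAt.congr_deriv (f := e) h ?_
        simp only [e]; push_cast; linear_combination -(Complex.sin θ) * I_sq
      have h2 := ((hφ.differentiable (by norm_num)) (z + r * e θ)).hasFDerivAt.comp_hasDerivAt θ
        ((h1.const_mul (r:ℂ)).const_add z)
      refine (h2.const_mul (r:ℂ)⁻¹).congr_deriv ?_
      simp only [G2]
      have : (r:ℂ) * (I * e θ) = r • (I * e θ) := by simp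
      rw [this, map_smul, real_smul, ← mul_assoc, inv_mul_cancel₀ (by exact_mod_cast hr.ne'), one_mul]
    rw [intervalIntegral.integral_eq_sub_of_hasDerivAt hder]
    · simp [e]
    · exact (hG2c.comp (by fun_prop)).intervalIntegrable _ _
  have hi1 : ∫ p in Ioi (0:ℝ) ×ˢ Ioo (-π) π, G1 p = -(2 * π) * φ z := by
    rw [Measure.volume_eq_prod] at hI1 ⊢
    rw [IntegrableOn, ← Measure.prod_restrict] at hI1
    rw [← Measure.prod_restrict, integral_prod_symm _ hI1]
    have : ∀ θ : ℝ, ∫ r in Ioi (0:ℝ), G1 (r, θ) = - φ z := by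
      intro θ
      have hder : ∀ r ∈ uIcc 0 M, HasDerivAt (fun r : ℝ => φ (z + r * e θ)) (G1 (r, θ)) r := by
        intro r _
        have h1 : HasDerivAt (fun r : ℝ => z + r * e θ) (e θ) r := by
          have := ((Complex.ofRealCLM.hasDerivAt (x := r)).mul_const (e θ)).const_add z
          simpa using this
        exact ((hφ.differentiable (by norm_num)) (z + r * e θ)).hasFDerivAt.comp_hasDerivAt r h1
      have h0 : ∫ r in Ioi (0:ℝ), G1 (r, θ) = ∫ r in Ioc (0:ℝ) M, G1 (r, θ) := by
        refine (setIntegral_eq_of_subset_of_forall_sdiff_eq_zero measurableSet_Ioi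
          Ioc_subset_Ioi_self ?_)
        rintro r ⟨h1, h2⟩
        apply hG1z
        by_contra hlt
        exact h2 ⟨h1, le_of_lt (not_le.1 hlt)⟩
      rw [h0, ← intervalIntegral.integral_of_le hM0.le,
        intervalIntegral.integral_eq_sub_of_hasDerivAt hder
          ((hG1c.comp (by fun_prop)).intervalIntegrable _ _)]
      have : φ (z + M * e θ) = 0 :=
        image_eq_zero_of_notMem_tsupport (hM _ (hne (M, θ) le_rfl))
      rw [this]; simp
    simp_rw [this]
    rw [setIntegral_const]
    simp [Measure.real, Real.volume_Ioo]
    left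
    rw [ENNReal.toReal_ofReal (by positivity)]
    push_cast; ring
  rw [hi1, hi2]; ring

lemma dbar_continuous {φ : ℂ → ℂ} (hφ : ContDiff ℝ 1 φ) : Continuous (dbar φ) := by
  have hdc : Continuous (fderiv ℝ φ) := hφ.continuous_fderiv (by norm_num)
  unfold dbar
  fun_prop

lemma dbar_eq_zero {φ : ℂ → ℂ} {z : ℂ} (hz : z ∉ tsupport φ) : dbar φ z = 0 := by
  have : fderiv ℝ φ z = 0 :=
    image_eq_zero_of_notMem_tsupport fun h => hz (tsupport_fderiv_subset ℝ h)
  simp [dbar, this]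

lemma dbar_hasCompactSupport {φ : ℂ → ℂ} (hs : HasCompactSupport φ) :
    HasCompactSupport (dbar φ) :=
  HasCompactSupport.intro hs.isCompact fun _ hz => dbar_eq_zero hz

lemma dbar_bound {φ : ℂ → ℂ} (hφ : ContDiff ℝ 1 φ) (hs : HasCompactSupport φ) :
    ∃ B : ℝ, 0 < B ∧ ∀ z, ‖dbar φ z‖ ≤ B := by
  obtain ⟨B, hB⟩ := (dbar_continuous hφ).bounded_above_of_compact_support
    (dbar_hasCompactSupport hs)
  exact ⟨|B| + 1, by positivity, fun z => (hB z).trans (by linarith [le_abs_self B])⟩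

lemma dbar_norm_le (φ : ℂ → ℂ) (z : ℂ) : ‖dbar φ z‖ ≤ ‖fderiv ℝ φ z‖ := by
  unfold dbar
  rw [norm_div]
  have h1 : ‖fderiv ℝ φ z 1‖ ≤ ‖fderiv ℝ φ z‖ := by
    simpa using (fderiv ℝ φ z).le_opNorm 1
  have h2 : ‖I * fderiv ℝ φ z I‖ ≤ ‖fderiv ℝ φ z‖ := by
    rw [norm_mul, norm_I, one_mul]; simpa using (fderiv ℝ φ z).le_opNorm I
  have := norm_add_le (fderiv ℝ φ z 1) (I * fderiv ℝ φ z I)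
  rw [Complex.norm_ofNat]; linarith

lemma dbar_mul {f g : ℂ → ℂ} {z : ℂ} (hf : DifferentiableAt ℝ f z) (hg : DifferentiableAt ℝ g z) :
    dbar (fun z => f z * g z) z = f z * dbar g z + dbar f z * g z := by
  unfold dbar
  rw [fderiv_fun_mul hf hg]
  simp only [_root_.add_apply, _root_.smul_apply, smul_eq_mul]
  ring

lemma dbar_holo {f : ℂ → ℂ} {z : ℂ} (hf : DifferentiableAt ℂ f z) : dbar f z = 0 := by
  unfold dbar
  have h := hf.fderiv_restrictScalars ℝ
  rw [h]
  simp only [ContinuousLinearMap.coe_restrictScalars']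
  have : fderiv ℂ f z I = I * fderiv ℂ f z 1 := by
    simp
  rw [this]
  linear_combination (fderiv ℂ f z 1 / 2) * I_sq

lemma kernel_measurable : Measurable fun p : ℂ × ℂ => (p.1 - p.2)⁻¹ := by fun_prop

lemma integral_dbar_eq_zero {φ : ℂ → ℂ} (hφ : ContDiff ℝ 1 φ) (hs : HasCompactSupport φ) :
    ∫ l, dbar φ l = 0 := by
  have hid : ∀ l : ℂ, dbar (fun w => φ w * ((0:ℂ) - w)) l * (0 - l)⁻¹ = dbar φ l ∨ l = 0 := by
    intro l
    by_cases hl : l = 0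
    · exact Or.inr hl
    left
    have h1 : dbar (fun w : ℂ => (0:ℂ) - w) l = 0 := dbar_holo (by fun_prop)
    rw [dbar_mul (hφ.differentiable (by norm_num) l) (by fun_prop), h1, mul_zero, zero_add,
      mul_assoc, mul_inv_cancel₀ (by simpa using hl), mul_one]
  have h := pompeiu (φ := fun w => φ w * ((0:ℂ) - w)) (by fun_prop) hs.mul_right 0
  have h2 : ∫ l, dbar φ l = ∫ l, dbar (fun w => φ w * ((0:ℂ) - w)) l * (0 - l)⁻¹ := by
    refine integral_congr_ae ?_
    have : ∀ᵐ l : ℂ, l ≠ 0 := Measure.ae_ne volume 0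
    filter_upwards [this] with l hl
    exact ((hid l).resolve_right hl).symm
  rw [h2, h]; simp

/-- The Cauchy transform of a finite measure is locally integrable, in quantitative form. -/
lemma lintegral_pot_le {ν : Measure ℂ} [SFinite ν] {x : ℂ} {ρ : ℝ} (hρ : 0 < ρ) :
    ∫⁻ l in ball x ρ, ∫⁻ z, ‖(z - l)⁻¹‖ₑ ∂ν ≤ ENNReal.ofReal (3 * π * ρ) * ν univ := by
  rw [lintegral_lintegral_swap (by
    exact (kernel_measurable.comp measurable_swap).enorm.aemeasurable)]
  calc ∫⁻ z, (∫⁻ l in ball x ρ, ‖(z - l)⁻¹‖ₑ) ∂ν ≤ ∫⁻ _, ENNReal.ofReal (3 * π * ρ) ∂ν :=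
        lintegral_mono fun z => pot_le z x hρ
    _ = _ := by rw [lintegral_const]

/-- Testing a Cauchy transform against `∂φ/∂z̄` recovers the integral of `φ`. -/
lemma dbar_cauchy {ν : Measure ℂ} [SFinite ν] {g : ℂ → ℂ} (hg : Integrable g ν)
    {φ : ℂ → ℂ} (hφ : ContDiff ℝ 1 φ) (hs : HasCompactSupport φ) :
    ∫ l, dbar φ l * ∫ z, (z - l)⁻¹ * g z ∂ν = π * ∫ z, φ z * g z ∂ν := by
  obtain ⟨B, hB0, hB⟩ := dbar_bound hφ hs
  obtain ⟨M, hM0, hM⟩ := exists_norm_support hs 0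
  have hsupp : ∀ l, l ∉ ball (0:ℂ) M → dbar φ l = 0 := fun l hl => dbar_eq_zero (by
    have := hM l (by simpa using hl)
    simpa using this)
  have hm : AEStronglyMeasurable
      (fun p : ℂ × ℂ => dbar φ p.2 * ((p.1 - p.2)⁻¹ * g p.1)) (ν.prod volume) := by
    refine AEStronglyMeasurable.mul ?_ (AEStronglyMeasurable.mul ?_ ?_)
    · exact ((dbar_continuous hφ).comp continuous_snd).aestronglyMeasurable
    · exact kernel_measurable.aestronglyMeasurable
    · exact hg.1.comp_fst
  have hintg : Integrable (fun p : ℂ × ℂ => dbar φ p.2 * ((p.1 - p.2)⁻¹ * g p.1))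
      (ν.prod volume) := by
    refine ⟨hm, ?_⟩
    rw [hasFiniteIntegral_iff_enorm, lintegral_prod _ hm.enorm]
    have hle : ∀ z, ∫⁻ l, ‖dbar φ l * ((z - l)⁻¹ * g z)‖ₑ ≤
        ENNReal.ofReal B * ENNReal.ofReal (3 * π * M) * ‖g z‖ₑ := by
      intro z
      calc ∫⁻ l, ‖dbar φ l * ((z - l)⁻¹ * g z)‖ₑ
          ≤ ∫⁻ l, (ball (0:ℂ) M).indicator (fun l => ENNReal.ofReal B * ‖(z - l)⁻¹‖ₑ * ‖g z‖ₑ) l := by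
            refine lintegral_mono fun l => ?_
            by_cases hl : l ∈ ball (0:ℂ) M
            · rw [indicator_of_mem hl, enorm_mul, enorm_mul, ← mul_assoc]
              gcongr
              rw [← ofReal_norm]; exact ENNReal.ofReal_le_ofReal (hB l)
            · rw [indicator_of_notMem hl, hsupp l hl]; simp
        _ = ENNReal.ofReal B * (∫⁻ l in ball (0:ℂ) M, ‖(z - l)⁻¹‖ₑ) * ‖g z‖ₑ := by
            rw [lintegral_indicator measurableSet_ball, lintegral_mul_const _ (by fun_prop),
              lintegral_const_mul _ (by fun_prop)]
        _ ≤ _ := by gcongr; exact pot_le z 0 hM0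
    refine (lintegral_mono hle).trans_lt ?_
    rw [lintegral_const_mul'' _ hg.1.enorm]
    exact ENNReal.mul_lt_top (by simp [ENNReal.mul_lt_top]) hg.2
  calc ∫ l, dbar φ l * ∫ z, (z - l)⁻¹ * g z ∂ν
      = ∫ l, ∫ z, dbar φ l * ((z - l)⁻¹ * g z) ∂ν := by simp_rw [integral_const_mul]
    _ = ∫ z, (∫ l, dbar φ l * ((z - l)⁻¹ * g z)) ∂ν := (integral_integral_swap hintg).symm
    _ = ∫ z, π * (φ z * g z) ∂ν := by
        refine integral_congr_ae (Eventually.of_forall fun z => ?_)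
        have := pompeiu hφ hs z
        simp_rw [← mul_assoc]
        rw [integral_mul_const, this]
    _ = _ := by rw [integral_const_mul]

/-! ### Branches of square roots off connected sets -/

lemma div_mem_slitPlane_of_notMem_segment {x y z : ℂ} (hz : z ∉ segment ℝ x y) :
    (z - y) / (z - x) ∈ slitPlane := by
  have hzx : z - x ≠ 0 := fun h => hz (by rw [sub_eq_zero.1 h]; exact left_mem_segment ℝ x y)
  rw [mem_slitPlane_iff_not_le_zero]
  intro hle
  apply hz
  obtain ⟨h1, h2⟩ := Complex.le_def.1 hle
  simp only [Complex.zero_re, Complex.zero_im] at h1 h2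
  set q := (z - y) / (z - x) with hq
  set s : ℝ := -q.re with hs
  have hqs : q = -(s:ℂ) := by apply Complex.ext <;> simp [hs, h2]
  have hs0 : 0 ≤ s := by rw [hs]; linarith
  have h3 : z - y = -(s:ℂ) * (z - x) := by rw [← hqs, hq]; field_simp
  refine ⟨s / (1 + s), 1 / (1 + s), by positivity, by positivity, by field_simp; ring, ?_⟩
  have h1s : (1 + s : ℂ) ≠ 0 := by
    have : (0:ℝ) < 1 + s := by linarith
    exact_mod_cast this.ne'
  simp only [real_smul]; push_cast
  field_simp
  linear_combination -h3

/-- A square root of the Möbius map `(z - b) / (z - a)` exists off a compact subset of any open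
set in which `a` and `b` lie in a common preconnected set. -/
lemma exists_sqrt_branch {V S : Set ℂ} (hV : IsOpen V) (hSV : S ⊆ V) (hS : IsPreconnected S)
    {a b : ℂ} (ha : a ∈ S) (hb : b ∈ S) :
    ∃ X : Set ℂ, IsCompact X ∧ X ⊆ V ∧ ∃ h : ℂ → ℂ, DifferentiableOn ℂ h Xᶜ ∧
      ∀ z ∉ X, h z ^ 2 * (z - a) = z - b := by
  refine hS.induction₂' (fun a b => ∃ X : Set ℂ, IsCompact X ∧ X ⊆ V ∧ ∃ h : ℂ → ℂ,
    DifferentiableOn ℂ h Xᶜ ∧ ∀ z ∉ X, h z ^ 2 * (z - a) = z - b) ?_ ?_ ha hb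
  · intro x hx
    obtain ⟨δ, hδ, hball⟩ := Metric.isOpen_iff.1 hV x (hSV hx)
    have key : ∀ x' ∈ ball x δ, ∀ y' ∈ ball x δ, ∃ X : Set ℂ, IsCompact X ∧ X ⊆ V ∧
        ∃ h : ℂ → ℂ, DifferentiableOn ℂ h Xᶜ ∧ ∀ z ∉ X, h z ^ 2 * (z - x') = z - y' := by
      intro x' hx' y' hy'
      refine ⟨segment ℝ x' y', ?_, ?_, fun z => Complex.exp (Complex.log ((z - y') / (z - x')) / 2),
        ?_, ?_⟩
      · rw [segment_eq_image]
        exact isCompact_Icc.image (by fun_prop)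
      · exact ((convex_ball x δ).segment_subset hx' hy').trans hball
      · intro z hz
        have hzx : z - x' ≠ 0 := fun h =>
          hz (by rw [sub_eq_zero.1 h]; exact left_mem_segment ℝ x' y')
        have hsl := div_mem_slitPlane_of_notMem_segment hz
        have : DifferentiableAt ℂ (fun z => (z - y') / (z - x')) z :=
          DifferentiableAt.div (by fun_prop) (by fun_prop) hzx
        exact (((this.clog hsl).div_const 2).cexp).differentiableWithinAt
      · intro z hz
        have hzx : z - x' ≠ 0 := fun h =>
          hz (by rw [sub_eq_zero.1 h]; exact left_mem_segment ℝ x' y')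
        have hsl := div_mem_slitPlane_of_notMem_segment hz
        rw [← Complex.exp_nat_mul]
        rw [show ((2:ℕ):ℂ) * (Complex.log ((z - y') / (z - x')) / 2) =
          Complex.log ((z - y') / (z - x')) by push_cast; ring,
          Complex.exp_log (slitPlane_ne_zero hsl)]
        field_simp
    have hev : ∀ᶠ y in 𝓝[S] x, y ∈ ball x δ :=
      mem_nhdsWithin_of_mem_nhds (ball_mem_nhds x hδ)
    filter_upwards [hev] with y hy
    exact ⟨key x (mem_ball_self hδ) y hy, key y hy x (mem_ball_self hδ)⟩
  · rintro x y z - - - ⟨X, hX, hXV, h, hh, he⟩ ⟨X', hX', hXV', h', hh', he'⟩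
    refine ⟨X ∪ X', hX.union hX', union_subset hXV hXV', fun w => h w * h' w, ?_, ?_⟩
    · refine (hh.mono ?_).mul (hh'.mono ?_)
      · exact compl_subset_compl.2 subset_union_left
      · exact compl_subset_compl.2 subset_union_right
    · intro w hw
      rw [mem_union, not_or] at hw
      have h1 := he w hw.1
      have h2 := he' w hw.2
      linear_combination (h' w) ^ 2 * h1 + h2

/-! ### Cutoffs and normalised Cauchy transforms with small data -/

/-- A fixed smooth bump on `ℂ`, equal to `1` on the unit disc. -/
def stdBump : ContDiffBump (0 : ℂ) := ⟨1, 3 / 2, by norm_num, by norm_num⟩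

/-- The bump `stdBump` transplanted to the disc of centre `x` and radius `ρ`. -/
def cutoff (x : ℂ) (ρ : ℝ) (z : ℂ) : ℂ := (stdBump ((ρ : ℝ)⁻¹ • (z - x)) : ℝ)

lemma cutoff_contDiff (x : ℂ) (ρ : ℝ) : ContDiff ℝ 1 (cutoff x ρ) := by
  unfold cutoff
  refine Complex.ofRealCLM.contDiff.comp ?_
  exact (stdBump.contDiff (n := 1)).comp (by fun_prop)

lemma cutoff_norm_le (x : ℂ) (ρ : ℝ) (z : ℂ) : ‖cutoff x ρ z‖ ≤ 1 := by
  unfold cutoff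
  rw [Complex.norm_real, Real.norm_of_nonneg stdBump.nonneg]
  exact stdBump.le_one

lemma one_sub_cutoff_norm_le (x : ℂ) (ρ : ℝ) (z : ℂ) : ‖1 - cutoff x ρ z‖ ≤ 1 := by
  unfold cutoff
  rw [← Complex.ofReal_one, ← Complex.ofReal_sub, Complex.norm_real,
    Real.norm_of_nonneg (by linarith [stdBump.le_one (x := (ρ : ℝ)⁻¹ • (z - x))])]
  linarith [stdBump.nonneg (x := (ρ : ℝ)⁻¹ • (z - x))]

lemma cutoff_eq_one {x : ℂ} {ρ : ℝ} (hρ : 0 < ρ) {z : ℂ} (hz : ‖z - x‖ ≤ ρ) :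
    cutoff x ρ z = 1 := by
  unfold cutoff
  rw [stdBump.one_of_mem_closedBall]
  · simp
  · rw [mem_closedBall_zero_iff, norm_smul, norm_inv, Real.norm_of_nonneg hρ.le]
    change ρ⁻¹ * _ ≤ 1
    rw [inv_mul_le_iff₀ hρ]; linarith

lemma cutoff_eq_zero {x : ℂ} {ρ : ℝ} (hρ : 0 < ρ) {z : ℂ} (hz : 3 / 2 * ρ ≤ ‖z - x‖) :
    cutoff x ρ z = 0 := by
  unfold cutoff
  rw [stdBump.zero_of_le_dist]
  · simp
  · rw [dist_zero_right, norm_smul, norm_inv, Real.norm_of_nonneg hρ.le]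
    change 3 / 2 ≤ ρ⁻¹ * _
    rw [le_inv_mul_iff₀ hρ]; linarith

lemma cutoff_tsupport {x : ℂ} {ρ : ℝ} (hρ : 0 < ρ) :
    tsupport (cutoff x ρ) ⊆ closedBall x (3 / 2 * ρ) := by
  refine closure_minimal (fun z hz => ?_) isClosed_closedBall
  rw [mem_closedBall, dist_eq_norm]
  by_contra h
  exact hz (cutoff_eq_zero hρ (not_le.1 h).le)

lemma cutoff_hasCompactSupport {x : ℂ} {ρ : ℝ} (hρ : 0 < ρ) : HasCompactSupport (cutoff x ρ) :=
  (isCompact_closedBall x _).of_isClosed_subset (isClosed_tsupport _) (cutoff_tsupport hρ)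

lemma cutoff_dbar_eq_zero {x : ℂ} {ρ : ℝ} (hρ : 0 < ρ) {z : ℂ} (hz : 2 * ρ ≤ ‖z - x‖) :
    dbar (cutoff x ρ) z = 0 := by
  refine dbar_eq_zero fun h => ?_
  have := cutoff_tsupport hρ h
  rw [mem_closedBall, dist_eq_norm] at this
  linarith

lemma dbar_congr {f g : ℂ → ℂ} {z : ℂ} (h : f =ᶠ[𝓝 z] g) : dbar f z = dbar g z := by
  unfold dbar; rw [h.fderiv_eq]

lemma dbar_const (k : ℂ) (z : ℂ) : dbar (fun _ => k) z = 0 := by simp [dbar]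

lemma cutoff_dbar_eq_zero' {x : ℂ} {ρ : ℝ} (hρ : 0 < ρ) {z : ℂ} (hz : ‖z - x‖ < ρ) :
    dbar (cutoff x ρ) z = 0 := by
  rw [← dbar_const 1 z]
  apply dbar_congr
  have : ball x ρ ∈ 𝓝 z := isOpen_ball.mem_nhds (by rwa [mem_ball, dist_eq_norm])
  filter_upwards [this] with w hw
  rw [mem_ball, dist_eq_norm] at hw
  exact cutoff_eq_one hρ hw.le

lemma exists_cutoff_bound : ∃ C : ℝ, 1 ≤ C ∧ ∀ (x : ℂ) (ρ : ℝ), 0 < ρ → ∀ z,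
    ‖dbar (cutoff x ρ) z‖ ≤ C / ρ := by
  have h1 : Continuous (fderiv ℝ (stdBump : ℂ → ℝ)) :=
    (stdBump.contDiff (n := 1)).continuous_fderiv (by norm_num)
  obtain ⟨C, hC⟩ := h1.bounded_above_of_compact_support (stdBump.hasCompactSupport.fderiv ℝ)
  refine ⟨|C| + 1, by linarith [abs_nonneg C], fun x ρ hρ z => ?_⟩
  refine (dbar_norm_le _ _).trans ?_
  have h2 : HasFDerivAt (fun z : ℂ => (ρ : ℝ)⁻¹ • (z - x))
      ((ρ : ℝ)⁻¹ • ContinuousLinearMap.id ℝ ℂ) z := ((hasFDerivAt_id z).sub_const x).fun_const_smul _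
  have h3 : DifferentiableAt ℝ stdBump ((ρ : ℝ)⁻¹ • (z - x)) :=
    (stdBump.contDiff (n := 1)).differentiable (by norm_num) _
  have h3' : HasFDerivAt (fun z : ℂ => stdBump ((ρ : ℝ)⁻¹ • (z - x)))
      ((fderiv ℝ stdBump ((ρ : ℝ)⁻¹ • (z - x))).comp ((ρ : ℝ)⁻¹ • ContinuousLinearMap.id ℝ ℂ)) z :=
    HasFDerivAt.comp (g := stdBump) z h3.hasFDerivAt h2
  have h4 : HasFDerivAt (cutoff x ρ) (Complex.ofRealCLM.comp _) z :=
    (Complex.ofRealCLM.hasFDerivAt).comp z h3'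
  rw [h4.fderiv]
  refine (ContinuousLinearMap.opNorm_comp_le _ _).trans ?_
  rw [Complex.ofRealCLM_norm, one_mul]
  refine (ContinuousLinearMap.opNorm_comp_le _ _).trans ?_
  rw [norm_smul, norm_inv, Real.norm_of_nonneg hρ.le]
  have h5 := hC ((ρ : ℝ)⁻¹ • (z - x))
  have h6 : ‖ContinuousLinearMap.id ℝ ℂ‖ ≤ 1 := ContinuousLinearMap.norm_id_le
  have h7 := le_abs_self C
  calc _ ≤ (|C| + 1) * (ρ⁻¹ * 1) := by gcongr; linarith
    _ = _ := by rw [mul_one, div_eq_mul_inv]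

/-- `F` is, on the disc `B(c,R)`, a normalised Cauchy transform with small data: its distributional
`∂̄`-derivative has mass at most `ε R`, and `F - 1` is bounded by `ε` plus the potential of a measure
`σ` of mass at most `ε R`. -/
structure Good (c : ℂ) (R ε : ℝ) (F : ℂ → ℂ) (σ : Measure ℂ) : Prop where
  pos : 0 < R
  eps : 0 ≤ ε
  mass : σ univ ≤ ENNReal.ofReal (ε * R)
  int : IntegrableOn F (ball c R)
  test : ∀ φ : ℂ → ℂ, ContDiff ℝ 1 φ → HasCompactSupport φ → tsupport φ ⊆ ball c R →
    ∀ M : ℝ, (∀ z, ‖φ z‖ ≤ M) → ‖∫ l, dbar φ l * F l‖ ≤ M * (ε * R)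
  near : ∀ᵐ l, l ∈ ball c R → ‖F l - 1‖ₑ ≤ ENNReal.ofReal ε + ∫⁻ z, ‖(z - l)⁻¹‖ₑ ∂σ

lemma Good.finite {c : ℂ} {R ε : ℝ} {F : ℂ → ℂ} {σ : Measure ℂ} (h : Good c R ε F σ) :
    IsFiniteMeasure σ := ⟨h.mass.trans_lt ENNReal.ofReal_lt_top⟩

/-- A normalised Cauchy transform with small data is close to `1` in area mean. -/
lemma Good.l1 {c : ℂ} {R ε : ℝ} {F : ℂ → ℂ} {σ : Measure ℂ} (h : Good c R ε F σ) :
    ∫⁻ l in ball c R, ‖F l - 1‖ₑ ≤ ENNReal.ofReal (4 * π * ε * R ^ 2) := by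
  have := h.finite
  have hR := h.pos
  have he := h.eps
  calc ∫⁻ l in ball c R, ‖F l - 1‖ₑ
      ≤ ∫⁻ l in ball c R, (ENNReal.ofReal ε + ∫⁻ z, ‖(z - l)⁻¹‖ₑ ∂σ) :=
        lintegral_mono_ae ((ae_restrict_iff' measurableSet_ball).2 h.near)
    _ = ENNReal.ofReal ε * volume (ball c R) + ∫⁻ l in ball c R, ∫⁻ z, ‖(z - l)⁻¹‖ₑ ∂σ := by
        rw [lintegral_add_left measurable_const, setLIntegral_const]
    _ ≤ ENNReal.ofReal ε * ENNReal.ofReal (π * R ^ 2) +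
        ENNReal.ofReal (3 * π * R) * ENNReal.ofReal (ε * R) := by
        gcongr
        · exact (volume_ball_le c hR).le
        · exact (lintegral_pot_le hR).trans (by gcongr; exact h.mass)
    _ = _ := by
        rw [← ENNReal.ofReal_mul he, ← ENNReal.ofReal_mul (by positivity),
          ← ENNReal.ofReal_add (by positivity) (by positivity)]
        congr 1; ring

lemma Good.l1' {c : ℂ} {R ε : ℝ} {F : ℂ → ℂ} {σ : Measure ℂ} (h : Good c R ε F σ) :
    ∫ l in ball c R, ‖F l - 1‖ ≤ 4 * π * ε * R ^ 2 := by
  have hintg : IntegrableOn (fun l => F l - 1) (ball c R) :=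
    h.int.sub (integrableOn_const (by finiteness))
  rw [integral_norm_eq_lintegral_enorm hintg.1]
  refine ENNReal.toReal_le_of_le_ofReal ?_ h.l1
  have := h.eps
  positivity

/-- The second order Taylor expansion of the principal branch of `√(1 - w)` at `0`. -/
lemma sqrt_approx {w : ℂ} (hw : ‖w‖ ≤ 1 / 4) :
    ‖Complex.exp (Complex.log (1 - w) / 2) - (1 - w / 2 - w ^ 2 / 8)‖ ≤ ‖w‖ ^ 3 := by
  set S := Complex.exp (Complex.log (1 - w) / 2) with hS
  set P := 1 - w / 2 - w ^ 2 / 8 with hP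
  have h1w : 1 - w ≠ 0 := by
    intro h
    have : w = 1 := by linear_combination -h
    rw [this] at hw; norm_num at hw
  have hS2 : S ^ 2 = 1 - w := by
    rw [hS, ← Complex.exp_nat_mul, show ((2:ℕ):ℂ) * (Complex.log (1 - w) / 2) = Complex.log (1 - w) by
      push_cast; ring, Complex.exp_log h1w]
  have hSre : 0 ≤ S.re := by
    rw [hS, Complex.exp_re]
    refine mul_nonneg (Real.exp_pos _).le (Real.cos_nonneg_of_neg_pi_div_two_le_of_le ?_ ?_)
    · have : (Complex.log (1 - w) / 2).im = (1 - w).arg / 2 := by simp [Complex.log_im]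
      rw [this]; linarith [Complex.neg_pi_lt_arg (1 - w)]
    · have : (Complex.log (1 - w) / 2).im = (1 - w).arg / 2 := by simp [Complex.log_im]
      rw [this]; linarith [Complex.arg_le_pi (1 - w)]
  have hPre : 3 / 4 ≤ P.re := by
    have h1 : P.re = 1 - (w / 2).re - (w ^ 2 / 8).re := by simp [hP]
    have h2 : (w / 2).re ≤ 1 / 8 := (Complex.re_le_norm _).trans (by
      rw [norm_div, Complex.norm_ofNat]; linarith)
    have h3 : (w ^ 2 / 8).re ≤ 1 / 128 := (Complex.re_le_norm _).trans (by
      rw [norm_div, Complex.norm_ofNat, norm_pow]; nlinarith [norm_nonneg w])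
    linarith
  have hsum : 3 / 4 ≤ ‖S + P‖ := by
    refine le_trans ?_ (Complex.re_le_norm _)
    rw [Complex.add_re]; linarith
  have hprod : (S - P) * (S + P) = -(w ^ 3 * (1 / 8 + w / 64)) := by
    have : (S - P) * (S + P) = S ^ 2 - P ^ 2 := by ring
    rw [this, hS2, hP]; ring
  have hn : ‖S - P‖ * ‖S + P‖ ≤ ‖w‖ ^ 3 * (3 / 4) := by
    rw [← norm_mul, hprod, norm_neg, norm_mul, norm_pow]
    gcongr
    refine (norm_add_le _ _).trans ?_
    rw [norm_div, norm_div, Complex.norm_ofNat, norm_one, Complex.norm_ofNat]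
    linarith
  nlinarith [norm_nonneg (S - P)]

lemma isPreconnected_exterior (a : ℂ) {r : ℝ} (hr : 0 < r) :
    IsPreconnected {z : ℂ | r ≤ ‖z - a‖} := by
  have h1 : IsPreconnected {u : ℂ | Real.log r ≤ u.re} :=
    (convex_halfSpace_re_ge _).isPreconnected
  have h2 : (fun u => a + Complex.exp u) '' {u : ℂ | Real.log r ≤ u.re} =
      {z : ℂ | r ≤ ‖z - a‖} := by
    ext z
    constructor
    · rintro ⟨u, hu, rfl⟩
      simp only [mem_ofPred_eq] at hu ⊢
      rw [add_sub_cancel_left, Complex.norm_exp]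
      rwa [Real.log_le_iff_le_exp hr] at hu
    · intro hz
      simp only [mem_ofPred_eq] at hz
      have hne : z - a ≠ 0 := by
        intro h; rw [h, norm_zero] at hz; linarith
      refine ⟨Complex.log (z - a), ?_, ?_⟩
      · simp only [mem_ofPred_eq, Complex.log_re]
        exact Real.log_le_log hr hz
      · simp only [Complex.exp_log hne]; ring
  rw [← h2]
  exact h1.image _ (by fun_prop)

/-! ### The cut estimate -/

/-- The moment of the model square root `(l - a) √(1 - (b - a)/(l - a))` against `∂̄` of a cutoff. -/
lemma model_integral (a d : ℂ) {r : ℝ} (hr : 0 < r) :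
    Integrable (fun l => dbar (cutoff a r) l * ((l - a) - d / 2 - d ^ 2 / 8 * (l - a)⁻¹)) ∧
    ∫ l, dbar (cutoff a r) l * ((l - a) - d / 2 - d ^ 2 / 8 * (l - a)⁻¹) = π * d ^ 2 / 8 := by
  have hθ := cutoff_contDiff a r
  have hθs := cutoff_hasCompactSupport (x := a) hr
  have hdc := dbar_continuous hθ
  have hds := dbar_hasCompactSupport hθs
  have i1 : Integrable (fun l => dbar (cutoff a r) l * (l - a)) :=
    (hdc.mul (by fun_prop)).integrable_of_hasCompactSupport hds.mul_right
  have i2 : Integrable (fun l => dbar (cutoff a r) l) := hdc.integrable_of_hasCompactSupport hds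
  have c3 : Continuous (fun l => dbar (cutoff a r) l * (l - a)⁻¹) := by
    rw [continuous_iff_continuousAt]
    intro l
    by_cases hl : l = a
    · have : (fun l => dbar (cutoff a r) l * (l - a)⁻¹) =ᶠ[𝓝 l] fun _ => 0 := by
        filter_upwards [isOpen_ball.mem_nhds (mem_ball_self hr : a ∈ ball a r) |> (hl ▸ ·)] with w hw
        rw [mem_ball, dist_eq_norm] at hw
        rw [cutoff_dbar_eq_zero' hr (by simpa [hl] using hw), zero_mul]
      exact continuousAt_const.congr this.symm
    · exact hdc.continuousAt.mul ((by fun_prop : ContinuousAt (fun l => l - a) l).inv₀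
        (sub_ne_zero.2 hl))
  have i3 : Integrable (fun l => dbar (cutoff a r) l * (l - a)⁻¹) :=
    c3.integrable_of_hasCompactSupport hds.mul_right
  have e1 : ∫ l, dbar (cutoff a r) l * (l - a) = 0 := by
    rw [← integral_dbar_eq_zero (φ := fun l => cutoff a r l * (l - a)) (by fun_prop) hθs.mul_right]
    congr 1; ext l
    rw [dbar_mul (hθ.differentiable (by norm_num) l) (by fun_prop),
      dbar_holo (f := fun l => l - a) (by fun_prop)]
    ring
  have e2 := integral_dbar_eq_zero hθ hθs
  have e3 : ∫ l, dbar (cutoff a r) l * (l - a)⁻¹ = -π := by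
    have := pompeiu hθ hθs a
    rw [cutoff_eq_one hr (by simpa using hr.le), mul_one] at this
    rw [← this, ← integral_neg]
    congr 1; ext l
    rw [← neg_sub l a, inv_neg]; ring
  have hrw : (fun l => dbar (cutoff a r) l * ((l - a) - d / 2 - d ^ 2 / 8 * (l - a)⁻¹)) =
      fun l => (dbar (cutoff a r) l * (l - a) - d / 2 * dbar (cutoff a r) l) -
        d ^ 2 / 8 * (dbar (cutoff a r) l * (l - a)⁻¹) := by
    ext l; ring
  rw [hrw]
  have i12 : Integrable (fun l => dbar (cutoff a r) l * (l - a) - d / 2 * dbar (cutoff a r) l) :=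
    i1.sub (i2.const_mul (d / 2))
  refine ⟨i12.sub (i3.const_mul _), ?_⟩
  rw [integral_sub i12 (i3.const_mul _), integral_sub i1 (i2.const_mul _), integral_const_mul,
    integral_const_mul, e1, e2, e3]
  ring

/-- A branch of `√((z-a)(z-b))` off a compact set inside `B(a,r)` is `±` its expansion at infinity. -/
lemma branch_expansion {a b : ℂ} {r : ℝ} (hr : 0 < r) (hab : ‖b - a‖ ≤ r / 4) {h : ℂ → ℂ}
    (hc : ContinuousOn h {z : ℂ | r ≤ ‖z - a‖})
    (hh : ∀ z, r ≤ ‖z - a‖ → h z ^ 2 * (z - a) = z - b) :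
    ∃ s : ℂ, ‖s‖ = 1 ∧ ∀ z, r ≤ ‖z - a‖ →
      ‖(z - a) * h z - s * ((z - a) - (b - a) / 2 - (b - a) ^ 2 / 8 * (z - a)⁻¹)‖ ≤
        ‖b - a‖ ^ 3 / r ^ 2 := by
  set A := {z : ℂ | r ≤ ‖z - a‖} with hA
  have hne : ∀ z ∈ A, z - a ≠ 0 := by
    intro z hz h0
    rw [hA, mem_ofPred_eq, h0, norm_zero] at hz; linarith
  let w : ℂ → ℂ := fun z => (b - a) / (z - a)
  have hw : ∀ z ∈ A, ‖w z‖ ≤ 1 / 4 := by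
    intro z hz
    simp only [w, norm_div]
    rw [hA, mem_ofPred_eq] at hz
    rw [div_le_iff₀ (by linarith)]; linarith
  let S : ℂ → ℂ := fun z => Complex.exp (Complex.log (1 - w z) / 2)
  have hsl : ∀ z ∈ A, 1 - w z ∈ slitPlane := by
    intro z hz
    refine Or.inl ?_
    have := (Complex.re_le_norm (w z)).trans (hw z hz)
    simp only [Complex.sub_re, Complex.one_re]; linarith
  have hSc : ContinuousOn S A := by
    intro z hz
    have h1 : ContinuousAt (fun z => (b - a) / (z - a)) z :=
      continuousAt_const.div (by fun_prop) (hne z hz)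
    have h2 : ContinuousAt (fun z => 1 - w z) z := continuousAt_const.sub h1
    exact ((h2.clog (hsl z hz)).div_const 2).cexp.continuousWithinAt
  have hS2 : ∀ z ∈ A, S z ^ 2 = 1 - w z := by
    intro z hz
    simp only [S]
    rw [← Complex.exp_nat_mul, show ((2:ℕ):ℂ) * (Complex.log (1 - w z) / 2) =
      Complex.log (1 - w z) by push_cast; ring, Complex.exp_log (slitPlane_ne_zero (hsl z hz))]
  have hh2 : ∀ z ∈ A, h z ^ 2 = 1 - w z := by
    intro z hz
    have h1 := hh z hz
    have := hne z hz
    simp only [w]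
    field_simp
    linear_combination h1
  have hsq : EqOn (h ^ 2) (S ^ 2) A := fun z hz => by
    simp only [Pi.pow_apply]; rw [hS2 z hz, hh2 z hz]
  have hS0 : ∀ {z}, z ∈ A → S z ≠ 0 := fun _ => Complex.exp_ne_zero _
  have hcase := (isPreconnected_exterior a hr).eq_or_eq_neg_of_sq_eq hc hSc hsq hS0
  obtain ⟨s, hs1, hs⟩ : ∃ s : ℂ, ‖s‖ = 1 ∧ ∀ z ∈ A, h z = s * S z := by
    rcases hcase with h1 | h1
    · exact ⟨1, by simp, fun z hz => by rw [h1 hz, one_mul]⟩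
    · exact ⟨-1, by simp, fun z hz => by rw [h1 hz]; simp⟩
  refine ⟨s, hs1, fun z hz => ?_⟩
  have hza := hne z hz
  have heq : (z - a) * h z - s * ((z - a) - (b - a) / 2 - (b - a) ^ 2 / 8 * (z - a)⁻¹) =
      s * ((z - a) * (S z - (1 - w z / 2 - w z ^ 2 / 8))) := by
    rw [hs z hz]
    simp only [w]
    field_simp
  rw [heq, norm_mul, hs1, one_mul, norm_mul]
  have h1 := sqrt_approx (hw z hz)
  have hz' : r ≤ ‖z - a‖ := hz
  have hpos : 0 < ‖z - a‖ := by linarith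
  calc ‖z - a‖ * ‖S z - (1 - w z / 2 - w z ^ 2 / 8)‖ ≤ ‖z - a‖ * ‖w z‖ ^ 3 := by gcongr
    _ = ‖b - a‖ ^ 3 / ‖z - a‖ ^ 2 := by simp only [w, norm_div]; field_simp
    _ ≤ _ := by gcongr

lemma dbar_prod_le {ι : Type} (s : Finset ι) (x : ι → ℂ) (ρ : ι → ℝ) (z : ℂ) :
    ‖dbar (fun z => ∏ i ∈ s, (1 - cutoff (x i) (ρ i) z)) z‖ ≤
      ∑ i ∈ s, ‖dbar (cutoff (x i) (ρ i)) z‖ := by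
  classical
  induction s using Finset.induction_on with
  | empty => simp [dbar_const]
  | insert i s hi ih =>
    have hd : ∀ i, DifferentiableAt ℝ (cutoff (x i) (ρ i)) z := fun i =>
      (cutoff_contDiff _ _).differentiable (by norm_num) z
    simp_rw [Finset.prod_insert hi]
    rw [Finset.sum_insert hi, dbar_mul (f := fun z => 1 - cutoff (x i) (ρ i) z)
      (g := fun z => ∏ i ∈ s, (1 - cutoff (x i) (ρ i) z)) ((differentiableAt_const _).fun_sub (hd i))
      ((contDiff_prod fun i _ => contDiff_const.sub (cutoff_contDiff (x i) (ρ i))).differentiable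
        (n := 1) (by norm_num) z)]
    have h1 : dbar (fun z => 1 - cutoff (x i) (ρ i) z) z = - dbar (cutoff (x i) (ρ i)) z := by
      unfold dbar
      rw [fderiv_const_sub]
      simp only [_root_.neg_apply]; ring
    have h2 : ‖∏ j ∈ s, (1 - cutoff (x j) (ρ j) z)‖ ≤ 1 := by
      rw [norm_prod]
      exact Finset.prod_le_one (fun _ _ => norm_nonneg _) fun j _ => one_sub_cutoff_norm_le _ _ _
    refine (norm_add_le _ _).trans ?_
    rw [norm_mul, norm_mul, h1, norm_neg, add_comm]
    have h3 := one_sub_cutoff_norm_le (x i) (ρ i) z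
    gcongr
    · exact mul_le_of_le_one_right (norm_nonneg _) h2
    · exact (mul_le_of_le_one_left (norm_nonneg _) h3).trans ih

lemma integrable_mul_of_ball {g F : ℂ → ℂ} {c : ℂ} {R B : ℝ} (hg : Continuous g)
    (hB : ∀ z, ‖g z‖ ≤ B) (hz : ∀ z ∉ ball c R, g z = 0) (hF : IntegrableOn F (ball c R)) :
    Integrable (fun z => g z * F z) := by
  have h1 : IntegrableOn (fun z => g z * F z) (ball c R) :=
    hF.bdd_mul hg.aestronglyMeasurable (Eventually.of_forall hB)
  refine (integrableOn_iff_integrable_of_support_subset fun z hz' => ?_).1 h1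
  by_contra hcon
  exact hz' (by simp only [hz z hcon, zero_mul])

/-- If a finite family of discs covers a connected set joining two points `a`, `b` at distance
comparable to `R`, then `F` cannot be small on all the doubled discs. The test function is a branch
of `√((z-a)(z-b))` off the discs, cut off to `0` on them and far away: its `1/z` coefficient at
infinity is `-(b-a)²/8`, while `F ≈ 1` and the `∂̄`-derivative of `F` has small mass, so the integral
lost on the doubled discs must be of order `R`, after division by the common factor `R`. -/
lemma cut_estimate : ∃ ε₁ c₃ η : ℝ, 0 < ε₁ ∧ 0 < c₃ ∧ 0 < η ∧ η ≤ 1 / 64 ∧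
    ∀ (c : ℂ) (R ε : ℝ) (F : ℂ → ℂ) (σ : Measure ℂ), Good c R ε F σ → ε ≤ ε₁ →
    ∀ a b : ℂ, a ∈ ball c (R / 8) → η * R ≤ ‖b - a‖ → ‖b - a‖ ≤ 2 * η * R →
    ∀ (ι : Type) (s : Finset ι) (x : ι → ℂ) (ρ : ι → ℝ), (∀ i ∈ s, 0 < ρ i) →
    (∀ i ∈ s, ball (x i) (2 * ρ i) ⊆ ball a (R / 4)) →
    ∀ S : Set ℂ, IsPreconnected S → S ⊆ ⋃ i ∈ s, ball (x i) (ρ i) → a ∈ S → b ∈ S →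
    c₃ * R ≤ ∑ i ∈ s, (ρ i)⁻¹ * ∫ l in ball (x i) (2 * ρ i), ‖F l‖ := by
  obtain ⟨C, hC1, hC⟩ := exists_cutoff_bound
  have hC0 : 0 < C := by linarith
  set η : ℝ := 1 / (1024 * C) with hη
  have hη0 : 0 < η := by positivity
  have hη1 : η ≤ 1 / 64 := by
    rw [hη]; apply one_div_le_one_div_of_le <;> linarith
  refine ⟨η ^ 2 / (8 * (1 + 16 * π * C)), η ^ 2 / (8 * C), η, by positivity, by positivity, hη0,
    hη1, ?_⟩
  intro c R ε F σ hF hε a b ha hab1 hab2 ι s x ρ hρ hball S hS hScov haS hbS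
  have hR := hF.pos
  have hε0 := hF.eps
  set V := ⋃ i ∈ s, ball (x i) (ρ i) with hV
  have hVo : IsOpen V := isOpen_biUnion fun _ _ => isOpen_ball
  have hVa : V ⊆ ball a (R / 4) := iUnion₂_subset fun i hi =>
    (ball_subset_ball (by linarith [hρ i hi])).trans (hball i hi)
  obtain ⟨X, hXc, hXV, h, hhd, hh⟩ := exists_sqrt_branch hVo hScov hS haS hbS
  set r := R / 4 with hr
  have hr0 : 0 < r := by positivity
  have hext : ∀ z : ℂ, r ≤ ‖z - a‖ → z ∉ X := fun z hz hzX => by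
    have := hVa (hXV hzX)
    rw [mem_ball, dist_eq_norm] at this; linarith
  have hXo : IsOpen Xᶜ := hXc.isClosed.isOpen_compl
  obtain ⟨sg, hsg, hexp⟩ := branch_expansion (a := a) (b := b) (h := h) hr0
    (by rw [hr]; nlinarith) (hhd.continuousOn.mono fun z hz => hext z hz)
    (fun z hz => hh z (hext z hz))
  set f : ℂ → ℂ := fun z => (z - a) * h z with hf
  set θ := cutoff a r with hθ
  set P : ℂ → ℂ := fun z => ∏ i ∈ s, (1 - cutoff (x i) (ρ i) z) with hP
  set φ : ℂ → ℂ := fun z => f z * (P z * θ z) with hφ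
  have hPd : ContDiff ℝ 1 P := contDiff_prod fun i _ => contDiff_const.sub (cutoff_contDiff _ _)
  have hθd : ContDiff ℝ 1 θ := cutoff_contDiff _ _
  have hPV : ∀ z ∈ V, P z = 0 := by
    intro z hz
    rw [hV, mem_iUnion₂] at hz
    obtain ⟨i, hi, hzi⟩ := hz
    refine Finset.prod_eq_zero hi ?_
    rw [mem_ball, dist_eq_norm] at hzi
    rw [cutoff_eq_one (hρ i hi) hzi.le, sub_self]
  have hPn : ∀ z, ‖P z‖ ≤ 1 := fun z => by
    simp only [hP]; rw [norm_prod]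
    exact Finset.prod_le_one (fun _ _ => norm_nonneg _) fun j _ => one_sub_cutoff_norm_le _ _ _
  have hP1 : ∀ z, r ≤ ‖z - a‖ → P z = 1 := by
    intro z hz
    refine Finset.prod_eq_one fun i hi => ?_
    rw [cutoff_eq_zero (hρ i hi), sub_zero]
    by_contra hlt
    have : z ∈ ball (x i) (2 * ρ i) := by
      rw [mem_ball, dist_eq_norm]; linarith [hρ i hi]
    have := hball i hi this
    rw [mem_ball, dist_eq_norm] at this; linarith
  have hfX : ∀ z ∉ X, DifferentiableAt ℂ f z := fun z hz =>
    (by fun_prop : DifferentiableAt ℂ (fun z => z - a) z).mul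
      ((hhd z hz).differentiableAt (hXo.mem_nhds hz))
  have hfdOn : DifferentiableOn ℂ f Xᶜ := fun z hz => (hfX z hz).differentiableWithinAt
  -- the branch `f` is singular only on `X ⊆ V`, where the factor `P` kills it
  have hφV : ∀ z ∈ V, φ z = 0 := fun z hz => by simp only [hφ, hPV z hz]; ring
  have hφd : ContDiff ℝ 1 φ := by
    rw [contDiff_iff_contDiffAt]
    intro z
    by_cases hz : z ∈ V
    · refine contDiffAt_const (c := 0) |>.congr_of_eventuallyEq ?_
      filter_upwards [hVo.mem_nhds hz] with w hw using hφV w hw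
    · have hzX : z ∉ X := fun h => hz (hXV h)
      have h1 : ContDiffAt ℂ 1 f z :=
        (hfdOn.contDiffOn hXo).contDiffAt (hXo.mem_nhds hzX)
      exact (h1.restrict_scalars ℝ).mul ((hPd.mul hθd).contDiffAt)
  have hfn : ∀ z ∉ X, ‖z - a‖ ≤ R / 2 → ‖f z‖ ≤ R := by
    intro z hz hza
    have h1 : f z ^ 2 = (z - a) * (z - b) := by
      simp only [hf]; linear_combination (z - a) * hh z hz
    have h2 : ‖f z‖ ^ 2 = ‖z - a‖ * ‖z - b‖ := by rw [← norm_pow, h1, norm_mul]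
    have h3 : ‖z - b‖ ≤ ‖z - a‖ + ‖b - a‖ := by
      have := norm_sub_le (z - a) (b - a)
      simpa using this
    have h4 : ‖z - b‖ ≤ R := by nlinarith
    refine abs_le_of_sq_le_sq' ?_ hR.le |>.2
    rw [h2]; nlinarith [norm_nonneg (z - a), norm_nonneg (z - b)]
  have hθz : ∀ z, R / 2 ≤ ‖z - a‖ → θ z = 0 := fun z hz => cutoff_eq_zero hr0 (by linarith)
  have hθdz : ∀ z, R / 2 ≤ ‖z - a‖ → dbar θ z = 0 := fun z hz =>
    cutoff_dbar_eq_zero hr0 (by linarith)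
  have hφn : ∀ z, ‖φ z‖ ≤ R := by
    intro z
    by_cases hzV : z ∈ V
    · rw [hφV z hzV, norm_zero]; exact hR.le
    rcases le_total ‖z - a‖ (R / 2) with hz | hz
    · have h1 := hfn z (fun h => hzV (hXV h)) hz
      simp only [hφ]; rw [norm_mul (f z), norm_mul (P z)]
      calc ‖f z‖ * (‖P z‖ * ‖θ z‖) ≤ R * (1 * 1) := by
            gcongr
            · exact hPn z
            · exact cutoff_norm_le _ _ _
        _ = R := by ring
    · simp only [hφ]; rw [hθz z hz]; simp [hR.le]
  have hθts : tsupport θ ⊆ ball c R := by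
    refine (cutoff_tsupport hr0).trans fun z hz => ?_
    rw [mem_closedBall] at hz
    rw [mem_ball] at ha ⊢
    have := dist_triangle z a c
    linarith
  have hφs : HasCompactSupport φ :=
    (cutoff_hasCompactSupport hr0).mul_left.mul_left
  have hφts : tsupport φ ⊆ ball c R := by
    refine (closure_mono ?_).trans hθts
    intro z hz h0
    exact hz (by simp only [hφ]; rw [h0]; simp)
  have hT := hF.test φ hφd hφs hφts R hφn
  -- `u` is the part of `∂̄φ` carried by the outer cutoff; the rest lives on the doubled discs
  set u : ℂ → ℂ := fun l => f l * dbar θ l with hu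
  set K0 : ℂ → ℝ := fun l => ∑ i ∈ s, (ball (x i) (2 * ρ i)).indicator (fun _ => (ρ i)⁻¹) l with hK0
  have hin : ∀ l, ‖l - a‖ < r → dbar θ l = 0 := fun l hl => cutoff_dbar_eq_zero' hr0 hl
  have hdiff : ∀ l, ‖dbar φ l - u l‖ ≤ R * C * K0 l := by
    intro l
    have hK00 : 0 ≤ K0 l := Finset.sum_nonneg fun i hi =>
      indicator_nonneg (fun _ _ => (inv_pos.2 (hρ i hi)).le) _
    by_cases hl : l ∈ V
    · have h1 : dbar φ l = 0 := by
        rw [← dbar_const 0 l]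
        apply dbar_congr
        filter_upwards [hVo.mem_nhds hl] with w hw using hφV w hw
      have h2 := hVa hl
      rw [mem_ball, dist_eq_norm] at h2
      simp only [hu]; rw [h1, hin l h2, mul_zero, sub_zero, norm_zero]
      positivity
    · have hlX : l ∉ X := fun h => hl (hXV h)
      have hfl := hfX l hlX
      have hPl := hPd.differentiable (by norm_num) l
      have hθl := hθd.differentiable (by norm_num) l
      have h1 : dbar φ l - u l = f l * (dbar P l * θ l) := by
        have h2 : dbar φ l = f l * (P l * dbar θ l + dbar P l * θ l) := by
          simp only [hφ]
          rw [dbar_mul (hfl.restrictScalars ℝ) (hPl.fun_mul hθl), dbar_mul hPl hθl, dbar_holo hfl]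
          ring
        have h3 : P l * dbar θ l = dbar θ l := by
          rcases lt_or_ge ‖l - a‖ r with h | h
          · rw [hin l h, mul_zero]
          · rw [hP1 l h, one_mul]
        rw [h2, h3]; simp only [hu]; ring
      rw [h1]
      rcases le_total ‖l - a‖ (R / 2) with hla | hla
      · rw [norm_mul (f l), norm_mul (dbar P l)]
        have h4 := hfn l hlX hla
        have h5 : ‖dbar P l‖ ≤ C * K0 l := by
          refine (dbar_prod_le s x ρ l).trans ?_
          simp only [hK0]
          rw [Finset.mul_sum]
          refine Finset.sum_le_sum fun i hi => ?_
          by_cases hm : l ∈ ball (x i) (2 * ρ i)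
          · rw [indicator_of_mem hm, ← div_eq_mul_inv]; exact hC _ _ (hρ i hi) l
          · rw [indicator_of_notMem hm, mul_zero, cutoff_dbar_eq_zero (hρ i hi), norm_zero]
            rw [mem_ball, dist_eq_norm, not_lt] at hm; exact hm
        calc ‖f l‖ * (‖dbar P l‖ * ‖θ l‖) ≤ R * ((C * K0 l) * 1) := by
              gcongr
              exact cutoff_norm_le _ _ _
          _ = _ := by ring
      · rw [hθz l hla]; simp; positivity
  have hsub : ∀ l, dbar θ l ≠ 0 → l ∈ ball a (R / 2) ∧ r ≤ ‖l - a‖ := by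
    intro l hl
    constructor
    · rw [mem_ball, dist_eq_norm]
      by_contra hcon
      exact hl (hθdz l (not_lt.1 hcon))
    · by_contra hcon
      exact hl (hin l (not_le.1 hcon))
  have haR : ball a (R / 2) ⊆ ball c R := by
    intro z hz
    rw [mem_ball] at ha hz ⊢
    have := dist_triangle z a c
    linarith
  have hun : ∀ l, ‖u l‖ ≤ 4 * C := by
    intro l
    by_cases h0 : dbar θ l = 0
    · simp only [hu]; rw [h0]; simp; positivity
    obtain ⟨h1, h2⟩ := hsub l h0
    rw [mem_ball, dist_eq_norm] at h1
    simp only [hu]; rw [norm_mul (f l)]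
    calc ‖f l‖ * ‖dbar θ l‖ ≤ R * (C / r) := by
          gcongr
          · exact hfn l (hext l h2) h1.le
          · exact hC _ _ hr0 l
      _ = 4 * C := by rw [hr]; field_simp
  have huc : Continuous u := by
    rw [continuous_iff_continuousAt]
    intro l
    by_cases hl : l ∈ V
    · have : u =ᶠ[𝓝 l] fun _ => 0 := by
        filter_upwards [isOpen_ball.mem_nhds (hVa hl)] with w hw
        rw [mem_ball, dist_eq_norm] at hw
        simp only [hu]; rw [hin w hw, mul_zero]
      exact continuousAt_const.congr this.symm
    · exact (hfX l fun h => hl (hXV h)).continuousAt.mul (dbar_continuous hθd).continuousAt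
  have hus : HasCompactSupport u :=
    (dbar_hasCompactSupport (cutoff_hasCompactSupport hr0)).mul_left
  have hui : Integrable u := huc.integrable_of_hasCompactSupport hus
  have huz : ∀ l ∉ ball a (R / 2), u l = 0 := fun l hl => by
    by_contra h0
    exact hl (hsub l fun h => h0 (by simp only [hu]; rw [h, mul_zero])).1
  obtain ⟨B, -, hB⟩ := dbar_bound hφd hφs
  have hφz : ∀ l ∉ ball c R, dbar φ l = 0 := fun l hl => dbar_eq_zero fun h => hl (hφts h)
  have hiφ := integrable_mul_of_ball (dbar_continuous hφd) hB hφz hF.int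
  have hiu := integrable_mul_of_ball huc hun (fun l hl => huz l fun h => hl (haR h)) hF.int
  have hballc : ∀ i ∈ s, ball (x i) (2 * ρ i) ⊆ ball c R := fun i hi =>
    (hball i hi).trans ((ball_subset_ball (by rw [hr]; linarith)).trans haR)
  have E1 : ‖(∫ l, dbar φ l * F l) - ∫ l, u l * F l‖ ≤
      R * C * ∑ i ∈ s, (ρ i)⁻¹ * ∫ l in ball (x i) (2 * ρ i), ‖F l‖ := by
    have hiK : ∀ i ∈ s, Integrable ((ball (x i) (2 * ρ i)).indicator (fun l => (ρ i)⁻¹ * ‖F l‖)) :=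
      fun i hi => (integrable_indicator_iff measurableSet_ball).2
        (((hF.int.mono_set (hballc i hi)).norm).const_mul _)
    rw [← integral_sub hiφ hiu]
    calc ‖∫ l, (dbar φ l * F l - u l * F l)‖
        ≤ ∫ l, R * C * ∑ i ∈ s, (ball (x i) (2 * ρ i)).indicator (fun l => (ρ i)⁻¹ * ‖F l‖) l := by
          refine norm_integral_le_of_norm_le ((integrable_finsetSum _ hiK).const_mul _)
            (Eventually.of_forall fun l => ?_)
          rw [← sub_mul, norm_mul]
          calc ‖dbar φ l - u l‖ * ‖F l‖ ≤ R * C * K0 l * ‖F l‖ := by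
                gcongr; exact hdiff l
            _ = _ := by
                simp only [hK0]
                rw [mul_assoc, Finset.sum_mul]
                congr 1
                refine Finset.sum_congr rfl fun i _ => ?_
                by_cases hm : l ∈ ball (x i) (2 * ρ i) <;> simp [hm]
      _ = _ := by
          rw [integral_const_mul, integral_finsetSum _ hiK]
          congr 1
          refine Finset.sum_congr rfl fun i _ => ?_
          rw [integral_indicator measurableSet_ball, integral_const_mul]
  have hint1 : IntegrableOn (fun l => ‖F l - 1‖) (ball c R) :=
    (hF.int.sub (integrableOn_const (by finiteness))).norm
  have E2 : ‖(∫ l, u l * F l) - ∫ l, u l‖ ≤ 4 * C * (4 * π * ε * R ^ 2) := by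
    rw [← integral_sub hiu hui]
    calc ‖∫ l, (u l * F l - u l)‖
        ≤ ∫ l, (ball c R).indicator (fun l => 4 * C * ‖F l - 1‖) l := by
          refine norm_integral_le_of_norm_le
            ((integrable_indicator_iff measurableSet_ball).2 (hint1.const_mul _))
            (Eventually.of_forall fun l => ?_)
          by_cases hl : l ∈ ball c R
          · rw [indicator_of_mem hl, ← mul_sub_one, norm_mul]
            gcongr; exact hun l
          · rw [indicator_of_notMem hl, huz l fun h => hl (haR h)]; simp
      _ = 4 * C * ∫ l in ball c R, ‖F l - 1‖ := by
          rw [integral_indicator measurableSet_ball, integral_const_mul]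
      _ ≤ _ := by gcongr; exact hF.l1'
  obtain ⟨hmi, hm⟩ := model_integral a (b - a) hr0
  have E3 : ‖(∫ l, u l) - sg * (π * (b - a) ^ 2 / 8)‖ ≤ 16 * π * C * ‖b - a‖ ^ 3 / R := by
    rw [← hm, ← integral_const_mul, ← integral_sub hui (hmi.const_mul _)]
    calc _ ≤ ∫ l, (ball a (R / 2)).indicator (fun l => ‖b - a‖ ^ 3 / r ^ 2 * (C / r)) l := by
          refine norm_integral_le_of_norm_le
            ((integrable_indicator_iff measurableSet_ball).2 (integrableOn_const (by finiteness)))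
            (Eventually.of_forall fun l => ?_)
          have hre : u l - sg * (dbar (cutoff a r) l *
              ((l - a) - (b - a) / 2 - (b - a) ^ 2 / 8 * (l - a)⁻¹)) =
              (f l - sg * ((l - a) - (b - a) / 2 - (b - a) ^ 2 / 8 * (l - a)⁻¹)) * dbar θ l := by
            simp only [hu]; ring
          rw [hre, norm_mul]
          by_cases h0 : dbar θ l = 0
          · rw [h0, norm_zero, mul_zero]
            exact indicator_nonneg (fun _ _ => by positivity) _
          · obtain ⟨h1, h2⟩ := hsub l h0
            rw [indicator_of_mem h1]
            gcongr
            · exact hexp l h2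
            · exact hC _ _ hr0 l
      _ = _ := by
          rw [integral_indicator measurableSet_ball, setIntegral_const, Measure.real,
            volume_ball_le a (by positivity), ENNReal.toReal_ofReal (by positivity), smul_eq_mul, hr]
          field_simp; ring
  have E4 : ‖sg * ((π:ℂ) * (b - a) ^ 2 / 8)‖ = π * ‖b - a‖ ^ 2 / 8 := by
    rw [norm_mul, hsg, one_mul, norm_div, norm_mul, norm_pow, Complex.norm_real,
      Real.norm_of_nonneg Real.pi_pos.le, Complex.norm_ofNat]
  set I1 := ∫ l, dbar φ l * F l
  set I2 := ∫ l, u l * F l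
  set I3 := ∫ l, u l
  set W := ∑ i ∈ s, (ρ i)⁻¹ * ∫ l in ball (x i) (2 * ρ i), ‖F l‖
  set J := sg * ((π:ℂ) * (b - a) ^ 2 / 8)
  have E5 : ‖J‖ ≤ ‖I3 - J‖ + ‖I2 - I3‖ + ‖I1 - I2‖ + ‖I1‖ := by
    have : J = -(I3 - J) - (I2 - I3) - (I1 - I2) + I1 := by ring
    calc ‖J‖ = ‖-(I3 - J) - (I2 - I3) - (I1 - I2) + I1‖ := by rw [← this]
      _ ≤ ‖-(I3 - J)‖ + ‖I2 - I3‖ + ‖I1 - I2‖ + ‖I1‖ := by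
        refine (norm_add_le _ _).trans ?_
        gcongr
        refine (norm_sub_le _ _).trans ?_
        gcongr
        exact norm_sub_le _ _
      _ = _ := by rw [norm_neg]
  set τ := ‖b - a‖
  have hτ0 : 0 < τ := lt_of_lt_of_le (by positivity) hab1
  have hpi := Real.pi_gt_three
  have E6 : 16 * π * C * τ ^ 3 / R ≤ π * τ ^ 2 / 32 := by
    rw [div_le_div_iff₀ hR (by norm_num)]
    have h1 : C * τ ≤ R / 512 := by
      calc C * τ ≤ C * (2 * η * R) := by gcongr
        _ = R / 512 := by rw [hη]; field_simp; norm_num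
    have h2 : 16 * π * C * τ ^ 3 * 32 = 512 * (π * τ ^ 2) * (C * τ) := by ring
    rw [h2]
    have : 512 * (π * τ ^ 2) * (C * τ) ≤ 512 * (π * τ ^ 2) * (R / 512) := by gcongr
    linarith
  have E7 : (η * R) ^ 2 ≤ τ ^ 2 := by gcongr
  have E8 : R * (ε * R) + 4 * C * (4 * π * ε * R ^ 2) ≤ (η * R) ^ 2 / 8 := by
    have h1 : ε * (8 * (1 + 16 * π * C)) ≤ η ^ 2 := by
      rwa [le_div_iff₀ (by positivity)] at hε
    nlinarith [mul_le_mul_of_nonneg_right h1 (sq_nonneg R)]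
  have E9 : (η * R) ^ 2 / 8 ≤ R * C * W := by
    rw [E4] at E5
    nlinarith
  have E10 : R * (η ^ 2 / (8 * C) * R) ≤ R * W := by
    have h1 : R * (η ^ 2 / (8 * C) * R) = (η * R) ^ 2 / 8 / C := by field_simp
    rw [h1, div_le_iff₀ hC0]; linarith
  exact le_of_mul_le_mul_left E10 hR

/-! ### Ingredients of Thomson's scheme -/

/-- The cost of the disc `B(q, 2ρ)` in `cut_estimate` is controlled by its radius, the `σ`-mass of a
much larger disc, and a small multiple of the total mass. -/
lemma gap_cost {c : ℂ} {R ε : ℝ} {F : ℂ → ℂ} {σ : Measure ℂ} (hF : Good c R ε F σ) (hε : ε ≤ 1)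
    (n : ℕ) {q : ℂ} {ρ : ℝ} (hρ : 0 < ρ) (hq : ball q (4 * ρ) ⊆ ball c R) :
    (2 * ρ)⁻¹ * ∫ l in ball q (4 * ρ), ‖F l‖ ≤
      16 * π * (ρ + σ.real (ball q (2 ^ (n + 3) * ρ)) + σ.real univ / 2 ^ n) := by
  have := hF.finite
  set Λ : ℝ := 2 ^ (n + 3) with hΛ
  have hΛ8 : 8 ≤ Λ := by
    rw [hΛ, pow_add]; nlinarith [one_le_pow₀ (M₀ := ℝ) (a := 2) (n := n) (by norm_num)]
  have hintg : IntegrableOn F (ball q (4 * ρ)) := hF.int.mono_set hq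
  have hB : MeasurableSet (ball q (Λ * ρ)) := measurableSet_ball
  have key : ∫⁻ l in ball q (4 * ρ), ‖F l‖ₑ ≤ ENNReal.ofReal (32 * π * ρ ^ 2 +
      12 * π * ρ * σ.real (ball q (Λ * ρ)) + 32 * π * ρ ^ 2 / (Λ * ρ) * σ.real univ) := by
    calc ∫⁻ l in ball q (4 * ρ), ‖F l‖ₑ
        ≤ ∫⁻ l in ball q (4 * ρ), (2 + ∫⁻ z, ‖(z - l)⁻¹‖ₑ ∂σ) := by
          refine lintegral_mono_ae ((ae_restrict_iff' measurableSet_ball).2 ?_)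
          filter_upwards [hF.near] with l hl hlq
          calc ‖F l‖ₑ = ‖(F l - 1) + 1‖ₑ := by rw [sub_add_cancel]
            _ ≤ ‖F l - 1‖ₑ + ‖(1:ℂ)‖ₑ := enorm_add_le _ _
            _ ≤ (ENNReal.ofReal 1 + ∫⁻ z, ‖(z - l)⁻¹‖ₑ ∂σ) + 1 := by
                gcongr
                · exact (hl (hq hlq)).trans (by gcongr)
                · simp
            _ = _ := by rw [ENNReal.ofReal_one, add_right_comm, one_add_one_eq_two]
      _ = 2 * volume (ball q (4 * ρ)) + ∫⁻ l in ball q (4 * ρ), (∫⁻ z, ‖(z - l)⁻¹‖ₑ ∂σ) := by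
          rw [lintegral_add_left measurable_const, setLIntegral_const]
      _ = 2 * volume (ball q (4 * ρ)) + ∫⁻ z, (∫⁻ l in ball q (4 * ρ), ‖(z - l)⁻¹‖ₑ) ∂σ := by
          congr 1
          exact lintegral_lintegral_swap
            (by exact (kernel_measurable.comp measurable_swap).enorm.aemeasurable)
      _ ≤ 2 * ENNReal.ofReal (π * (4 * ρ) ^ 2) +
          (ENNReal.ofReal (3 * π * (4 * ρ)) * σ (ball q (Λ * ρ)) +
           ENNReal.ofReal (2 * π * (4 * ρ) ^ 2 / (Λ * ρ)) * σ univ) := by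
          gcongr ?_ + ?_
          · rw [volume_ball_le q (by positivity)]
          · rw [← lintegral_add_compl _ hB]
            gcongr ?_ + ?_
            · calc _ ≤ ∫⁻ z in ball q (Λ * ρ), ENNReal.ofReal (3 * π * (4 * ρ)) ∂σ :=
                    lintegral_mono fun z => pot_le z q (by positivity)
                _ = _ := setLIntegral_const _ _
            · calc _ ≤ ∫⁻ z in (ball q (Λ * ρ))ᶜ,
                      ENNReal.ofReal (2 * π * (4 * ρ) ^ 2 / (Λ * ρ)) ∂σ := by
                    refine setLIntegral_mono measurable_const fun z hz => ?_
                    have hz' : Λ * ρ ≤ ‖z - q‖ := by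
                      simpa [mem_ball, dist_eq_norm] using hz
                    refine (pot_far z q (by positivity) (by nlinarith)).trans
                      (ENNReal.ofReal_le_ofReal ?_)
                    gcongr
                _ = _ := setLIntegral_const _ _
                _ ≤ _ := by gcongr; exact subset_univ _
      _ = _ := by
          rw [← ofReal_measureReal (μ := σ) (s := univ),
            ← ofReal_measureReal (μ := σ) (s := ball q (Λ * ρ)),
            ← ENNReal.ofReal_ofNat 2, ← ENNReal.ofReal_mul (by positivity),
            ← ENNReal.ofReal_mul (by positivity), ← ENNReal.ofReal_mul (by positivity),
            ← ENNReal.ofReal_add (by positivity) (by positivity),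
            ← ENNReal.ofReal_add (by positivity) (by positivity)]
          congr 1; ring
  rw [integral_norm_eq_lintegral_enorm hintg.1]
  have h2 := ENNReal.toReal_le_of_le_ofReal (by positivity) key
  rw [inv_mul_le_iff₀ (by positivity)]
  refine h2.trans ?_
  have h3 : 32 * π * ρ ^ 2 / (Λ * ρ) = 4 * π * ρ / 2 ^ n := by
    rw [hΛ, pow_add]; field_simp; norm_num
  have hm1 : 0 ≤ σ.real (ball q (Λ * ρ)) := measureReal_nonneg
  have hm2 : 0 ≤ σ.real univ / 2 ^ n := by positivity
  rw [h3, show 4 * π * ρ / 2 ^ n * σ.real univ = 4 * π * ρ * (σ.real univ / 2 ^ n) by ring]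
  have := mul_pos Real.pi_pos hρ
  nlinarith [mul_nonneg this.le hm1, mul_nonneg this.le hm2]

/-- Pigeonholing over `n²` consecutive annuli gives a radius around `q` whose surrounding annulus
carries little `σ`-mass. With such a radius the costs from `gap_cost` of disjoint discs add up to at
most a multiple of `σ(ℂ)`, plus convergent sums. -/
lemma gap_radius (σ : Measure ℂ) [IsFiniteMeasure σ] {n : ℕ} (hn : 40 ≤ n) (q : ℂ) :
    ∃ ρ : ℝ, 2 * (1 / 2) ^ (n ^ 4) ≤ ρ ∧ ρ ≤ (1 / 2) ^ ((n - 1) ^ 4) ∧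
      σ.real (ball q (2 ^ (n + 3) * ρ)) ≤ σ.real (ball q ρ) + σ.real univ / n ^ 2 := by
  set Λ : ℝ := 2 ^ (n + 3) with hΛ
  have hΛ1 : 1 ≤ Λ := one_le_pow₀ (by norm_num)
  set ρ : ℕ → ℝ := fun i => 2 * (1 / 2) ^ (n ^ 4) * Λ ^ i with hρ
  have hρ0 : ∀ i, 0 < ρ i := fun i => by positivity
  set A : ℕ → Set ℂ := fun i => ball q (ρ (i + 1)) \ ball q (ρ i) with hA
  have hmono : Monotone ρ := fun i j hij => by
    simp only [hρ]; gcongr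
  have hdisj : Pairwise (Function.onFun Disjoint A) := by
    intro i j hij
    wlog hlt : i < j generalizing i j
    · exact (this hij.symm (by omega)).symm
    refine Set.disjoint_left.2 fun z hz hz' => hz'.2 ?_
    exact ball_subset_ball (hmono hlt) hz.1
  have hsum : ∑ i ∈ Finset.range (n ^ 2), σ.real (A i) ≤
      ∑ i ∈ Finset.range (n ^ 2), σ.real univ / n ^ 2 := by
    rw [Finset.sum_const, Finset.card_range, nsmul_eq_mul, Nat.cast_pow,
      mul_div_cancel₀ _ (by positivity)]
    rw [← measureReal_biUnion_finset (fun i _ j _ hij => hdisj hij)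
      (fun i _ => measurableSet_ball.diff measurableSet_ball)]
    exact measureReal_mono (subset_univ _)
  obtain ⟨i, hi, hi2⟩ := Finset.exists_le_of_sum_le
    (Finset.nonempty_range_iff.2 (by positivity)) hsum
  refine ⟨ρ i, ?_, ?_, ?_⟩
  · simp only [hρ]
    exact le_mul_of_one_le_right (by positivity) (one_le_pow₀ hΛ1)
  · have hi' : i + 1 ≤ n ^ 2 := Finset.mem_range.1 hi
    have hexp : (n - 1) ^ 4 + 1 + (n + 3) * i ≤ n ^ 4 := by
      obtain ⟨m, rfl⟩ : ∃ m, n = m + 40 := ⟨n - 40, by omega⟩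
      have : (m + 40 + 3) * (i + 1) ≤ (m + 40 + 3) * (m + 40) ^ 2 := by gcongr
      have e : m + 40 - 1 = m + 39 := by omega
      rw [e]
      nlinarith [this, sq_nonneg m, mul_nonneg (Nat.zero_le m) (sq_nonneg m)]
    simp only [hρ, hΛ]
    rw [← pow_mul]
    calc 2 * (1 / 2 : ℝ) ^ (n ^ 4) * 2 ^ ((n + 3) * i)
        ≤ 2 * (1 / 2 : ℝ) ^ ((n - 1) ^ 4 + 1 + (n + 3) * i) * 2 ^ ((n + 3) * i) := by
          gcongr 2 * ?_ * _
          exact pow_le_pow_of_le_one (by norm_num) (by norm_num) hexp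
      _ = (1 / 2) ^ ((n - 1) ^ 4) * ((1 / 2) ^ ((n + 3) * i) * 2 ^ ((n + 3) * i)) := by
          rw [pow_add, pow_add]; ring
      _ = _ := by rw [← mul_pow]; norm_num
  · have e : 2 ^ (n + 3) * ρ i = ρ (i + 1) := by simp only [hρ, hΛ]; ring
    have e2 : ball q (ρ (i + 1)) = ball q (ρ i) ∪ A i := by
      rw [hA]; simp only; rw [union_sdiff_cancel]
      exact ball_subset_ball (hmono (by omega))
    change σ.real (ball q (2 ^ (n + 3) * ρ i)) ≤ _
    rw [e, e2]
    exact (measureReal_union_le _ _).trans (by gcongr)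

/-- The discs of radius `s` around points of a grid on which `F` is negligible: there are at most
`O(s⁻²)` of them, and a point outside them lies in a disc on which `F` is not negligible. -/
lemma heavy_exists (F : ℂ → ℂ) (a : ℂ) {R s : ℝ} (hs : 0 < s) (hs1 : s ≤ 1)
    (hR : 0 < R) (hsR : s ≤ R / 32) :
    ∃ H : Finset ℂ, (∀ x ∈ H, ‖x - a‖ ≤ R / 16 ∧ ∫ l in ball x (2 * s), ‖F l‖ ≤ s ^ 4) ∧
      (H.card : ℝ) * s ^ 2 ≤ (2 * R + 10) ^ 2 ∧
      ∀ q, ‖q - a‖ ≤ R / 32 → (∀ x ∈ H, q ∉ ball x s) →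
        ∃ x, ‖q - x‖ < s ∧ s ^ 4 < ∫ l in ball x (2 * s), ‖F l‖ := by
  classical
  set m : ℕ := ⌈R / s⌉₊ + 1 with hm
  have hm' : (m : ℝ) ≤ R / s + 2 := by
    rw [hm]; push_cast; linarith [Nat.ceil_lt_add_one (a := R / s) (by positivity)]
  have hm'' : R / s + 1 ≤ (m : ℝ) := by
    rw [hm]; push_cast; linarith [Nat.le_ceil (R / s)]
  set f : ℤ × ℤ → ℂ := fun u => a + ((s / 2 : ℝ) : ℂ) * ((u.1 : ℂ) + (u.2 : ℂ) * I) with hf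
  set G : Finset ℂ := (Finset.Icc (-(m : ℤ)) m ×ˢ Finset.Icc (-(m : ℤ)) m).image f with hG
  refine ⟨G.filter fun x => ‖x - a‖ ≤ R / 16 ∧ ∫ l in ball x (2 * s), ‖F l‖ ≤ s ^ 4,
    fun x hx => (Finset.mem_filter.1 hx).2, ?_, ?_⟩
  · have hc : (G.filter fun x => ‖x - a‖ ≤ R / 16 ∧
        ∫ l in ball x (2 * s), ‖F l‖ ≤ s ^ 4).card ≤ (2 * m + 1) * (2 * m + 1) := by
      refine (Finset.card_filter_le _ _).trans (Finset.card_image_le.trans ?_)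
      rw [Finset.card_product, Int.card_Icc]
      have : ((m : ℤ) + 1 - -(m : ℤ)).toNat = 2 * m + 1 := by omega
      rw [this]
    have hc' : ((G.filter fun x => ‖x - a‖ ≤ R / 16 ∧
        ∫ l in ball x (2 * s), ‖F l‖ ≤ s ^ 4).card : ℝ) ≤ (2 * m + 1) * (2 * m + 1) := by
      exact_mod_cast hc
    have h1 : (2 * (m : ℝ) + 1) * s ≤ 2 * R + 10 := by
      calc (2 * (m : ℝ) + 1) * s ≤ (2 * (R / s + 2) + 1) * s := by gcongr
        _ = 2 * R + 5 * s := by field_simp; ring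
        _ ≤ _ := by linarith
    calc _ ≤ (2 * (m:ℝ) + 1) * (2 * m + 1) * s ^ 2 := by gcongr
      _ = ((2 * (m : ℝ) + 1) * s) ^ 2 := by ring
      _ ≤ _ := by gcongr
  · intro q hq hqH
    set u : ℤ := round ((q - a).re / (s / 2)) with hu
    set v : ℤ := round ((q - a).im / (s / 2)) with hv
    have hrnd : ∀ y : ℝ, |y| ≤ R / 32 → |y - s / 2 * (round (y / (s / 2)) : ℤ)| ≤ s / 4 ∧
        (round (y / (s / 2)) : ℤ) ∈ Finset.Icc (-(m : ℤ)) m := by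
      intro y hy
      have h1 := abs_sub_round (y / (s / 2))
      have h2 : |y - s / 2 * (round (y / (s / 2)) : ℤ)| ≤ s / 4 := by
        have : y - s / 2 * (round (y / (s / 2)) : ℤ) =
            s / 2 * (y / (s / 2) - (round (y / (s / 2)) : ℤ)) := by field_simp
        rw [this, abs_mul, abs_of_pos (by positivity)]
        nlinarith
      refine ⟨h2, ?_⟩
      have h3 : |y / (s / 2)| ≤ R / s := by
        rw [abs_div, abs_of_pos (by positivity : 0 < s / 2), div_le_div_iff₀ (by positivity) hs]
        nlinarith
      have h4 : |((round (y / (s / 2)) : ℤ) : ℝ)| ≤ m := by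
        rw [abs_le] at *; constructor <;> linarith
      rw [abs_le] at h4
      rw [Finset.mem_Icc]
      constructor
      · exact_mod_cast h4.1
      · exact_mod_cast h4.2
    obtain ⟨hu1, hu2⟩ := hrnd _ ((Complex.abs_re_le_norm _).trans hq)
    obtain ⟨hv1, hv2⟩ := hrnd _ ((Complex.abs_im_le_norm _).trans hq)
    have hqx : ‖q - f (u, v)‖ < s := by
      refine (Complex.norm_le_abs_re_add_abs_im _).trans_lt ?_
      have e1 : (q - f (u, v)).re = (q - a).re - s / 2 * u := by simp [hf]; ring
      have e2 : (q - f (u, v)).im = (q - a).im - s / 2 * v := by simp [hf]; ring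
      rw [e1, e2]
      exact (add_le_add hu1 hv1).trans_lt (by linarith)
    refine ⟨f (u, v), hqx, ?_⟩
    by_contra hcon
    refine hqH (f (u, v)) ?_ (by rwa [mem_ball, dist_eq_norm])
    rw [Finset.mem_filter]
    refine ⟨Finset.mem_image_of_mem _ (Finset.mem_product.2 ⟨hu2, hv2⟩), ?_, not_lt.1 hcon⟩
    calc ‖f (u, v) - a‖ = ‖(q - a) - (q - f (u, v))‖ := by congr 1; ring
      _ ≤ ‖q - a‖ + ‖q - f (u, v)‖ := norm_sub_le _ _
      _ ≤ _ := by linarith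

/-- The maximum principle on the component of `V` containing `p`: some boundary point `q` of it has
`|r p| ≤ |r q|`. If `p ∉ V`, then `q = p`. -/
lemma component_step {V : Set ℂ} (hV : IsOpen V) {r : ℂ → ℂ} {a p : ℂ} {d : ℝ} {W : Set ℂ}
    (hr : DifferentiableOn ℂ r W) (hdW : closedBall a d ⊆ W)
    (hp : p ∈ closedBall a d) (hU : connectedComponentIn V p ⊆ closedBall a d) :
    ∃ (q : ℂ) (U : Set ℂ), IsPreconnected U ∧ p ∈ U ∧ q ∈ U ∧ U ⊆ V ∪ {q} ∧ q ∉ V ∧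
      q ∈ closedBall a d ∧ ‖r p‖ ≤ ‖r q‖ := by
  by_cases hpV : p ∈ V
  · set U := connectedComponentIn V p with hUdef
    have hpU : p ∈ U := mem_connectedComponentIn hpV
    have hUo : IsOpen U := hV.connectedComponentIn
    have hcl : closure U ⊆ closedBall a d := closure_minimal hU isClosed_closedBall
    have hdc : DiffContOnCl ℂ r U := (hr.mono (hcl.trans hdW)).diffContOnCl
    obtain ⟨q, hq, hmax⟩ := Complex.exists_mem_frontier_isMaxOn_norm
      (isBounded_closedBall.subset hU) ⟨p, hpU⟩ hdc
    have hpc : IsPreconnected (insert q U) := isPreconnected_connectedComponentIn.subset_closure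
      (subset_insert _ _) (insert_subset (frontier_subset_closure hq) subset_closure)
    refine ⟨q, insert q U, hpc, mem_insert_of_mem _ hpU, mem_insert _ _, ?_, ?_,
      hcl (frontier_subset_closure hq), hmax (subset_closure hpU)⟩
    · rintro z (rfl | hz)
      · exact Or.inr rfl
      · exact Or.inl (connectedComponentIn_subset _ _ hz)
    · intro hqV
      have : insert q U ⊆ connectedComponentIn V p := hpc.subset_connectedComponentIn
        (mem_insert_of_mem _ hpU) (insert_subset hqV (connectedComponentIn_subset _ _))
      rw [frontier, hUo.interior_eq] at hq
      exact hq.2 (this (mem_insert _ _))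
  · exact ⟨p, {p}, isPreconnected_singleton, rfl, rfl, subset_union_right, hpV, hp, le_rfl⟩

/-- If `|r|` is large at `q` but not at some point within `3 s` of `q`, then by the Schwarz lemma `|r|`
is very large somewhere in the disc of radius `g ≫ s` about `q`. -/
lemma growth_step {r : ℂ → ℂ} {q ζ : ℂ} {s g N : ℝ} (hg : 0 < g) (hN : 0 < N)
    (hr : DifferentiableOn ℂ r (closedBall q g)) (hζ : ‖ζ - q‖ ≤ 3 * s) (hsg : 3 * s < g)
    (hq : 2 * N ≤ ‖r q‖) (hrζ : ‖r ζ‖ ≤ N) :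
    ∃ p ∈ closedBall q g, N * g ≤ 9 * s * ‖r p‖ := by
  obtain ⟨p, hp, hmax⟩ := (isCompact_closedBall q g).exists_isMaxOn
    ⟨q, mem_closedBall_self hg.le⟩ hr.continuousOn.norm
  refine ⟨p, hp, ?_⟩
  have hqp : ‖r q‖ ≤ ‖r p‖ := hmax (mem_closedBall_self hg.le)
  have hp0 : 0 < ‖r p‖ := by linarith
  have hmaps : MapsTo r (ball q g) (ball (r q) (3 * ‖r p‖)) := by
    intro z hz
    rw [mem_ball, dist_eq_norm]
    have : ‖r z‖ ≤ ‖r p‖ := hmax (ball_subset_closedBall hz)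
    linarith [norm_sub_le (r z) (r q)]
  have h1 := Complex.dist_le_div_mul_dist_of_mapsTo_ball (hr.mono ball_subset_closedBall)
    (hmaps.mono_right ball_subset_closedBall)
    (z := ζ) (by rw [mem_ball, dist_eq_norm]; linarith)
  rw [dist_eq_norm, dist_eq_norm] at h1
  have h2 : N ≤ ‖r ζ - r q‖ := by
    have := norm_sub_norm_le (r q) (r ζ)
    rw [norm_sub_rev] at this; linarith
  have h3 : N ≤ 3 * ‖r p‖ / g * (3 * s) := h2.trans (h1.trans (by gcongr))
  calc N * g ≤ 3 * ‖r p‖ / g * (3 * s) * g := by gcongr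
    _ = _ := by field_simp; ring

/-- A disc on which `F` has some mass contains a point where `|r|` is controlled. -/
lemma light_point {r F : ℂ → ℂ} {D B : Set ℂ} (hBD : B ⊆ D) (hB : MeasurableSet B)
    (hF : IntegrableOn F D)
    (hI : ∫⁻ l in D, ‖r l‖ₑ * ‖F l‖ₑ ≤ 1) {τ : ℝ} (hτ : 0 < τ) (hBF : τ < ∫ l in B, ‖F l‖) :
    ∃ ζ ∈ B, ‖r ζ‖ ≤ τ⁻¹ := by
  by_contra! hcon
  have hFB : IntegrableOn F B := hF.mono_set hBD
  have h1 : ENNReal.ofReal τ⁻¹ * ∫⁻ l in B, ‖F l‖ₑ ≤ 1 := by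
    rw [← lintegral_const_mul' _ _ ENNReal.ofReal_ne_top]
    refine le_trans ?_ ((lintegral_mono_set hBD).trans hI)
    refine setLIntegral_mono' hB fun l hl => ?_
    gcongr
    rw [← ofReal_norm]
    exact ENNReal.ofReal_le_ofReal (hcon l hl).le
  rw [← ofReal_integral_norm_eq_lintegral_enorm hFB, ← ENNReal.ofReal_mul (by positivity),
    ENNReal.ofReal_le_one, inv_mul_le_iff₀ hτ, mul_one] at h1
  linarith

/-! ### Bounded point evaluations from a normalised Cauchy transform -/

lemma sum_half_le (n₀ n : ℕ) : ∑ k ∈ Finset.Ico n₀ n, (1 / 2 : ℝ) ^ k ≤ 2 * (1 / 2) ^ n₀ := by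
  have : ∀ m, ∑ k ∈ Finset.Ico n₀ (n₀ + m), (1 / 2 : ℝ) ^ k =
      2 * (1 / 2) ^ n₀ - 2 * (1 / 2) ^ (n₀ + m) := by
    intro m
    induction m with
    | zero => simp
    | succ m ih =>
      rw [← add_assoc, Finset.sum_Ico_succ_top (by omega), ih]
      ring
  rcases le_total n₀ n with h | h
  · obtain ⟨m, rfl⟩ := Nat.exists_eq_add_of_le h
    rw [this]
    have : (0:ℝ) < (1 / 2) ^ (n₀ + m) := by positivity
    linarith
  · rw [Finset.Ico_eq_empty (by omega)]; simp

/-- The numerology of the levels: grid size `2^(-2n⁴)`, jump size `2^(-n⁴)`, threshold `2^(8n⁴)`. -/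
lemma level_growth {n : ℕ} (hn : 41 ≤ n) {x : ℝ}
    (h : (((1 / 2 : ℝ) ^ (2 * n ^ 4)) ^ 4)⁻¹ * (1 / 2) ^ (n ^ 4) ≤ 9 * (1 / 2) ^ (2 * n ^ 4) * x) :
    2 * (((1 / 2 : ℝ) ^ (2 * (n + 1) ^ 4)) ^ 4)⁻¹ ≤ x := by
  have hexp : 8 * (n + 1) ^ 4 + 5 ≤ 9 * n ^ 4 := by
    have h1 : 41 * n ≤ n ^ 2 := by rw [sq]; gcongr
    have h2 : 41 * n ^ 2 ≤ n ^ 3 := by rw [pow_succ' n 2]; gcongr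
    have h3 : 41 * n ^ 3 ≤ n ^ 4 := by rw [pow_succ' n 3]; gcongr
    linarith
  have hN : ∀ k : ℕ, (((1 / 2 : ℝ) ^ (2 * k)) ^ 4)⁻¹ = 2 ^ (8 * k) := fun k => by
    rw [← pow_mul, one_div, inv_pow, inv_inv]; congr 1; ring
  rw [hN] at h ⊢
  generalize n ^ 4 = k at *
  generalize (n + 1) ^ 4 = j at *
  have hgi : (1 / 2 : ℝ) ^ k * 2 ^ k = 1 := by rw [← mul_pow]; norm_num
  have hg : (0 : ℝ) < (1 / 2) ^ k := by positivity
  have h1 : (2 : ℝ) ^ (8 * k) ≤ 9 * (1 / 2) ^ k * x := by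
    refine le_of_mul_le_mul_right ?_ hg
    calc _ ≤ _ := h
      _ = _ := by rw [two_mul, pow_add]; ring
  have h2 : (2 : ℝ) ^ (9 * k) ≤ 9 * x := by
    calc (2 : ℝ) ^ (9 * k) = 2 ^ (8 * k) * 2 ^ k := by
          rw [← pow_add]; congr 1; ring
      _ ≤ 9 * (1 / 2) ^ k * x * 2 ^ k := by gcongr
      _ = 9 * x * ((1 / 2) ^ k * 2 ^ k) := by ring
      _ = _ := by rw [hgi, mul_one]
  have h3 : (2 : ℝ) ^ (8 * j + 5) ≤ 2 ^ (9 * k) := pow_le_pow_right₀ (by norm_num) hexp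
  rw [pow_add] at h3
  have h4 : (0:ℝ) < 2 ^ (8 * j) := by positivity
  linarith

set_option maxHeartbeats 1000000 in
/-- Thomson's scheme: the weight `|F|` of a normalised Cauchy transform with small data yields
bounded point evaluations in the middle of the disc.

If `|r a|` were very large, one could build inductively a connected set starting at `a` and ending
at points `p` with `|r p| → ∞`: at level `n`, follow the discs of size `s n = 2^(-2n⁴)` on which `F` is
negligible up to their boundary (`component_step`), then use a nearby point where `|r|` is controlled
(`light_point`) to jump, within distance `2^(-n⁴)`, to a point where `|r|` exceeds the next threshold
(`growth_step`). The jumps are covered by discs of the radii given by `gap_radius`. By `cut_estimate`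
all these sets stay within `η R` of `a`, where `r` is bounded: a contradiction. -/
theorem good_bounded_eval : ∃ ε₂ : ℝ, 0 < ε₂ ∧ ∀ (c : ℂ) (R ε : ℝ) (F : ℂ → ℂ) (σ : Measure ℂ),
    Good c R ε F σ → ε ≤ ε₂ → ∃ C : ℝ, ∀ r : ℂ → ℂ, DifferentiableOn ℂ r (ball c R) →
      ∫⁻ l in ball c R, ‖r l‖ₑ * ‖F l‖ₑ ≤ 1 → ∀ a ∈ ball c (R / 8), ‖r a‖ ≤ C := by
  classical
  obtain ⟨ε₁, c₃, η, hε₁, hc₃, hη, hη64, hcut⟩ := cut_estimate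
  set W : ℝ := ∑' k : ℕ, 1 / (k : ℝ) ^ 2 with hWdef
  have hWs : Summable fun k : ℕ => 1 / (k : ℝ) ^ 2 := Real.summable_one_div_nat_pow.2 (by norm_num)
  have hW0 : 0 ≤ W := tsum_nonneg fun k => by positivity
  refine ⟨min ε₁ (min 1 (c₃ / (64 * π * (3 + W)))), by positivity, ?_⟩
  intro c R ε F σ hF hε
  have hεε₁ : ε ≤ ε₁ := hε.trans (min_le_left _ _)
  have hε1 : ε ≤ 1 := hε.trans ((min_le_right _ _).trans (min_le_left _ _))
  have hεc : ε ≤ c₃ / (64 * π * (3 + W)) :=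
    hε.trans ((min_le_right _ _).trans (min_le_right _ _))
  have hR := hF.pos
  have hε0 := hF.eps
  have := hF.finite
  have hσ : σ.real univ ≤ ε * R :=
    ENNReal.toReal_le_of_le_ofReal (by positivity) hF.mass
  have hσ0 : 0 ≤ σ.real univ := measureReal_nonneg
  -- the initial level: everything at later levels is small compared with `R`
  obtain ⟨n₀, hn40, hn1, hn2⟩ : ∃ n₀ : ℕ, 41 ≤ n₀ ∧ (1 / 2 : ℝ) ^ n₀ ≤ R / 128 ∧
      (1 / 2 : ℝ) ^ n₀ * (32 * π + 2 * (2 * R + 10) ^ 2) ≤ c₃ * R / 4 := by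
    have ht : Tendsto (fun n : ℕ => (1 / 2 : ℝ) ^ n) atTop (𝓝 0) :=
      tendsto_pow_atTop_nhds_zero_of_lt_one (by norm_num) (by norm_num)
    have h1 := ht.eventually (ge_mem_nhds (show (0:ℝ) < R / 128 by positivity))
    have h2 := ht.eventually (ge_mem_nhds
      (show (0:ℝ) < c₃ * R / 4 / (32 * π + 2 * (2 * R + 10) ^ 2) by positivity))
    obtain ⟨n₀, h3, h4, h5⟩ := ((eventually_ge_atTop 41).and (h1.and h2)).exists
    refine ⟨n₀, h3, h4, ?_⟩
    rwa [le_div_iff₀ (by positivity)] at h5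
  set s : ℕ → ℝ := fun n => (1 / 2) ^ (2 * n ^ 4) with hs
  set g : ℕ → ℝ := fun n => (1 / 2) ^ (n ^ 4) with hg
  have hs0 : ∀ n, 0 < s n := fun n => by positivity
  have hg0 : ∀ n, 0 < g n := fun n => by positivity
  have hhalf : ∀ {i j : ℕ}, i ≤ j → (1 / 2 : ℝ) ^ j ≤ (1 / 2) ^ i := fun h =>
    pow_le_pow_of_le_one (by norm_num) (by norm_num) h
  have hn_le : ∀ {n : ℕ}, 1 ≤ n → n ≤ n ^ 4 := fun {n} h => by
    calc n = n ^ 1 := (pow_one n).symm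
      _ ≤ n ^ 4 := Nat.pow_le_pow_right h (by norm_num)
  have hsn : ∀ n, n₀ ≤ n → s n ≤ (1 / 2) ^ n := fun n hn =>
    hhalf (by have := hn_le (n := n) (by omega); omega)
  have hsR : ∀ n, n₀ ≤ n → s n ≤ R / 128 := fun n hn =>
    (hsn n hn).trans ((hhalf hn).trans hn1)
  choose ρ hρ1 hρ2 hρ3 using fun (n : ℕ) (hn : 40 ≤ n) (q : ℂ) => gap_radius σ hn q
  have hρ_ex : ∃ ρ : ℕ → ℂ → ℝ, ∀ n, n₀ ≤ n → ∀ q, 2 * g n ≤ ρ n q ∧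
      ρ n q ≤ (1 / 2) ^ ((n - 1) ^ 4) ∧
      σ.real (ball q (2 ^ (n + 3) * ρ n q)) ≤ σ.real (ball q (ρ n q)) + σ.real univ / n ^ 2 :=
    ⟨fun n q => if hn : 40 ≤ n then ρ n hn q else 0, fun n hn q => by
      have h40 : 40 ≤ n := by omega
      simp only [h40, dif_pos]
      exact ⟨hρ1 n h40 q, hρ2 n h40 q, hρ3 n h40 q⟩⟩
  clear hρ1 hρ2 hρ3 ρ
  obtain ⟨ρ, hρ⟩ := hρ_ex
  have hρ0 : ∀ n, n₀ ≤ n → ∀ q, 0 < ρ n q := fun n hn q => by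
    linarith [(hρ n hn q).1, hg0 n]
  have hρn : ∀ n, n₀ ≤ n → ∀ q, ρ n q ≤ (1 / 2) ^ n := fun n hn q => by
    refine (hρ n hn q).2.1.trans (hhalf ?_)
    obtain ⟨m, rfl⟩ : ∃ m, n = m + 2 := ⟨n - 2, by omega⟩
    have e : m + 2 - 1 = m + 1 := by omega
    rw [e]
    nlinarith [sq_nonneg m, mul_nonneg (Nat.zero_le m) (sq_nonneg m), sq_nonneg (m ^ 2)]
  have hρR : ∀ n, n₀ ≤ n → ∀ q, ρ n q ≤ R / 128 := fun n hn q =>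
    (hρn n hn q).trans ((hhalf hn).trans hn1)
  have hρlt : ∀ i j, n₀ ≤ i → i < j → ∀ q q', ρ j q' ≤ ρ i q / 2 := fun i j hi hij q q' => by
    have h1 := (hρ i hi q).1
    have h2 := (hρ j (by omega) q').2.1
    have h3 : (1 / 2 : ℝ) ^ ((j - 1) ^ 4) ≤ g i := hhalf (Nat.pow_le_pow_left (by omega) 4)
    linarith
  refine ⟨2 * (s n₀ ^ 4)⁻¹, fun r hr hI a ha => ?_⟩
  by_contra! hra
  have hac : ‖a - c‖ < R / 8 := by rwa [mem_ball, dist_eq_norm] at ha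
  have hH_ex : ∃ H : ℕ → Finset ℂ, ∀ n, n₀ ≤ n →
      ((∀ x ∈ H n, ‖x - a‖ ≤ R / 16 ∧ ∫ l in ball x (2 * s n), ‖F l‖ ≤ s n ^ 4) ∧
      ((H n).card : ℝ) * s n ^ 2 ≤ (2 * R + 10) ^ 2 ∧
      ∀ q, ‖q - a‖ ≤ R / 32 → (∀ x ∈ H n, q ∉ ball x (s n)) →
        ∃ x, ‖q - x‖ < s n ∧ s n ^ 4 < ∫ l in ball x (2 * s n), ‖F l‖) := by
    have : ∀ n, ∃ H : Finset ℂ, n₀ ≤ n →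
      ((∀ x ∈ H, ‖x - a‖ ≤ R / 16 ∧ ∫ l in ball x (2 * s n), ‖F l‖ ≤ s n ^ 4) ∧
      (H.card : ℝ) * s n ^ 2 ≤ (2 * R + 10) ^ 2 ∧
      ∀ q, ‖q - a‖ ≤ R / 32 → (∀ x ∈ H, q ∉ ball x (s n)) →
        ∃ x, ‖q - x‖ < s n ∧ s n ^ 4 < ∫ l in ball x (2 * s n), ‖F l‖) := by
      intro n
      by_cases hn : n₀ ≤ n
      · obtain ⟨H, hH⟩ := heavy_exists F a (hs0 n) (pow_le_one₀ (by norm_num) (by norm_num)) hR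
          (by linarith [hsR n hn])
        exact ⟨H, fun _ => hH⟩
      · exact ⟨∅, fun h => absurd h hn⟩
    exact ⟨fun n => (this n).choose, fun n hn => (this n).choose_spec hn⟩
  obtain ⟨H, hH⟩ := hH_ex
  set V : ℕ → Set ℂ := fun n => ⋃ x ∈ H n, ball x (s n) with hV
  have hVo : ∀ n, IsOpen (V n) := fun n => isOpen_biUnion fun _ _ => isOpen_ball
  -- a connected set covered by the discs available at finitely many levels stays close to `a`
  have hcov : ∀ (n : ℕ) (S : Set ℂ) (T : Finset ℕ) (q : ℕ → ℂ), IsPreconnected S → a ∈ S →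
      T ⊆ Finset.Ico n₀ n → (∀ k ∈ T, ‖q k - a‖ ≤ η * R) →
      (∀ i ∈ T, ∀ j ∈ T, i ≠ j → Disjoint (ball (q i) (ρ i (q i))) (ball (q j) (ρ j (q j)))) →
      S ⊆ (⋃ k ∈ Finset.Ico n₀ n, V k) ∪ ⋃ k ∈ T, ball (q k) (2 * ρ k (q k)) →
      S ⊆ ball a (η * R) := by
    intro n S T q hS haS hT hq hdisj hSc y hy
    by_contra hya
    rw [mem_ball, dist_eq_norm, not_lt] at hya
    obtain ⟨b, hbS, hb⟩ : ∃ b ∈ S, ‖b - a‖ = η * R := by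
      have := hS.intermediate_value haS hy (f := fun z => ‖z - a‖) (by fun_prop)
      exact this ⟨by simp; positivity, hya⟩
    have hTn : ∀ k ∈ T, n₀ ≤ k := fun k hk => (Finset.mem_Ico.1 (hT hk)).1
    set J : Finset ((Σ _ : ℕ, ℂ) ⊕ ℕ) :=
      ((Finset.Ico n₀ n).sigma fun k => H k).disjSum T with hJ
    set X : (Σ _ : ℕ, ℂ) ⊕ ℕ → ℂ := Sum.elim (fun u => u.2) q with hX
    set P : (Σ _ : ℕ, ℂ) ⊕ ℕ → ℝ := Sum.elim (fun u => s u.1) (fun k => 2 * ρ k (q k)) with hP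
    have hηR : η * R ≤ R / 64 := by nlinarith
    have h1 := hcut c R ε F σ hF hεε₁ a b ha hb.ge (by rw [hb]; nlinarith [mul_pos hη hR]) _ J X P
      (by
        rintro (⟨k, x⟩ | k) hk
        · exact hs0 _
        · rw [hJ, Finset.inr_mem_disjSum] at hk
          have := hρ0 k (hTn k hk) (q k)
          simp only [hP, Sum.elim_inr]; positivity)
      (by
        rintro (⟨k, x⟩ | k) hk
        · rw [hJ, Finset.inl_mem_disjSum, Finset.mem_sigma, Finset.mem_Ico] at hk
          obtain ⟨⟨hk1, _⟩, hk2⟩ := hk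
          have h2 := ((hH k hk1).1 x hk2).1
          have h3 := hsR k hk1
          refine ball_subset_ball' ?_
          simp only [hP, hX, Sum.elim_inl, dist_eq_norm]
          linarith
        · rw [hJ, Finset.inr_mem_disjSum] at hk
          have h2 := hρR k (hTn k hk) (q k)
          have h3 := hq k hk
          refine ball_subset_ball' ?_
          simp only [hP, hX, Sum.elim_inr, dist_eq_norm]
          linarith)
      S hS
      (by
        intro z hz
        rw [mem_iUnion₂]
        rcases hSc hz with hz | hz
        · simp only [hV, mem_iUnion₂] at hz
          obtain ⟨k, hk, x, hx, hzx⟩ := hz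
          exact ⟨Sum.inl ⟨k, x⟩, by
            rw [hJ, Finset.inl_mem_disjSum, Finset.mem_sigma]; exact ⟨hk, hx⟩, hzx⟩
        · rw [mem_iUnion₂] at hz
          obtain ⟨k, hk, hz⟩ := hz
          exact ⟨Sum.inr k, by rw [hJ, Finset.inr_mem_disjSum]; exact hk, hz⟩)
      haS hbS
    rw [hJ, Finset.sum_disjSum, Finset.sum_sigma] at h1
    simp only [hP, hX, Sum.elim_inl, Sum.elim_inr] at h1
    have hA : ∑ k ∈ Finset.Ico n₀ n, ∑ x ∈ H k, (s k)⁻¹ * ∫ l in ball x (2 * s k), ‖F l‖ ≤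
        (2 * R + 10) ^ 2 * (2 * (1 / 2) ^ n₀) := by
      calc _ ≤ ∑ k ∈ Finset.Ico n₀ n, (2 * R + 10) ^ 2 * (1 / 2) ^ k := by
            refine Finset.sum_le_sum fun k hk => ?_
            have hk1 := (Finset.mem_Ico.1 hk).1
            obtain ⟨h2, h3, _⟩ := hH k hk1
            calc ∑ x ∈ H k, (s k)⁻¹ * ∫ l in ball x (2 * s k), ‖F l‖
                ≤ ∑ x ∈ H k, (s k)⁻¹ * s k ^ 4 := by
                  refine Finset.sum_le_sum fun x hx => ?_
                  have := hs0 k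
                  gcongr
                  exact (h2 x hx).2
              _ = ((H k).card * s k ^ 2) * s k := by
                  have := (hs0 k).ne'
                  rw [Finset.sum_const, nsmul_eq_mul]; field_simp
              _ ≤ _ := by
                  have := (hs0 k).le
                  gcongr
                  exact hsn k hk1
        _ = (2 * R + 10) ^ 2 * ∑ k ∈ Finset.Ico n₀ n, (1 / 2) ^ k := by rw [Finset.mul_sum]
        _ ≤ _ := by gcongr; exact sum_half_le _ _
    have hB : ∑ k ∈ T, (2 * ρ k (q k))⁻¹ * ∫ l in ball (q k) (2 * (2 * ρ k (q k))), ‖F l‖ ≤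
        16 * π * (2 * (1 / 2) ^ n₀ + (3 + W) * σ.real univ) := by
      have hgeo : ∑ k ∈ T, (1 / 2 : ℝ) ^ k ≤ 2 * (1 / 2) ^ n₀ :=
        (Finset.sum_le_sum_of_subset_of_nonneg hT fun _ _ _ => by positivity).trans
          (sum_half_le _ _)
      have hgeo2 : (2 : ℝ) * (1 / 2) ^ n₀ ≤ 2 := by
        have : (1 / 2 : ℝ) ^ n₀ ≤ 1 := pow_le_one₀ (by norm_num) (by norm_num)
        linarith
      have hW' : ∑ k ∈ T, 1 / (k : ℝ) ^ 2 ≤ W := hWs.sum_le_tsum _ fun _ _ => by positivity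
      have hdis : ∑ k ∈ T, σ.real (ball (q k) (ρ k (q k))) ≤ σ.real univ := by
        rw [← measureReal_biUnion_finset (fun i hi j hj hij => hdisj i hi j hj hij)
          (fun _ _ => measurableSet_ball)]
        exact measureReal_mono (subset_univ _)
      calc _ ≤ ∑ k ∈ T, 16 * π * ((1 / 2) ^ k + (σ.real (ball (q k) (ρ k (q k))) +
              1 / (k : ℝ) ^ 2 * σ.real univ) + (1 / 2) ^ k * σ.real univ) := by
            refine Finset.sum_le_sum fun k hk => ?_
            have hk1 := hTn k hk
            have hsub : ball (q k) (4 * ρ k (q k)) ⊆ ball c R := by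
              refine ball_subset_ball' ?_
              have e1 := hρR k hk1 (q k)
              have e2 := hq k hk
              have e3 := dist_triangle (q k) a c
              rw [dist_eq_norm, dist_eq_norm, dist_eq_norm] at e3
              rw [dist_eq_norm]
              linarith
            have h2 := gap_cost hF hε1 k (hρ0 k hk1 (q k)) hsub
            rw [show 2 * (2 * ρ k (q k)) = 4 * ρ k (q k) by ring]
            refine h2.trans ?_
            gcongr
            · exact hρn k hk1 _
            · refine (hρ k hk1 (q k)).2.2.trans_eq ?_
              ring
            · rw [one_div, inv_pow, div_eq_inv_mul]
        _ = 16 * π * (∑ k ∈ T, (1 / 2) ^ k + (∑ k ∈ T, σ.real (ball (q k) (ρ k (q k))) +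
              (∑ k ∈ T, 1 / (k : ℝ) ^ 2) * σ.real univ) +
              (∑ k ∈ T, (1 / 2) ^ k) * σ.real univ) := by
            rw [← Finset.mul_sum, Finset.sum_add_distrib, Finset.sum_add_distrib,
              Finset.sum_add_distrib, Finset.sum_mul, Finset.sum_mul]
        _ ≤ 16 * π * (2 * (1 / 2) ^ n₀ + (σ.real univ + W * σ.real univ) + 2 * σ.real univ) := by
            gcongr
            exact hgeo.trans hgeo2
        _ = _ := by ring
    have hC : 16 * π * ((3 + W) * σ.real univ) ≤ c₃ * R / 4 := by
      rw [le_div_iff₀ (by positivity)] at hεc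
      calc 16 * π * ((3 + W) * σ.real univ) ≤ 16 * π * ((3 + W) * (ε * R)) := by gcongr
        _ = ε * (64 * π * (3 + W)) * R / 4 := by ring
        _ ≤ _ := by gcongr
    have : 0 < c₃ * R := by positivity
    nlinarith
  have hηR : η * R ≤ R / 64 := by nlinarith
  have hηR0 : 0 < η * R := by positivity
  have hballc : closedBall a (η * R) ⊆ ball c R := by
    intro z hz
    rw [mem_closedBall, dist_eq_norm] at hz
    have e3 := dist_triangle z a c
    rw [dist_eq_norm, dist_eq_norm, dist_eq_norm] at e3
    rw [mem_ball, dist_eq_norm]; linarith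
  -- `S` is the connected set built before level `n`, `p` its current end point, and `T` the set of
  -- levels whose jumps needed a new disc, with centres `q`
  have hstate : ∀ n : ℕ, n₀ ≤ n → ∃ (S : Set ℂ) (p : ℂ) (T : Finset ℕ) (q : ℕ → ℂ),
      IsPreconnected S ∧ a ∈ S ∧ p ∈ S ∧ p ∈ closedBall a (η * R) ∧
      2 * (s n ^ 4)⁻¹ ≤ ‖r p‖ ∧ T ⊆ Finset.Ico n₀ n ∧ (∀ k ∈ T, ‖q k - a‖ ≤ η * R) ∧
      (∀ i ∈ T, ∀ j ∈ T, i ≠ j → Disjoint (ball (q i) (ρ i (q i))) (ball (q j) (ρ j (q j)))) ∧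
      S ⊆ (⋃ k ∈ Finset.Ico n₀ n, V k) ∪ (⋃ k ∈ T, ball (q k) (2 * ρ k (q k))) ∪ {p} := by
    intro n hn
    induction n, hn using Nat.le_induction with
    | base =>
      exact ⟨{a}, a, ∅, fun _ => 0, isPreconnected_singleton, rfl, rfl,
        mem_closedBall_self hηR0.le, hra.le, Finset.empty_subset _, by simp, by simp,
        subset_union_right⟩
    | succ n hn ih =>
      obtain ⟨S, p, T, q, hS, haS, hpS, hpa, hrp, hT, hq, hdisj, hSc⟩ := ih
      have hTn : ∀ k ∈ T, n₀ ≤ k ∧ k < n := fun k hk => Finset.mem_Ico.1 (hT hk)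
      have hTsucc : T ⊆ Finset.Ico n₀ (n + 1) :=
        hT.trans (Finset.Ico_subset_Ico_right (by omega))
      have hVmono : (⋃ k ∈ Finset.Ico n₀ n, V k) ⊆ ⋃ k ∈ Finset.Ico n₀ (n + 1), V k :=
        biUnion_subset_biUnion_left fun k hk =>
          Finset.mem_Ico.2 ⟨(Finset.mem_Ico.1 hk).1, by have := (Finset.mem_Ico.1 hk).2; omega⟩
      have hVn : V n ⊆ ⋃ k ∈ Finset.Ico n₀ (n + 1), V k :=
        subset_biUnion_of_mem (u := V) (Finset.mem_coe.2 (Finset.mem_Ico.2 ⟨hn, by omega⟩))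
      have hcomp : connectedComponentIn (V n) p ⊆ closedBall a (η * R) := by
        by_cases hpV : p ∈ V n
        · have h1 : IsPreconnected (S ∪ connectedComponentIn (V n) p) :=
            hS.union p hpS (mem_connectedComponentIn hpV) isPreconnected_connectedComponentIn
          refine subset_union_right.trans ((hcov (n + 1) _ T q h1 (Or.inl haS) hTsucc hq hdisj
            ?_).trans ball_subset_closedBall)
          rintro z (hz | hz)
          · rcases hSc hz with (hz | hz) | hz
            · exact Or.inl (hVmono hz)
            · exact Or.inr hz
            · rw [mem_singleton_iff] at hz
              rw [hz]; exact Or.inl (hVn hpV)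
          · exact Or.inl (hVn (connectedComponentIn_subset _ _ hz))
        · rw [connectedComponentIn_eq_empty hpV]; exact empty_subset _
      obtain ⟨y, U, hU, hpU, hyU, hUV, hyV, hya, hpy⟩ :=
        component_step (hVo n) hr hballc hpa hcomp
      have hya' : ‖y - a‖ ≤ η * R := by rwa [mem_closedBall, dist_eq_norm] at hya
      obtain ⟨x, hyx, hx⟩ := (hH n hn).2.2 y (by linarith) fun x hx hyx =>
        hyV (mem_iUnion₂.2 ⟨x, hx, hyx⟩)
      have hsn0 := hs0 n
      have hsnR := hsR n hn
      have hxc : ball x (2 * s n) ⊆ ball c R := by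
        refine ball_subset_ball' ?_
        have e1 : ‖x - c‖ ≤ ‖y - x‖ + ‖y - a‖ + ‖a - c‖ := by
          calc ‖x - c‖ = ‖-(y - x) + (y - a) + (a - c)‖ := by congr 1; ring
            _ ≤ _ := (norm_add₃_le).trans (by rw [norm_neg])
        rw [dist_eq_norm]; linarith
      obtain ⟨ζ, hζ, hrζ⟩ := light_point hxc measurableSet_ball hF.int hI (by positivity) hx
      have hζy : ‖ζ - y‖ ≤ 3 * s n := by
        rw [mem_ball, dist_eq_norm] at hζ
        calc ‖ζ - y‖ = ‖(ζ - x) - (y - x)‖ := by congr 1; ring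
          _ ≤ ‖ζ - x‖ + ‖y - x‖ := norm_sub_le _ _
          _ ≤ _ := by linarith
      have hsg : s n = g n * g n := by simp only [hs, hg]; rw [← pow_add]; congr 1; ring
      have hn4 : n ≤ n ^ 4 := hn_le (by omega)
      have hg4 : g n ≤ (1 / 2) ^ 2 := hhalf (by omega)
      have hg00 := hg0 n
      have hgR : g n ≤ R / 128 := (hhalf (by omega : n₀ ≤ n ^ 4)).trans hn1
      have hyc : closedBall y (g n) ⊆ ball c R := by
        intro z hz
        rw [mem_closedBall, dist_eq_norm] at hz
        have e1 : ‖z - c‖ ≤ ‖z - y‖ + ‖y - a‖ + ‖a - c‖ := by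
          calc ‖z - c‖ = ‖(z - y) + (y - a) + (a - c)‖ := by congr 1; ring
            _ ≤ _ := norm_add₃_le
        rw [mem_ball, dist_eq_norm]; linarith
      obtain ⟨p', hp', hgrow⟩ := growth_step (N := (s n ^ 4)⁻¹) hg00 (by positivity)
        (hr.mono hyc) hζy (by rw [hsg]; nlinarith) (hrp.trans hpy) hrζ
      have hrp' : 2 * (s (n + 1) ^ 4)⁻¹ ≤ ‖r p'‖ := by
        exact level_growth (by omega) hgrow
      set S' := S ∪ U ∪ closedBall y (g n) with hS'
      have hS'c : IsPreconnected S' := by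
        refine IsPreconnected.union y (Or.inr hyU) (mem_closedBall_self hg00.le)
          (hS.union p hpS hpU hU) (convex_closedBall y (g n)).isPreconnected
      have hρy := hρ0 n hn y
      have hgρ : closedBall y (g n) ⊆ ball y (ρ n y) :=
        closedBall_subset_ball (by linarith [(hρ n hn y).1])
      -- `S'` is covered by old discs and any set containing the disc about `y`
      have hS'cov : ∀ B : Set ℂ, ball y (ρ n y) ⊆ (⋃ k ∈ T, ball (q k) (2 * ρ k (q k))) ∪ B →
          S' ⊆ (⋃ k ∈ Finset.Ico n₀ (n + 1), V k) ∪
            ((⋃ k ∈ T, ball (q k) (2 * ρ k (q k))) ∪ B) := by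
        intro B hB
        have hU' : U ⊆ (⋃ k ∈ Finset.Ico n₀ (n + 1), V k) ∪
            ((⋃ k ∈ T, ball (q k) (2 * ρ k (q k))) ∪ B) := by
          intro z hz
          rcases hUV hz with hz | hz
          · exact Or.inl (hVn hz)
          · rw [mem_singleton_iff] at hz
            rw [hz]
            exact Or.inr (hB (mem_ball_self hρy))
        rintro z ((hz | hz) | hz)
        · rcases hSc hz with (hz | hz) | hz
          · exact Or.inl (hVmono hz)
          · exact Or.inr (Or.inl hz)
          · rw [mem_singleton_iff] at hz
            rw [hz]; exact hU' hpU
        · exact hU' hz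
        · exact Or.inr (hB (hgρ hz))
      have hp'S : p' ∈ S' := Or.inr hp'
      have haS' : a ∈ S' := Or.inl (Or.inl haS)
      by_cases hmeet : ∀ k ∈ T, Disjoint (ball (q k) (ρ k (q k))) (ball y (ρ n y))
      · set q' := Function.update q n y with hq'
        have hq'n : q' n = y := Function.update_self ..
        have hq'k : ∀ k ∈ T, q' k = q k := fun k hk =>
          Function.update_of_ne (by have := (hTn k hk).2; omega) ..
        have hT' : insert n T ⊆ Finset.Ico n₀ (n + 1) :=
          Finset.insert_subset (Finset.mem_Ico.2 ⟨hn, by omega⟩) hTsucc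
        have hqa' : ∀ k ∈ insert n T, ‖q' k - a‖ ≤ η * R := by
          intro k hk
          rcases Finset.mem_insert.1 hk with rfl | hk
          · rw [hq'n]; exact hya'
          · rw [hq'k k hk]; exact hq k hk
        have hdisj' : ∀ i ∈ insert n T, ∀ j ∈ insert n T, i ≠ j →
            Disjoint (ball (q' i) (ρ i (q' i))) (ball (q' j) (ρ j (q' j))) := by
          intro i hi j hj hij
          rcases Finset.mem_insert.1 hi with hi' | hi' <;>
            rcases Finset.mem_insert.1 hj with hj' | hj'
          · exact absurd (hi'.trans hj'.symm) hij
          · rw [hi', hq'n, hq'k j hj']; exact (hmeet j hj').symm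
          · rw [hj', hq'n, hq'k i hi']; exact hmeet i hi'
          · rw [hq'k i hi', hq'k j hj']; exact hdisj i hi' j hj' hij
        have hc' : S' ⊆ (⋃ k ∈ Finset.Ico n₀ (n + 1), V k) ∪
            ⋃ k ∈ insert n T, ball (q' k) (2 * ρ k (q' k)) := by
          refine (hS'cov (ball y (2 * ρ n y)) ((ball_subset_ball (by linarith)).trans
            subset_union_right)).trans (union_subset_union_right _ ?_)
          rw [Finset.set_biUnion_insert, hq'n, union_comm]
          refine union_subset_union_right _ (iUnion₂_mono fun k hk => ?_)
          rw [hq'k k hk]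
        have hin := hcov (n + 1) S' _ q' hS'c haS' hT' hqa' hdisj' hc'
        exact ⟨S', p', insert n T, q', hS'c, haS', hp'S, ball_subset_closedBall (hin hp'S), hrp',
          hT', hqa', hdisj', hc'.trans subset_union_left⟩
      · push Not at hmeet
        obtain ⟨k, hk, hkm⟩ := hmeet
        obtain ⟨z, hz1, hz2⟩ := Set.not_disjoint_iff.1 hkm
        have hsub : ball y (ρ n y) ⊆ ⋃ k ∈ T, ball (q k) (2 * ρ k (q k)) := by
          refine subset_trans ?_ (subset_biUnion_of_mem
            (u := fun k => ball (q k) (2 * ρ k (q k))) (Finset.mem_coe.2 hk))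
          refine ball_subset_ball' ?_
          have h1 := hρlt k n (hTn k hk).1 (hTn k hk).2 (q k) y
          have h2 := dist_triangle_left y (q k) z
          rw [mem_ball] at hz1 hz2
          linarith
        have hc' : S' ⊆ (⋃ k ∈ Finset.Ico n₀ (n + 1), V k) ∪
            ⋃ k ∈ T, ball (q k) (2 * ρ k (q k)) := by
          have := hS'cov ∅ (hsub.trans subset_union_left)
          rwa [union_empty] at this
        have hin := hcov (n + 1) S' _ q hS'c haS' hTsucc hq hdisj hc'
        exact ⟨S', p', T, q, hS'c, haS', hp'S, ball_subset_closedBall (hin hp'S), hrp',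
          hTsucc, hq, hdisj, hc'.trans subset_union_left⟩
  -- `r` is bounded near `a`, so the construction cannot continue indefinitely
  obtain ⟨M, hM⟩ := (isCompact_closedBall a (η * R)).exists_bound_of_continuousOn
    (hr.mono hballc).continuousOn
  obtain ⟨n, hn⟩ := pow_unbounded_of_one_lt M (show (1:ℝ) < 2 by norm_num)
  obtain ⟨S, p, T, q, -, -, -, hpa, hrp, -⟩ := hstate (n₀ + n) (by omega)
  have h1 := hM p hpa
  have h2 : (2 : ℝ) ^ n ≤ (s (n₀ + n) ^ 4)⁻¹ := by
    simp only [hs]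
    rw [← pow_mul, one_div, inv_pow, inv_inv]
    refine pow_le_pow_right₀ (by norm_num) ?_
    have := hn_le (n := n₀ + n) (by omega)
    omega
  have h3 : (0 : ℝ) < (s (n₀ + n) ^ 4)⁻¹ := by have := hs0 (n₀ + n); positivity
  linarith

/-! ### Annihilators and analytic bounded point evaluations -/

lemma ratOn_inv_sub {K : Set ℂ} {a : ℂ} (ha : a ∉ K) : (fun z => (z - a)⁻¹) ∈ RatOn K := by
  refine ⟨1, Polynomial.X - Polynomial.C a, fun z hz => ?_, ?_⟩
  · simp only [Polynomial.eval_sub, Polynomial.eval_X, Polynomial.eval_C]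
    exact sub_ne_zero.2 fun h => ha (h ▸ hz)
  · ext z; simp

lemma ratOn_measurable {K : Set ℂ} {r : ℂ → ℂ} (hr : r ∈ RatOn K) : Measurable r := by
  obtain ⟨p, q, -, rfl⟩ := hr
  exact p.continuous.measurable.div q.continuous.measurable

lemma ratOn_differentiableOn {K : Set ℂ} {r : ℂ → ℂ} (hr : r ∈ RatOn K) :
    DifferentiableOn ℂ r K := by
  obtain ⟨p, q, hq, rfl⟩ := hr
  exact p.differentiable.differentiableOn.div q.differentiable.differentiableOn hq

/-- Difference quotients of rational functions with poles off `K` are again such functions. -/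
lemma ratOn_quotient {K : Set ℂ} {r : ℂ → ℂ} (hr : r ∈ RatOn K) {l : ℂ} (hl : l ∈ K) :
    ∃ s ∈ RatOn K, ∀ z ∈ K, r z - r l = (z - l) * s z := by
  obtain ⟨p, q, hq, rfl⟩ := hr
  have hroot : (p * Polynomial.C (q.eval l) - Polynomial.C (p.eval l) * q).IsRoot l := by
    simp [Polynomial.IsRoot]
  obtain ⟨m, hm⟩ := Polynomial.dvd_iff_isRoot.2 hroot
  refine ⟨_, ⟨m, q * Polynomial.C (q.eval l), fun z hz => ?_, rfl⟩, fun z hz => ?_⟩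
  · simp [hq z hz, hq l hl]
  · have h1 := congrArg (Polynomial.eval z) hm
    simp only [Polynomial.eval_sub, Polynomial.eval_mul, Polynomial.eval_C,
      Polynomial.eval_X] at h1 ⊢
    have := hq z hz
    have := hq l hl
    field_simp
    linear_combination h1

lemma countable_atoms (μ : Measure ℂ) [IsFiniteMeasure μ] : {l : ℂ | 0 < μ {l}}.Countable := by
  have := Measure.countable_meas_pos_of_disjoint_iUnion (μ := μ) (As := fun l : ℂ => ({l} : Set ℂ))
    (fun l => measurableSet_singleton l) (fun i j hij => by simpa using hij)
  exact this

/-- If `g` annihilates `Rat(K)`, then it annihilates the difference quotients of `r`, so that `r(l)`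
times the Cauchy transform of `g μ` at `l` is the Cauchy transform of `r g μ`. -/
lemma rat_mul_cauchy_le {K : Set ℂ} {μ : Measure ℂ} [IsFiniteMeasure μ] (hμ : μ Kᶜ = 0)
    {g : ℂ → ℂ}
    (hann : ∀ r ∈ RatOn K, ∫ z, r z * g z ∂μ = 0)
    (hintg : ∀ r ∈ RatOn K, Integrable (fun z => r z * g z) μ)
    {r : ℂ → ℂ} (hr : r ∈ RatOn K) {l : ℂ} (hl : l ∈ K) (hat : ¬ 0 < μ {l}) :
    ‖r l‖ₑ * ‖∫ z, (z - l)⁻¹ * g z ∂μ‖ₑ ≤ ∫⁻ z, ‖(z - l)⁻¹‖ₑ * (‖r z‖ₑ * ‖g z‖ₑ) ∂μ := by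
  by_cases hi : Integrable (fun z => (z - l)⁻¹ * g z) μ
  · obtain ⟨s, hs, hsr⟩ := ratOn_quotient hr hl
    have hK : ∀ᵐ z ∂μ, z ∈ K := by
      rw [ae_iff]; exact hμ
    have hne : ∀ᵐ z ∂μ, z ≠ l := by
      rw [ae_iff]; simpa using hat
    have hae : (fun z => r l * ((z - l)⁻¹ * g z) + s z * g z) =ᵐ[μ]
        fun z => (z - l)⁻¹ * (r z * g z) := by
      filter_upwards [hK, hne] with z hz hzl
      have h1 := hsr z hz
      have h2 : z - l ≠ 0 := sub_ne_zero.2 hzl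
      field_simp
      linear_combination (-g z) * h1
    have key : r l * ∫ z, (z - l)⁻¹ * g z ∂μ = ∫ z, (z - l)⁻¹ * (r z * g z) ∂μ := by
      rw [← integral_congr_ae hae, integral_add (hi.const_mul _) (hintg s hs), hann s hs, add_zero,
        integral_const_mul]
    rw [← enorm_mul, key]
    refine (enorm_integral_le_lintegral_enorm _).trans (le_of_eq ?_)
    simp only [enorm_mul]
  · rw [integral_undef hi]; simp

lemma Good.restrict {c : ℂ} {R ε : ℝ} {F : ℂ → ℂ} {σ : Measure ℂ} (h : Good c R ε F σ) :
    Good c (R / 8) (8 * ε) F σ := by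
  have hR := h.pos
  have he := h.eps
  have hsub : ball c (R / 8) ⊆ ball c R := ball_subset_ball (by linarith)
  have hee : 8 * ε * (R / 8) = ε * R := by ring
  refine ⟨by linarith, by linarith, by rw [hee]; exact h.mass, h.int.mono_set hsub, ?_, ?_⟩
  · intro φ h1 h2 h3 M hM
    rw [hee]; exact h.test φ h1 h2 (h3.trans hsub) M hM
  · filter_upwards [h.near] with l hl hl'
    refine (hl (hsub hl')).trans ?_
    gcongr
    linarith

/-- A component of an open set that is not small contains, near each of its points `a`, a
continuum of points joining `a` to the circle of radius `s` around `a`. -/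
lemma exists_connected_to_circle {K : Set ℂ} (hK : IsClosed K) {a : ℂ} (ha : a ∉ K) {s : ℝ}
    (hs : 0 < s) (hd : ENNReal.ofReal (2 * s) < ediam (connectedComponentIn Kᶜ a)) :
    ∃ S : Set ℂ, IsCompact S ∧ IsPreconnected S ∧ S ⊆ Kᶜ ∧ S ⊆ ball a (2 * s) ∧ a ∈ S ∧
      ∃ b ∈ S, ‖b - a‖ = s := by
  set W := Kᶜ ∩ ball a (2 * s) with hW
  have hWo : IsOpen W := hK.isOpen_compl.inter isOpen_ball
  have haW : a ∈ W := ⟨ha, mem_ball_self (by linarith)⟩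
  set U := connectedComponentIn W a with hU
  have hUo : IsOpen U := hWo.connectedComponentIn
  have hUc : IsConnected U := isConnected_connectedComponentIn_iff.2 haW
  have haU : a ∈ U := mem_connectedComponentIn haW
  have hUW : U ⊆ W := connectedComponentIn_subset _ _
  have hfar : ∃ y ∈ U, s ≤ ‖y - a‖ := by
    by_contra! hcon
    have hsub : connectedComponentIn Kᶜ a ⊆ U := by
      refine isPreconnected_connectedComponentIn.subset_of_closure_inter_subset hUo
        ⟨a, mem_connectedComponentIn ha, haU⟩ ?_
      rintro z ⟨hz, hz'⟩
      have hza : ‖z - a‖ ≤ s := by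
        have : closure U ⊆ closedBall a s := closure_minimal (fun y hy => by
          rw [mem_closedBall, dist_eq_norm]; exact (hcon y hy).le) isClosed_closedBall
        have := this hz
        rwa [mem_closedBall, dist_eq_norm] at this
      have hzW : z ∈ W := ⟨connectedComponentIn_subset _ _ hz', by
        rw [mem_ball, dist_eq_norm]; linarith⟩
      have hp : IsPreconnected (insert z U) := by
        refine hUc.isPreconnected.subset_closure (subset_insert _ _) ?_
        exact insert_subset hz subset_closure
      exact hp.subset_connectedComponentIn (mem_insert_of_mem _ haU)
        (insert_subset hzW hUW) (mem_insert _ _)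
    have h1 : ediam (connectedComponentIn Kᶜ a) ≤ ENNReal.ofReal (2 * s) := by
      refine ediam_le fun x hx y hy => ?_
      rw [edist_dist]
      refine ENNReal.ofReal_le_ofReal ?_
      have := hcon x (hsub hx)
      have h2 := hcon y (hsub hy)
      have h3 := dist_triangle_right x y a
      rw [dist_eq_norm x a, dist_eq_norm y a] at h3
      linarith
    exact absurd hd (not_lt.2 h1)
  obtain ⟨y, hyU, hy⟩ := hfar
  have hpc : IsPathConnected U := (hUo.isConnected_iff_isPathConnected).1 hUc
  obtain ⟨γ, hγ⟩ := hpc.joinedIn a haU y hyU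
  have hrc : IsPreconnected (range γ) := isPreconnected_range γ.continuous
  have hsub : range γ ⊆ W := by
    rintro _ ⟨t, rfl⟩; exact hUW (hγ t)
  refine ⟨range γ, isCompact_range γ.continuous, hrc, hsub.trans inter_subset_left,
    hsub.trans inter_subset_right, ⟨0, γ.source⟩, ?_⟩
  have hiv := hrc.intermediate_value (f := fun z => ‖z - a‖) ⟨0, γ.source⟩ ⟨1, γ.target⟩
    (by fun_prop)
  obtain ⟨b, hb, hb'⟩ := hiv ⟨by simpa using hs.le, hy⟩
  exact ⟨b, hb, hb'⟩

/-- If the Cauchy transform of an annihilator is nearly a nonzero constant `v` on a disc, then the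
centre of the disc is an analytic bounded point evaluation. -/
lemma good_abpe : ∃ ε₀ : ℝ, 0 < ε₀ ∧ ∀ (t : ℝ) (K : Set ℂ) (μ : Measure ℂ) [IsFiniteMeasure μ]
    (g : ℂ → ℂ) (C₀ c₀ R ε : ℝ) (v x : ℂ) (σ : Measure ℂ), IsClosed K → μ Kᶜ = 0 →
    Measurable g →
    (∀ r ∈ RatOn K, ∫ z, r z * g z ∂μ = 0) →
    (∀ r ∈ RatOn K, ∫⁻ z, ‖r z‖ₑ * ‖g z‖ₑ ∂μ ≤ ENNReal.ofReal (C₀ * tnorm t μ r)) →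
    (∀ z ∉ K, ENNReal.ofReal c₀ ≤ ediam (connectedComponentIn Kᶜ z)) →
    v ≠ 0 → 0 < R → R ≤ c₀ → ε ≤ ε₀ →
    Good x R ε (fun l => (∫ z, (z - l)⁻¹ * g z ∂μ) / v) σ → x ∈ abpeSet t K μ := by
  obtain ⟨ε₁, c₃, η, hε₁, hc₃, hη, hη', hcut⟩ := cut_estimate
  obtain ⟨ε₂, hε₂, heval⟩ := good_bounded_eval
  refine ⟨min ε₁ (ε₂ / 8), by positivity, ?_⟩
  intro t K μ _ g C₀ c₀ R ε v x σ hK hμ hgm hann hbd hdiam hv hR hRc hε hgood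
  set F : ℂ → ℂ := fun l => (∫ z, (z - l)⁻¹ * g z ∂μ) / v with hF
  have hFK : ∀ l ∉ K, F l = 0 := fun l hl => by
    have := hann _ (ratOn_inv_sub hl)
    simp [hF, this]
  -- Otherwise a component of the complement of `K`, being large, contains a continuum of size
  -- comparable to `R` covered by discs where `F` vanishes, against `cut_estimate`.
  have hdisj : ball x (R / 8) ⊆ K := by
    intro a ha
    by_contra haK
    have hd : ENNReal.ofReal (2 * (η * R)) < ediam (connectedComponentIn Kᶜ a) := by
      refine lt_of_lt_of_le ?_ (hdiam a haK)
      rw [ENNReal.ofReal_lt_ofReal_iff (by linarith)]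
      nlinarith
    obtain ⟨S, hSc, hSp, hSK, hSb, haS, b, hbS, hb⟩ :=
      exists_connected_to_circle hK haK (mul_pos hη hR) hd
    have hO : IsOpen (Kᶜ ∩ ball a (R / 4)) := hK.isOpen_compl.inter isOpen_ball
    have hSO : S ⊆ Kᶜ ∩ ball a (R / 4) := subset_inter hSK (hSb.trans (ball_subset_ball (by
      nlinarith)))
    have hrad : ∀ y : ℂ, ∃ ρ : ℝ, 0 < ρ ∧ (y ∈ S → ball y (2 * ρ) ⊆ Kᶜ ∩ ball a (R / 4)) := by
      intro y
      by_cases hy : y ∈ S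
      · obtain ⟨ρ, hρ, hsub⟩ := Metric.isOpen_iff.1 hO y (hSO hy)
        exact ⟨ρ / 2, by linarith, fun _ => by rwa [mul_div_cancel₀ _ two_ne_zero]⟩
      · exact ⟨1, one_pos, fun h => absurd h hy⟩
    choose ρ hρ hρS using hrad
    obtain ⟨T, hTS, hT⟩ := hSc.elim_nhds_subcover (fun y => ball y (ρ y))
      (fun y _ => ball_mem_nhds y (hρ y))
    have := hcut x R ε F σ hgood (hε.trans (min_le_left _ _)) a b ha hb.ge
      (by rw [hb]; nlinarith) ℂ T id ρ (fun i _ => hρ i)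
      (fun i hi => (hρS i (hTS i hi)).trans inter_subset_right) S hSp hT haS hbS
    have hzero : ∑ i ∈ T, (ρ i)⁻¹ * ∫ l in ball (id i) (2 * ρ i), ‖F l‖ = 0 := by
      refine Finset.sum_eq_zero fun i hi => ?_
      have : ∫ l in ball (id i) (2 * ρ i), ‖F l‖ = 0 := by
        refine (setIntegral_congr_fun (g := fun _ => (0:ℝ)) measurableSet_ball
          fun l hl => ?_).trans (by simp)
        have := hFK l (hρS i (hTS i hi) hl).1
        simp [this]
      rw [this, mul_zero]
    rw [hzero] at this
    nlinarith
  obtain ⟨C, hC⟩ := heval x (R / 8) (8 * ε) F σ hgood.restrict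
    (by have := hε.trans (min_le_right _ _); linarith)
  have hintg : ∀ r ∈ RatOn K, Integrable (fun z => r z * g z) μ := fun r hr =>
    ⟨((ratOn_measurable hr).mul hgm).aestronglyMeasurable, by
      rw [HasFiniteIntegral]
      simp only [enorm_mul]
      exact (hbd r hr).trans_lt ENNReal.ofReal_lt_top⟩
  set C₁ := ‖v‖⁻¹ * (3 * π * (R / 8)) * |C₀| with hC₁
  have htn : ∀ r, 0 ≤ tnorm t μ r := fun r => by unfold tnorm; positivity
  have hmain : ∀ r ∈ RatOn K, ∫⁻ l in ball x (R / 8), ‖r l‖ₑ * ‖F l‖ₑ ≤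
      ENNReal.ofReal (C₁ * tnorm t μ r) := by
    intro r hr
    have hnu : Measurable fun z => ‖r z‖ₑ * ‖g z‖ₑ :=
      (ratOn_measurable hr).enorm.mul hgm.enorm
    have hat : ∀ᵐ l : ℂ, ¬ 0 < μ {l} := by
      rw [ae_iff]; simp only [not_not]; exact (countable_atoms μ).measure_zero _
    have := isFiniteMeasure_withDensity (μ := μ) (f := fun z => ‖r z‖ₑ * ‖g z‖ₑ)
      ((hbd r hr).trans_lt ENNReal.ofReal_lt_top).ne
    calc ∫⁻ l in ball x (R / 8), ‖r l‖ₑ * ‖F l‖ₑ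
        ≤ ∫⁻ l in ball x (R / 8), ‖v‖ₑ⁻¹ *
          ∫⁻ z, ‖(z - l)⁻¹‖ₑ ∂(μ.withDensity fun z => ‖r z‖ₑ * ‖g z‖ₑ) := by
          refine lintegral_mono_ae ((ae_restrict_iff' measurableSet_ball).2 ?_)
          filter_upwards [hat] with l hl hlb
          have h1 := rat_mul_cauchy_le hμ hann hintg hr (hdisj hlb) hl
          rw [lintegral_withDensity_eq_lintegral_mul _ hnu (by fun_prop)]
          simp only [hF, div_eq_mul_inv, enorm_mul, Pi.mul_apply]
          rw [enorm_inv hv, ← mul_assoc, mul_comm]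
          gcongr
          refine h1.trans (le_of_eq ?_)
          congr 1; ext z; ring
      _ = ‖v‖ₑ⁻¹ * ∫⁻ l in ball x (R / 8),
          ∫⁻ z, ‖(z - l)⁻¹‖ₑ ∂(μ.withDensity fun z => ‖r z‖ₑ * ‖g z‖ₑ) := by
          rw [lintegral_const_mul']
          simp [hv]
      _ ≤ ‖v‖ₑ⁻¹ * (ENNReal.ofReal (3 * π * (R / 8)) * ENNReal.ofReal (C₀ * tnorm t μ r)) := by
          gcongr
          refine (lintegral_pot_le (by linarith)).trans ?_
          gcongr
          rw [withDensity_apply _ MeasurableSet.univ, Measure.restrict_univ]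
          exact hbd r hr
      _ ≤ ENNReal.ofReal (C₁ * tnorm t μ r) := by
          rw [← enorm_inv hv, ← ofReal_norm, norm_inv, ← ENNReal.ofReal_mul (by positivity),
            ← ENNReal.ofReal_mul (by positivity)]
          refine ENNReal.ofReal_le_ofReal ?_
          have h2 := mul_le_mul_of_nonneg_right (le_abs_self C₀) (htn r)
          have h3 : 0 ≤ ‖v‖⁻¹ * (3 * π * (R / 8)) := by positivity
          have h4 := mul_le_mul_of_nonneg_left h2 h3
          rw [hC₁]
          linarith
  refine ⟨R / 8 / 8, by linarith, max C 1 * C₁, fun a ha r hr => ?_⟩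
  have hstep : ∀ δ : ℝ, 0 < δ → ‖r a‖ ≤ max C 1 * (C₁ * tnorm t μ r + δ) := by
    intro δ hδ
    have hI : 0 < C₁ * tnorm t μ r + δ := by have := htn r; positivity
    set J := C₁ * tnorm t μ r + δ with hJ
    have hJc : (J : ℂ) ≠ 0 := by exact_mod_cast hI.ne'
    have h1 := hC (fun z => (J : ℂ)⁻¹ * r z)
      (((ratOn_differentiableOn hr).mono hdisj).const_mul _) (by
        simp only [enorm_mul, mul_assoc]
        rw [lintegral_const_mul' _ _ enorm_ne_top]
        calc _ ≤ ‖(J : ℂ)⁻¹‖ₑ * ENNReal.ofReal J := by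
              gcongr
              exact (hmain r hr).trans (ENNReal.ofReal_le_ofReal (by linarith))
          _ = 1 := by
              rw [← ofReal_norm, ← ENNReal.ofReal_mul (by positivity), norm_inv, norm_real,
                Real.norm_of_nonneg hI.le, inv_mul_cancel₀ hI.ne', ENNReal.ofReal_one]) a ha
    rw [norm_mul, norm_inv, norm_real, Real.norm_of_nonneg hI.le, inv_mul_le_iff₀ hI] at h1
    calc ‖r a‖ ≤ J * C := h1
      _ ≤ J * max C 1 := by gcongr; exact le_max_left _ _
      _ = _ := mul_comm _ _
  refine le_of_forall_pos_le_add fun e he => ?_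
  have hm : 0 < max C 1 := lt_of_lt_of_le one_pos (le_max_right _ _)
  have := hstep (e / max C 1) (by positivity)
  rw [mul_add, mul_div_cancel₀ _ hm.ne'] at this
  linarith

/-! ### The Cauchy integral over a Lipschitz graph -/

/-- The parametrisation of the graph of `A` by its first coordinate. -/
def gpt (A : ℝ → ℝ) (x : ℝ) : ℂ := x + A x * I

/-- The derivative of the parametrisation `gpt A` (with the junk value `1` where `A` is not
differentiable). -/
def gder (A : ℝ → ℝ) (x : ℝ) : ℂ := 1 + deriv A x * I

@[simp] lemma gpt_re (A : ℝ → ℝ) (x : ℝ) : (gpt A x).re = x := by simp [gpt]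
@[simp] lemma gpt_im (A : ℝ → ℝ) (x : ℝ) : (gpt A x).im = A x := by simp [gpt]

lemma gpt_continuous {A : ℝ → ℝ} (hA : Continuous A) : Continuous (gpt A) := by
  unfold gpt; fun_prop

lemma gpt_lipschitz {A : ℝ → ℝ} {L : ℝ≥0} (hA : LipschitzWith L A) :
    LipschitzWith (1 + L) (gpt A) := by
  refine LipschitzWith.of_dist_le_mul fun x y => ?_
  rw [dist_eq_norm, dist_eq_norm]
  have h1 : gpt A x - gpt A y = ((x - y : ℝ) : ℂ) + ((A x - A y : ℝ) : ℂ) * I := by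
    simp [gpt]; ring
  have h2 := hA.dist_le_mul x y
  rw [dist_eq_norm, dist_eq_norm] at h2
  rw [h1]
  refine (norm_add_le _ _).trans ?_
  rw [norm_mul, norm_I, mul_one, norm_real, norm_real]
  push_cast
  linarith

lemma gder_re (A : ℝ → ℝ) (x : ℝ) : (gder A x).re = 1 := by simp [gder]

lemma gder_ne (A : ℝ → ℝ) (x : ℝ) : gder A x ≠ 0 := fun h => by
  have := gder_re A x
  rw [h] at this; simp at this

lemma gder_measurable (A : ℝ → ℝ) : Measurable (gder A) := by
  unfold gder
  exact measurable_const.add ((Complex.measurable_ofReal.comp (measurable_deriv A)).mul_const _)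

lemma gder_bound {A : ℝ → ℝ} {L : ℝ≥0} (hA : LipschitzWith L A) (x : ℝ) : ‖gder A x‖ ≤ 1 + L := by
  unfold gder
  refine (norm_add_le _ _).trans ?_
  rw [norm_mul, norm_I, mul_one, norm_real, norm_one]
  have := norm_deriv_le_of_lipschitz hA (x₀ := x)
  linarith

lemma gder_intervalIntegrable {A : ℝ → ℝ} {L : ℝ≥0} (hA : LipschitzWith L A) (a b : ℝ) :
    IntervalIntegrable (gder A) volume a b :=
  (intervalIntegrable_const (c := (1 + L : ℝ))).mono_fun
    (gder_measurable A).aestronglyMeasurable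
    (ae_of_all _ fun x => (gder_bound hA x).trans (le_abs_self _))

/-- The fundamental theorem of calculus for Lipschitz functions with values in `ℂ`. -/
lemma lipschitz_ftc {f p : ℝ → ℂ} {C : ℝ≥0} {a b : ℝ} (hf : LipschitzOnWith C f (uIcc a b))
    (hp : IntervalIntegrable p volume a b) (hd : ∀ᵐ x, HasDerivAt f (p x) x) :
    ∫ x in a..b, p x = f b - f a := by
  have hre : LipschitzOnWith (1 * C) (fun x => (f x).re) (uIcc a b) :=
    (LipschitzWith.of_dist_le_mul (K := 1) (f := re) (fun x y => by
      rw [dist_eq_norm, dist_eq_norm, ← sub_re]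
      simpa using abs_re_le_norm (x - y))).comp_lipschitzOnWith hf
  have him : LipschitzOnWith (1 * C) (fun x => (f x).im) (uIcc a b) :=
    (LipschitzWith.of_dist_le_mul (K := 1) (f := im) (fun x y => by
      rw [dist_eq_norm, dist_eq_norm, ← sub_im]
      simpa using abs_im_le_norm (x - y))).comp_lipschitzOnWith hf
  have h1 := hre.absolutelyContinuousOnInterval.integral_deriv_eq_sub
  have h2 := him.absolutelyContinuousOnInterval.integral_deriv_eq_sub
  have e1 : ∫ x in a..b, deriv (fun x => (f x).re) x = ∫ x in a..b, reCLM (p x) := by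
    refine intervalIntegral.integral_congr_ae ?_
    filter_upwards [hd] with x hx _
    exact (reCLM.hasFDerivAt.comp_hasDerivAt x hx).deriv
  have e2 : ∫ x in a..b, deriv (fun x => (f x).im) x = ∫ x in a..b, imCLM (p x) := by
    refine intervalIntegral.integral_congr_ae ?_
    filter_upwards [hd] with x hx _
    exact (imCLM.hasFDerivAt.comp_hasDerivAt x hx).deriv
  rw [e1, reCLM.intervalIntegral_comp_comm hp] at h1
  rw [e2, imCLM.intervalIntegral_comp_comm hp] at h2
  exact Complex.ext (by simpa using h1) (by simpa using h2)

lemma gpt_hasDerivAt {A : ℝ → ℝ} {L : ℝ≥0} (hA : LipschitzWith L A) :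
    ∀ᵐ x, HasDerivAt (gpt A) (gder A x) x := by
  filter_upwards [hA.ae_differentiableAt_real] with x hx
  unfold gpt gder
  exact (HasDerivAt.ofReal_comp (hasDerivAt_id x)).add
    ((HasDerivAt.ofReal_comp hx.hasDerivAt).mul_const I)

lemma gpt_log_integrable {A : ℝ → ℝ} {L : ℝ≥0} (hA : LipschitzWith L A) {l : ℂ}
    (hs : ∀ x, gpt A x ≠ l) (a b : ℝ) :
    IntervalIntegrable (fun x => (gpt A x - l)⁻¹ * gder A x) volume a b := by
  refine (gder_intervalIntegrable hA a b).continuousOn_mul ?_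
  exact (((gpt_continuous hA.continuous).sub continuous_const).inv₀ fun x =>
    sub_ne_zero.2 (hs x)).continuousOn

lemma gpt_log_ftc {A : ℝ → ℝ} {L : ℝ≥0} (hA : LipschitzWith L A) {l ω : ℂ} (hω : ω ≠ 0)
    (hs : ∀ x, ω * (gpt A x - l) ∈ slitPlane) (a b : ℝ) :
    ∫ x in a..b, (gpt A x - l)⁻¹ * gder A x =
      log (ω * (gpt A b - l)) - log (ω * (gpt A a - l)) := by
  have hne : ∀ x, gpt A x - l ≠ 0 := fun x h => by
    have := slitPlane_ne_zero (hs x)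
    simp [h] at this
  have hcont : Continuous fun x => ω * (gpt A x - l) := by
    have := gpt_continuous hA.continuous
    fun_prop
  obtain ⟨C, hC⟩ := LocallyLipschitzOn.exists_lipschitzOnWith_of_compact (f := log)
    (isCompact_uIcc.image (s := uIcc a b) hcont) (by
      rintro _ ⟨x, -, rfl⟩
      obtain ⟨C, t, ht, hC⟩ := (contDiffAt_log (n := 1) (hs x)).exists_lipschitzOnWith
      exact ⟨C, t, mem_nhdsWithin_of_mem_nhds ht, hC⟩)
  have hlip : LipschitzWith (‖ω‖₊ * (1 + L)) fun x => ω * (gpt A x - l) := by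
    refine LipschitzWith.of_dist_le_mul fun x y => ?_
    have := (gpt_lipschitz hA).dist_le_mul x y
    rw [dist_eq_norm, ← mul_sub, norm_mul, sub_sub_sub_cancel_right, ← dist_eq_norm, NNReal.coe_mul,
      mul_assoc]
    gcongr
    simp
  refine lipschitz_ftc (f := fun x => log (ω * (gpt A x - l)))
    (hC.comp hlip.lipschitzOnWith (mapsTo_image _ _)) (gpt_log_integrable hA
    (fun x => sub_ne_zero.1 (hne x)) a b) ?_
  filter_upwards [gpt_hasDerivAt hA] with x hx
  have h := ((hx.sub_const l).const_mul ω).clog_real (hs x)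
  convert h using 1
  have := hne x
  field_simp

/-- The jump of the Cauchy integral over a piece of the graph: as `l` tends to the graph point from
below and `l'` from above, the difference tends to `-2πi`, with no restriction on the approach. -/
lemma main_term {A : ℝ → ℝ} {L : ℝ≥0} (hA : LipschitzWith L A) (x₀ : ℝ) {ε : ℝ} (hε : 0 < ε) :
    ∃ δ : ℝ, 0 < δ ∧ ∀ l l' : ℂ, l ∈ ball (gpt A x₀) δ → l' ∈ ball (gpt A x₀) δ →
      l.im < A l.re → A l'.re < l'.im →
      ‖(∫ x in (x₀ - 1)..(x₀ + 1), ((gpt A x - l)⁻¹ - (gpt A x - l')⁻¹) * gder A x)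
        + 2 * π * I‖ ≤ ε := by
  set w := gpt A x₀ with hw
  set u := gpt A (x₀ + 1) with hu
  set u' := gpt A (x₀ - 1) with hu'
  let Ψ : ℂ × ℂ → ℂ := fun p => (log (-I * (u - p.1)) - log (-I * (u' - p.1))) -
    (log (I * (u - p.2)) - log (I * (u' - p.2)))
  have hI1 : (I * (u - w)).im = 1 := by simp [hu, hw]
  have hI2 : (I * (u' - w)).im = -1 := by simp [hu', hw]
  have hI3 : (-I * (u - w)).im = -1 := by rw [neg_mul, neg_im, hI1]
  have hI4 : (-I * (u' - w)).im = 1 := by rw [neg_mul, neg_im, hI2, neg_neg]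
  have hval : Ψ (w, w) = -(2 * π * I) := by
    have l1 : log (-I * (u - w)) = log (I * (u - w)) - π * I := by
      rw [neg_mul, log, log, norm_neg, arg_neg_eq_arg_sub_pi_of_im_pos (by rw [hI1]; norm_num)]
      push_cast; ring
    have l2 : log (-I * (u' - w)) = log (I * (u' - w)) + π * I := by
      rw [neg_mul, log, log, norm_neg, arg_neg_eq_arg_add_pi_of_im_neg (by rw [hI2]; norm_num)]
      push_cast; ring
    simp only [Ψ]
    rw [l1, l2]; ring
  have hsl : ∀ {z : ℂ}, z.im ≠ 0 → z ∈ slitPlane := fun h => Or.inr h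
  have hcont : ContinuousAt Ψ (w, w) := by
    have c1 : ContinuousAt (fun p : ℂ × ℂ => log (-I * (u - p.1))) (w, w) :=
      ContinuousAt.clog (by fun_prop) (hsl (by simp only; rw [hI3]; norm_num))
    have c2 : ContinuousAt (fun p : ℂ × ℂ => log (-I * (u' - p.1))) (w, w) :=
      ContinuousAt.clog (by fun_prop) (hsl (by simp only; rw [hI4]; norm_num))
    have c3 : ContinuousAt (fun p : ℂ × ℂ => log (I * (u - p.2))) (w, w) :=
      ContinuousAt.clog (by fun_prop) (hsl (by simp only; rw [hI1]; norm_num))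
    have c4 : ContinuousAt (fun p : ℂ × ℂ => log (I * (u' - p.2))) (w, w) :=
      ContinuousAt.clog (by fun_prop) (hsl (by simp only; rw [hI2]; norm_num))
    exact (c1.sub c2).sub (c3.sub c4)
  obtain ⟨δ, hδ, hδΨ⟩ := Metric.continuousAt_iff.1 hcont ε hε
  refine ⟨δ, hδ, fun l l' hl hl' hlb hla => ?_⟩
  have hbelow : ∀ x, -I * (gpt A x - l) ∈ slitPlane := by
    intro x
    by_cases hx : x = l.re
    · left; simp [hx]; exact hlb
    · right; simp [gpt]; exact sub_ne_zero.2 (Ne.symm hx)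
  have habove : ∀ x, I * (gpt A x - l') ∈ slitPlane := by
    intro x
    by_cases hx : x = l'.re
    · left; simp [hx]; exact hla
    · right; simp [gpt]; exact sub_ne_zero.2 hx
  have hne : ∀ x, gpt A x ≠ l := fun x h => by
    have := slitPlane_ne_zero (hbelow x); simp [h] at this
  have hne' : ∀ x, gpt A x ≠ l' := fun x h => by
    have := slitPlane_ne_zero (habove x); simp [h] at this
  have hintg : (∫ x in (x₀ - 1)..(x₀ + 1), ((gpt A x - l)⁻¹ - (gpt A x - l')⁻¹) * gder A x)
      = Ψ (l, l') := by
    simp only [sub_mul]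
    rw [intervalIntegral.integral_sub (gpt_log_integrable hA hne _ _)
      (gpt_log_integrable hA hne' _ _), gpt_log_ftc hA (neg_ne_zero.2 I_ne_zero) hbelow,
      gpt_log_ftc hA I_ne_zero habove]
  have := @hδΨ (l, l') (by
    rw [Prod.dist_eq]; exact max_lt hl hl')
  rw [hval, dist_eq_norm, sub_neg_eq_add] at this
  rw [hintg]; exact this.le

/-! ### Cones at the graph and kernel estimates -/

/-- The relative size of a disc around a point of the lower cone that stays below the graph. -/
def kap (L : ℝ≥0) (α : ℝ) : ℝ := (1 - α * L) / ((1 + L) * (1 + α))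

lemma kap_pos {L : ℝ≥0} {α : ℝ} (hα : 0 < α) (hαL : α * L < 1) : 0 < kap L α := by
  unfold kap
  have : (0:ℝ) ≤ L := L.2
  apply div_pos <;> [linarith; positivity]

lemma kap_le_one {L : ℝ≥0} {α : ℝ} (hα : 0 < α) : kap L α ≤ 1 := by
  unfold kap
  have : (0:ℝ) ≤ L := L.2
  rw [div_le_one (by positivity)]
  nlinarith [mul_nonneg hα.le this]

lemma below_graph {A : ℝ → ℝ} {L : ℝ≥0} (hA : LipschitzWith L A) {α : ℝ} (hα : 0 < α)
    (hαL : α * L < 1) {x₀ : ℝ} {l z : ℂ} (hl : l ∈ coneDown (gpt A x₀) α)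
    (hz : ‖z - l‖ < kap L α * ‖l - gpt A x₀‖) : z.im < A z.re := by
  obtain ⟨h1, h2⟩ := hl
  simp only [coneAt, mem_ofPred_eq, gpt_re, gpt_im] at h1 h2
  have hL : (0:ℝ) ≤ L := L.2
  set h := A x₀ - l.im with hh
  have h0 : 0 < h := by linarith
  rw [abs_of_neg (by linarith : l.im - A x₀ < 0)] at h1
  have hd : ‖l - gpt A x₀‖ ≤ (1 + α) * h := by
    refine (norm_le_abs_re_add_abs_im _).trans ?_
    rw [sub_re, sub_im, gpt_re, gpt_im, abs_of_neg (by linarith : l.im - A x₀ < 0)]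
    linarith
  have hz' : (1 + L) * ‖z - l‖ < (1 - α * L) * h := by
    have : kap L α * ‖l - gpt A x₀‖ ≤ kap L α * ((1 + α) * h) := by
      gcongr; exact (kap_pos hα hαL).le
    have h3 : kap L α * ((1 + α) * h) = (1 - α * L) * h / (1 + L) := by
      unfold kap; field_simp
    have h4 : ‖z - l‖ < (1 - α * L) * h / (1 + L) := by linarith
    rw [lt_div_iff₀ (by positivity)] at h4
    linarith
  have hre : |z.re - l.re| ≤ ‖z - l‖ := by simpa using abs_re_le_norm (z - l)
  have him : |z.im - l.im| ≤ ‖z - l‖ := by simpa using abs_im_le_norm (z - l)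
  have hAl := hA.dist_le_mul x₀ z.re
  rw [Real.dist_eq, Real.dist_eq] at hAl
  have h5 : |x₀ - z.re| ≤ α * h + ‖z - l‖ := by
    have := abs_sub_le z.re l.re x₀
    rw [abs_sub_comm x₀]
    linarith
  have h6 : (L:ℝ) * |x₀ - z.re| ≤ L * (α * h + ‖z - l‖) := by gcongr
  have h7 := le_abs_self (A x₀ - A z.re)
  have h8 := le_abs_self (z.im - l.im)
  nlinarith

lemma above_graph {A : ℝ → ℝ} {L : ℝ≥0} (hA : LipschitzWith L A) {α : ℝ} (hα : 0 < α)
    (hαL : α * L < 1) {x₀ : ℝ} {l z : ℂ} (hl : l ∈ coneUp (gpt A x₀) α)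
    (hz : ‖z - l‖ < kap L α * ‖l - gpt A x₀‖) : A z.re < z.im := by
  have hstar : ∀ y : ℂ, gpt (fun x => -A x) x₀ = (starRingEnd ℂ) (gpt A x₀) := fun y => by
    apply Complex.ext <;> simp
  have := below_graph (A := fun x => -A x) (L := L) (x₀ := x₀) (l := (starRingEnd ℂ) l)
    (z := (starRingEnd ℂ) z) hA.neg hα hαL ⟨by
      have := hl.1
      simp only [coneAt, mem_ofPred_eq, gpt_re, gpt_im, conj_re, conj_im] at this ⊢
      rwa [neg_sub_neg, abs_sub_comm (A x₀)], by
      have := hl.2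
      simp only [gpt_im, conj_im] at this ⊢
      linarith⟩ (by
      rw [hstar 0, ← map_sub, ← map_sub, norm_conj, norm_conj]; exact hz)
  simp only [conj_re, conj_im] at this
  linarith

/-- Size of the difference of two Cauchy kernels with poles at distance `≈ d` from `w`. -/
lemma kernel_bound {w l₀ l l' z : ℂ} {d κ₀ κ₁ : ℝ} (hd : 0 < d) (hκ₀ : 0 < κ₀) (hκ₀' : κ₀ ≤ 1)
    (hκ₁ : 0 < κ₁) (hl₀ : ‖l₀ - w‖ = d) (hl : l ∈ ball l₀ (κ₀ * d / 2)) (hl' : ‖l' - w‖ ≤ d)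
    (hz : z ∉ ball l' (κ₁ * d)) :
    ‖(z - l)⁻¹ - (z - l')⁻¹‖ₑ ≤ (ball l₀ (κ₀ * d)).indicator (fun z => ‖(z - l)⁻¹‖ₑ) z +
      ENNReal.ofReal (3 * (1 + 3 / κ₀) * (1 + 1 / κ₁) + 4 / κ₁) *
        ENNReal.ofReal (d / (max d ‖z - w‖) ^ 2) := by
  rw [mem_ball, dist_eq_norm] at hl
  rw [mem_ball, dist_eq_norm, not_lt] at hz
  have hlw : ‖l - w‖ ≤ 3 / 2 * d := by
    have := norm_sub_le_norm_sub_add_norm_sub l l₀ w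
    nlinarith
  have hm : 0 < max d ‖z - w‖ := lt_max_of_lt_left hd
  have hzl' : 0 < ‖z - l'‖ := lt_of_lt_of_le (by positivity) hz
  by_cases hD : z ∈ ball l₀ (κ₀ * d)
  · rw [indicator_of_mem hD]
    refine enorm_sub_le.trans ?_
    gcongr
    rw [← ofReal_norm, ← ENNReal.ofReal_mul (by positivity), norm_inv]
    refine ENNReal.ofReal_le_ofReal ?_
    rw [mem_ball, dist_eq_norm] at hD
    have hzw : max d ‖z - w‖ ≤ 2 * d := max_le (by linarith) (by
      have := norm_sub_le_norm_sub_add_norm_sub z l₀ w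
      nlinarith)
    have h1 : ‖z - l'‖⁻¹ ≤ (κ₁ * d)⁻¹ := inv_anti₀ (by positivity) hz
    have h2 : (κ₁ * d)⁻¹ ≤ 4 / κ₁ * (d / (max d ‖z - w‖) ^ 2) := by
      have h3 : d / (2 * d) ^ 2 ≤ d / (max d ‖z - w‖) ^ 2 := by gcongr
      calc (κ₁ * d)⁻¹ = 4 / κ₁ * (d / (2 * d) ^ 2) := by field_simp; norm_num
        _ ≤ _ := by gcongr
    have h4 : 0 ≤ 3 * (1 + 3 / κ₀) * (1 + 1 / κ₁) * (d / (max d ‖z - w‖) ^ 2) := by positivity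
    linarith
  · rw [indicator_of_notMem hD, zero_add, ← ofReal_norm, ← ENNReal.ofReal_mul (by positivity)]
    refine ENNReal.ofReal_le_ofReal ?_
    rw [mem_ball, dist_eq_norm, not_lt] at hD
    have h1 : κ₀ * d / 2 ≤ ‖z - l‖ := by
      have := norm_sub_le_norm_sub_add_norm_sub z l l₀
      linarith
    have hzl0 : 0 < ‖z - l‖ := lt_of_lt_of_le (by positivity) h1
    have hk : (z - l)⁻¹ - (z - l')⁻¹ = (l - l') / ((z - l) * (z - l')) := by
      have a1 : z - l ≠ 0 := norm_pos_iff.1 hzl0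
      have a2 : z - l' ≠ 0 := norm_pos_iff.1 hzl'
      field_simp; ring
    have hll : ‖l - l'‖ ≤ 3 * d := by
      have := norm_sub_le_norm_sub_add_norm_sub l w l'
      rw [norm_sub_rev w l'] at this
      linarith
    have hdz : 3 / 2 * d ≤ 3 / κ₀ * ‖z - l‖ := by
      calc 3 / 2 * d = 3 / κ₀ * (κ₀ * d / 2) := by field_simp
        _ ≤ _ := by gcongr
    have hmz : max d ‖z - w‖ ≤ (1 + 3 / κ₀) * ‖z - l‖ := max_le (by nlinarith) (by
      have := norm_sub_le_norm_sub_add_norm_sub z l w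
      nlinarith)
    have hdz' : d ≤ 1 / κ₁ * ‖z - l'‖ := by
      calc d = 1 / κ₁ * (κ₁ * d) := by field_simp
        _ ≤ _ := by gcongr
    have hmz' : max d ‖z - w‖ ≤ (1 + 1 / κ₁) * ‖z - l'‖ := max_le (by nlinarith) (by
      have := norm_sub_le_norm_sub_add_norm_sub z l' w
      nlinarith)
    rw [hk, norm_div, norm_mul]
    have h5 : ‖l - l'‖ / (‖z - l‖ * ‖z - l'‖) ≤
        3 * (1 + 3 / κ₀) * (1 + 1 / κ₁) * (d / (max d ‖z - w‖) ^ 2) := by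
      rw [← mul_div_assoc, div_le_div_iff₀ (by positivity) (by positivity)]
      have h6 : (max d ‖z - w‖) ^ 2 ≤
          ((1 + 3 / κ₀) * ‖z - l‖) * ((1 + 1 / κ₁) * ‖z - l'‖) := by
        rw [sq]; exact mul_le_mul hmz hmz' hm.le (by positivity)
      calc ‖l - l'‖ * max d ‖z - w‖ ^ 2 ≤
          (3 * d) * (((1 + 3 / κ₀) * ‖z - l‖) * ((1 + 1 / κ₁) * ‖z - l'‖)) := by gcongr
        _ = _ := by ring
    have h7 : 0 ≤ 4 / κ₁ * (d / (max d ‖z - w‖) ^ 2) := by positivity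
    linarith

lemma dyadic_pointwise {w z : ℂ} {d : ℝ} (hd : 0 < d) :
    ENNReal.ofReal (d / (max d ‖z - w‖) ^ 2) ≤ ∑' n : ℕ,
      (closedBall w (2 ^ (n + 1) * d)).indicator
        (fun _ => ENNReal.ofReal ((1 / 4) ^ n / d)) z := by
  have hm : d ≤ max d ‖z - w‖ := le_max_left _ _
  obtain ⟨n, hn, hn'⟩ := exists_nat_pow_near (x := max d ‖z - w‖ / d) (y := 2)
    (by rwa [one_le_div hd]) (by norm_num)
  rw [le_div_iff₀ hd] at hn
  rw [div_lt_iff₀ hd] at hn'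
  refine le_trans ?_ (ENNReal.le_tsum n)
  rw [indicator_of_mem (by
    rw [mem_closedBall, dist_eq_norm]; exact (le_max_right _ _).trans hn'.le)]
  refine ENNReal.ofReal_le_ofReal ?_
  calc d / (max d ‖z - w‖) ^ 2 ≤ d / (2 ^ n * d) ^ 2 := by gcongr
    _ = (1 / 4) ^ n / d := by
      rw [mul_pow, ← pow_mul, mul_comm n, pow_mul, one_div, inv_pow]
      norm_num
      field_simp

/-- A finite measure of vanishing density at `w` has small Poisson-type averages near `w`. -/
lemma poisson_small {τ : Measure ℂ} [IsFiniteMeasure τ] {w : ℂ}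
    (h : ∀ e : ℝ, 0 < e → ∃ ρ : ℝ, 0 < ρ ∧ ∀ r, 0 < r → r ≤ ρ →
      τ (closedBall w r) ≤ ENNReal.ofReal (e * r)) {e : ℝ} (he : 0 < e) :
    ∃ δ : ℝ, 0 < δ ∧ ∀ d, 0 < d → d < δ →
      ∫⁻ z, ENNReal.ofReal (d / (max d ‖z - w‖) ^ 2) ∂τ ≤ ENNReal.ofReal e := by
  obtain ⟨ρ, hρ, hρτ⟩ := h (e / 8) (by linarith)
  set T := τ.real univ with hT
  have hT0 : 0 ≤ T := measureReal_nonneg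
  refine ⟨min ρ (e * ρ ^ 2 / (2 * (T + 1))), by positivity, fun d hd hdδ => ?_⟩
  have hdρ : d < ρ := hdδ.trans_le (min_le_left _ _)
  have hd2 : d < e * ρ ^ 2 / (2 * (T + 1)) := hdδ.trans_le (min_le_right _ _)
  have hin : ∫⁻ z in closedBall w ρ, ENNReal.ofReal (d / (max d ‖z - w‖) ^ 2) ∂τ ≤
      ENNReal.ofReal (e / 2) := by
    calc _ ≤ ∫⁻ z in closedBall w ρ, ∑' n : ℕ, (closedBall w (2 ^ (n + 1) * d)).indicator
          (fun _ => ENNReal.ofReal ((1 / 4) ^ n / d)) z ∂τ :=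
          lintegral_mono fun z => dyadic_pointwise hd
      _ = ∑' n : ℕ, ENNReal.ofReal ((1 / 4) ^ n / d) *
          (τ.restrict (closedBall w ρ)) (closedBall w (2 ^ (n + 1) * d)) := by
          rw [lintegral_tsum fun n => (measurable_const.indicator
            measurableSet_closedBall).aemeasurable]
          congr 1; ext n
          rw [lintegral_indicator measurableSet_closedBall, setLIntegral_const]
      _ ≤ ∑' n : ℕ, ENNReal.ofReal ((e / 4) * (1 / 2) ^ n) := by
          refine ENNReal.tsum_le_tsum fun n => ?_
          have hle : (τ.restrict (closedBall w ρ)) (closedBall w (2 ^ (n + 1) * d)) ≤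
              ENNReal.ofReal (e / 8 * (2 ^ (n + 1) * d)) := by
            by_cases hc : 2 ^ (n + 1) * d ≤ ρ
            · exact (Measure.restrict_apply_le _ _).trans (hρτ _ (by positivity) hc)
            · rw [Measure.restrict_apply measurableSet_closedBall]
              refine (measure_mono inter_subset_right).trans ((hρτ ρ hρ le_rfl).trans ?_)
              refine ENNReal.ofReal_le_ofReal ?_
              push Not at hc
              gcongr
          calc _ ≤ ENNReal.ofReal ((1 / 4) ^ n / d) *
              ENNReal.ofReal (e / 8 * (2 ^ (n + 1) * d)) := by gcongr
            _ = _ := by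
              rw [← ENNReal.ofReal_mul (by positivity)]
              congr 1
              have : (1 / 4 : ℝ) ^ n = (1 / 2) ^ n * (1 / 2) ^ n := by
                rw [← mul_pow]; norm_num
              have h2 : (1 / 2 : ℝ) ^ n * 2 ^ n = 1 := by rw [← mul_pow]; norm_num
              rw [this, pow_succ]
              field_simp
              linear_combination 8 * h2
      _ = ENNReal.ofReal (e / 2) := by
          rw [← ENNReal.ofReal_tsum_of_nonneg (fun n => by positivity)
            (summable_geometric_two.mul_left _), tsum_mul_left, tsum_geometric_two]
          congr 1; ring
  have hout : ∫⁻ z in (closedBall w ρ)ᶜ, ENNReal.ofReal (d / (max d ‖z - w‖) ^ 2) ∂τ ≤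
      ENNReal.ofReal (e / 2) := by
    calc _ ≤ ∫⁻ z in (closedBall w ρ)ᶜ, ENNReal.ofReal (d / ρ ^ 2) ∂τ := by
          refine setLIntegral_mono' measurableSet_closedBall.compl fun z hz => ?_
          refine ENNReal.ofReal_le_ofReal ?_
          rw [mem_compl_iff, mem_closedBall, dist_eq_norm, not_le] at hz
          have : ρ ≤ max d ‖z - w‖ := hz.le.trans (le_max_right _ _)
          gcongr
      _ ≤ ENNReal.ofReal (d / ρ ^ 2) * ENNReal.ofReal T := by
          rw [setLIntegral_const, hT, ofReal_measureReal]
          gcongr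
          exact subset_univ _
      _ ≤ ENNReal.ofReal (e / 2) := by
          rw [← ENNReal.ofReal_mul (by positivity)]
          refine ENNReal.ofReal_le_ofReal ?_
          rw [lt_div_iff₀ (by positivity)] at hd2
          rw [div_mul_eq_mul_div, div_le_div_iff₀ (by positivity) (by norm_num)]
          nlinarith
  rw [← lintegral_add_compl _ (measurableSet_closedBall (x := w) (ε := ρ))]
  refine (add_le_add hin hout).trans ?_
  rw [← ENNReal.ofReal_add (by linarith) (by linarith)]
  exact ENNReal.ofReal_le_ofReal (by linarith)

/-! ### The Cauchy transform near the graph -/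

lemma cauchy_prod_integrable {ν : Measure ℂ} [IsFiniteMeasure ν] {g : ℂ → ℂ} (hg : Integrable g ν)
    (x : ℂ) {R : ℝ} (hR : 0 < R) :
    Integrable (fun p : ℂ × ℂ => (p.1 - p.2)⁻¹ * g p.1)
      (ν.prod (volume.restrict (ball x R))) := by
  have hm : AEStronglyMeasurable (fun p : ℂ × ℂ => (p.1 - p.2)⁻¹ * g p.1)
      (ν.prod (volume.restrict (ball x R))) :=
    kernel_measurable.aestronglyMeasurable.mul hg.1.comp_fst
  refine ⟨hm, ?_⟩
  rw [hasFiniteIntegral_iff_enorm, lintegral_prod _ hm.enorm]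
  calc ∫⁻ z, (∫⁻ l in ball x R, ‖(z - l)⁻¹ * g z‖ₑ) ∂ν
      ≤ ∫⁻ z, ENNReal.ofReal (3 * π * R) * ‖g z‖ₑ ∂ν := by
        refine lintegral_mono fun z => ?_
        simp only [enorm_mul]
        rw [lintegral_mul_const _ (by fun_prop)]
        gcongr
        exact pot_le z x hR
    _ < ∞ := by
        rw [lintegral_const_mul'' _ hg.1.enorm]
        exact ENNReal.mul_lt_top (by simp) hg.2

lemma cauchy_ae_integrable {ν : Measure ℂ} [IsFiniteMeasure ν] {g : ℂ → ℂ} (hg : Integrable g ν)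
    (x : ℂ) {R : ℝ} (hR : 0 < R) :
    ∀ᵐ l, l ∈ ball x R → Integrable (fun z => (z - l)⁻¹ * g z) ν := by
  rw [← ae_restrict_iff' measurableSet_ball]
  exact (cauchy_prod_integrable hg x hR).prod_left_ae

lemma cauchy_integrableOn {ν : Measure ℂ} [IsFiniteMeasure ν] {g : ℂ → ℂ} (hg : Integrable g ν)
    (x : ℂ) {R : ℝ} (hR : 0 < R) :
    IntegrableOn (fun l => ∫ z, (z - l)⁻¹ * g z ∂ν) (ball x R) :=
  (cauchy_prod_integrable hg x hR).integral_prod_right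

/-- The image of Lebesgue measure on the line under `gpt A`, a measure on the graph of `A` that is
comparable to arclength. -/
def lamG (A : ℝ → ℝ) : Measure ℂ := volume.map (gpt A)

lemma lamG_apply {A : ℝ → ℝ} (hA : Continuous A) {s : Set ℂ} (hs : MeasurableSet s) :
    lamG A s = volume (gpt A ⁻¹' s) := Measure.map_apply (gpt_continuous hA).measurable hs

lemma lamG_closedBall_le {A : ℝ → ℝ} (hA : Continuous A) (w : ℂ) (r : ℝ) :
    lamG A (closedBall w r) ≤ ENNReal.ofReal (2 * r) := by
  rw [lamG_apply hA measurableSet_closedBall]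
  calc volume (gpt A ⁻¹' closedBall w r) ≤ volume (Icc (w.re - r) (w.re + r)) := by
        refine measure_mono fun x hx => ?_
        rw [mem_preimage, mem_closedBall, dist_eq_norm] at hx
        have := (abs_re_le_norm _).trans hx
        rw [sub_re, gpt_re, abs_le] at this
        exact ⟨by linarith, by linarith⟩
    _ = _ := by rw [Real.volume_Icc]; congr 1; ring

lemma lamG_locFin {A : ℝ → ℝ} (hA : Continuous A) : IsLocallyFiniteMeasure (lamG A) :=
  ⟨fun w => ⟨closedBall w 1, closedBall_mem_nhds w one_pos,
    (lamG_closedBall_le hA w 1).trans_lt ENNReal.ofReal_lt_top⟩⟩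

lemma lamG_null {A : ℝ → ℝ} (hA : Continuous A) {s : Set ℂ} (hs : MeasurableSet s)
    (h : ∀ x, gpt A x ∉ s) : lamG A s = 0 := by
  rw [lamG_apply hA hs]
  convert measure_empty (μ := (volume : Measure ℝ))
  ext x; simpa using h x

/-- The function equal to `b` times the tangent over `(x₀ - 1, x₀ + 1]` and vanishing elsewhere. -/
def stripF (A : ℝ → ℝ) (x₀ : ℝ) (b : ℂ) : ℂ → ℂ :=
  {z : ℂ | z.re ∈ Ioc (x₀ - 1) (x₀ + 1)}.indicator fun z => b * gder A z.re

lemma measurableSet_strip (x₀ : ℝ) : MeasurableSet {z : ℂ | z.re ∈ Ioc (x₀ - 1) (x₀ + 1)} :=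
  measurable_re measurableSet_Ioc

lemma stripF_measurable (A : ℝ → ℝ) (x₀ : ℝ) (b : ℂ) : Measurable (stripF A x₀ b) :=
  (measurable_const.mul ((gder_measurable A).comp measurable_re)).indicator (measurableSet_strip x₀)

/-- The total variation of the difference between `g μ` and `b dz` on the piece of the graph over
`(x₀ - 1, x₀ + 1]`. -/
def errM (A : ℝ → ℝ) (μ : Measure ℂ) (g : ℂ → ℂ) (x₀ : ℝ) (b : ℂ) : Measure ℂ :=
  (μ.singularPart (lamG A)).withDensity (fun z => ‖g z‖ₑ) +
    (lamG A).withDensity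
      (fun z => ‖(μ.rnDeriv (lamG A) z).toReal • g z - stripF A x₀ b z‖ₑ)

lemma mu_decomp {A : ℝ → ℝ} {L : ℝ≥0} (hA : LipschitzWith L A) {μ : Measure ℂ} [IsFiniteMeasure μ] :
    μ = μ.singularPart (lamG A) + (lamG A).withDensity (μ.rnDeriv (lamG A)) := by
  have := lamG_locFin hA.continuous
  exact Measure.haveLebesgueDecomposition_add μ (lamG A)

lemma integrable_density {A : ℝ → ℝ} {L : ℝ≥0} (hA : LipschitzWith L A) {μ : Measure ℂ} [IsFiniteMeasure μ]
    {f : ℂ → ℂ} (hf : Integrable f μ) :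
    Integrable (fun z => (μ.rnDeriv (lamG A) z).toReal • f z) (lamG A) := by
  have := lamG_locFin hA.continuous
  rw [← integrable_withDensity_iff_integrable_smul' (Measure.measurable_rnDeriv _ _)
    (Measure.rnDeriv_lt_top μ (lamG A))]
  exact hf.mono_measure (Measure.withDensity_rnDeriv_le _ _)

lemma stripF_mul_integrable {A : ℝ → ℝ} {L : ℝ≥0} (hA : LipschitzWith L A) (x₀ : ℝ) (b : ℂ) {k : ℂ → ℂ}
    (hk : Measurable k)
    (hi : IntervalIntegrable (fun x => k (gpt A x) * gder A x) volume (x₀ - 1) (x₀ + 1)) :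
    Integrable (fun z => k z * stripF A x₀ b z) (lamG A) ∧
    ∫ z, k z * stripF A x₀ b z ∂(lamG A) =
      b * ∫ x in (x₀ - 1)..(x₀ + 1), k (gpt A x) * gder A x := by
  have hgp := (gpt_continuous hA.continuous).measurable
  have hm : Measurable fun z => k z * stripF A x₀ b z := hk.mul (stripF_measurable A x₀ b)
  have heq : ((fun z => k z * stripF A x₀ b z) ∘ gpt A) =
      (Ioc (x₀ - 1) (x₀ + 1)).indicator (fun x => b * (k (gpt A x) * gder A x)) := by
    ext x
    simp only [Function.comp, stripF, indicator, mem_ofPred_eq, gpt_re]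
    split_ifs <;> ring
  have hle : x₀ - 1 ≤ x₀ + 1 := by linarith
  constructor
  · unfold lamG
    rw [integrable_map_measure hm.aestronglyMeasurable hgp.aemeasurable, heq,
      integrable_indicator_iff measurableSet_Ioc]
    exact ((intervalIntegrable_iff_integrableOn_Ioc_of_le hle).1 hi).const_mul b
  · unfold lamG
    rw [integral_map hgp.aemeasurable hm.aestronglyMeasurable]
    have : ∀ x, k (gpt A x) * stripF A x₀ b (gpt A x) = (Ioc (x₀ - 1) (x₀ + 1)).indicator
        (fun x => b * (k (gpt A x) * gder A x)) x := fun x => congrFun heq x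
    simp only [this]
    rw [integral_indicator measurableSet_Ioc, integral_const_mul,
      intervalIntegral.integral_of_le hle]

lemma errM_finite {A : ℝ → ℝ} {L : ℝ≥0} (hA : LipschitzWith L A) {μ : Measure ℂ} [IsFiniteMeasure μ]
    {g : ℂ → ℂ} (hgi : Integrable g μ) (x₀ : ℝ) (b : ℂ) : IsFiniteMeasure (errM A μ g x₀ b) := by
  have h1 : ∫⁻ z, ‖g z‖ₑ ∂(μ.singularPart (lamG A)) ≠ ∞ :=
    ((lintegral_mono' (Measure.singularPart_le _ _) le_rfl).trans_lt hgi.2).ne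
  have h2 : Integrable (fun z => (1:ℂ) * stripF A x₀ b z) (lamG A) :=
    (stripF_mul_integrable hA x₀ b measurable_const (by
      simpa using gder_intervalIntegrable hA _ _)).1
  simp only [one_mul] at h2
  have h3 := ((integrable_density hA hgi).sub h2).2.ne
  have i1 := isFiniteMeasure_withDensity h1
  have i2 := isFiniteMeasure_withDensity h3
  unfold errM
  infer_instance

/-- Differences of Cauchy integrals of `g μ` are, up to the error measure, those of `b dz`. -/
lemma cauchy_split {A : ℝ → ℝ} {L : ℝ≥0} (hA : LipschitzWith L A) {μ : Measure ℂ} [IsFiniteMeasure μ]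
    {g : ℂ → ℂ} (hgm : Measurable g) (x₀ : ℝ) (b : ℂ)
    {l l' : ℂ} (hl : ∀ x, gpt A x ≠ l) (hl' : ∀ x, gpt A x ≠ l')
    (h1 : Integrable (fun z => (z - l)⁻¹ * g z) μ) (h2 : Integrable (fun z => (z - l')⁻¹ * g z) μ) :
    ‖(∫ z, (z - l)⁻¹ * g z ∂μ) - (∫ z, (z - l')⁻¹ * g z ∂μ) -
      b * ∫ x in (x₀ - 1)..(x₀ + 1), ((gpt A x - l)⁻¹ - (gpt A x - l')⁻¹) * gder A x‖ₑ ≤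
      ∫⁻ z, ‖(z - l)⁻¹ - (z - l')⁻¹‖ₑ ∂(errM A μ g x₀ b) := by
  have := lamG_locFin hA.continuous
  set k : ℂ → ℂ := fun z => (z - l)⁻¹ - (z - l')⁻¹ with hk
  have hkm : Measurable k := by fun_prop
  have hki : Integrable (fun z => k z * g z) μ := by
    simp only [hk, sub_mul]; exact h1.sub h2
  have hintg : IntervalIntegrable (fun x => k (gpt A x) * gder A x) volume (x₀ - 1) (x₀ + 1) := by
    simp only [hk, sub_mul]
    exact (gpt_log_integrable hA hl _ _).sub (gpt_log_integrable hA hl' _ _)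
  obtain ⟨hs1, hs2⟩ := stripF_mul_integrable hA x₀ b hkm hintg
  have hd1 := integrable_density hA hki
  set ρ := fun z => (μ.rnDeriv (lamG A) z).toReal with hρ
  have e0 : (∫ z, (z - l)⁻¹ * g z ∂μ) - (∫ z, (z - l')⁻¹ * g z ∂μ) = ∫ z, k z * g z ∂μ := by
    rw [← integral_sub h1 h2]; simp only [hk, sub_mul]
  have e1 : ∫ z, k z * g z ∂μ = ∫ z, k z * g z ∂(μ.singularPart (lamG A)) +
      ∫ z, ρ z • (k z * g z) ∂(lamG A) := by
    conv_lhs => rw [mu_decomp (μ := μ) hA]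
    rw [integral_add_measure (hki.mono_measure (Measure.singularPart_le _ _))
      (hki.mono_measure (Measure.withDensity_rnDeriv_le _ _)),
      integral_withDensity_eq_integral_toReal_smul (Measure.measurable_rnDeriv _ _)
      (Measure.rnDeriv_lt_top μ (lamG A))]
  have e2 : (∫ z, (z - l)⁻¹ * g z ∂μ) - (∫ z, (z - l')⁻¹ * g z ∂μ) -
      b * ∫ x in (x₀ - 1)..(x₀ + 1), k (gpt A x) * gder A x =
      ∫ z, k z * g z ∂(μ.singularPart (lamG A)) +
      ∫ z, k z * (ρ z • g z - stripF A x₀ b z) ∂(lamG A) := by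
    rw [e0, e1, ← hs2, add_sub_assoc, ← integral_sub hd1 hs1]
    congr 2; ext z
    simp only [real_smul]; ring
  have e3 : ∫⁻ z, ‖k z‖ₑ ∂(errM A μ g x₀ b) =
      ∫⁻ z, ‖k z * g z‖ₑ ∂(μ.singularPart (lamG A)) +
      ∫⁻ z, ‖k z * (ρ z • g z - stripF A x₀ b z)‖ₑ ∂(lamG A) := by
    have hm2 : Measurable fun z => ‖ρ z • g z - stripF A x₀ b z‖ₑ :=
      (((Measure.measurable_rnDeriv _ _).ennreal_toReal.smul hgm).sub
        (stripF_measurable A x₀ b)).enorm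
    unfold errM
    rw [lintegral_add_measure, lintegral_withDensity_eq_lintegral_mul _ hgm.enorm hkm.enorm,
      lintegral_withDensity_eq_lintegral_mul _ hm2 hkm.enorm]
    congr 2
    · ext z; rw [Pi.mul_apply, enorm_mul, mul_comm]
    · ext z; rw [Pi.mul_apply, enorm_mul, mul_comm]
  change ‖_ - _ - b * ∫ x in (x₀ - 1)..(x₀ + 1), k (gpt A x) * gder A x‖ₑ ≤
    ∫⁻ z, ‖k z‖ₑ ∂(errM A μ g x₀ b)
  rw [e2, e3]
  refine (enorm_add_le _ _).trans ?_
  gcongr <;> exact enorm_integral_le_lintegral_enorm _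

lemma lintegral_le_errM {A : ℝ → ℝ} {L : ℝ≥0} (hA : LipschitzWith L A) {μ : Measure ℂ} [IsFiniteMeasure μ]
    {g : ℂ → ℂ} (x₀ : ℝ) (b : ℂ) {D : Set ℂ} (hD : MeasurableSet D) (h0 : lamG A D = 0) :
    ∫⁻ z in D, ‖g z‖ₑ ∂μ ≤ errM A μ g x₀ b D := by
  have := lamG_locFin hA.continuous
  have hz : ((lamG A).withDensity (μ.rnDeriv (lamG A))).restrict D = 0 :=
    Measure.restrict_eq_zero.2 (withDensity_absolutelyContinuous _ _ h0)
  have : μ.restrict D = (μ.singularPart (lamG A)).restrict D := by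
    conv_lhs => rw [mu_decomp (μ := μ) hA]
    rw [Measure.restrict_add, hz, add_zero]
  rw [this, ← withDensity_apply _ hD]
  exact le_self_add

lemma errM_null {A : ℝ → ℝ} {μ : Measure ℂ} {g : ℂ → ℂ} (x₀ : ℝ) (b : ℂ)
    {D : Set ℂ} (h : μ D = 0) (h0 : lamG A D = 0) : errM A μ g x₀ b D = 0 := by
  unfold errM
  rw [Measure.add_apply, withDensity_absolutelyContinuous _ _ h0,
    withDensity_absolutelyContinuous _ _
      (Measure.absolutelyContinuous_of_le (Measure.singularPart_le _ _) h), add_zero]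

/-! ### Near-constancy of the Cauchy transform in the lower cone -/

/-- At a point of the graph where `g μ` has a nonzero density `b` with respect to `dz`, and whose
upper cone is outer, the Cauchy transform is nearly `-2πi b` on discs in the lower cone: it vanishes
at comparable points of the upper cone outside `K`, and `main_term` gives the jump. -/
lemma cone_good {A : ℝ → ℝ} {L : ℝ≥0} (hA : LipschitzWith L A) {μ : Measure ℂ} [IsFiniteMeasure μ]
    {g : ℂ → ℂ} (hgm : Measurable g) (hgi : Integrable g μ) {x₀ : ℝ} {b : ℂ} (hb : b ≠ 0)
    {K : Set ℂ} (hμ : μ Kᶜ = 0)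
    (hann : ∀ r ∈ RatOn K, ∫ z, r z * g z ∂μ = 0)
    (hri : ∀ r ∈ RatOn K, Integrable (fun z => r z * g z) μ)
    {α : ℝ} (hα : 0 < α) (hαL : α * L < 1) (hout : upperOuter K (gpt A x₀) α)
    (hτ : ∀ e : ℝ, 0 < e → ∃ ρ : ℝ, 0 < ρ ∧ ∀ r, 0 < r → r ≤ ρ →
      errM A μ g x₀ b (closedBall (gpt A x₀) r) ≤ ENNReal.ofReal (e * r))
    {ε : ℝ} (hε : 0 < ε) :
    ∃ δ : ℝ, 0 < δ ∧ ∀ l₀ ∈ coneDownT δ (gpt A x₀) α, ∃ σ,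
      Good l₀ (kap L α * ‖l₀ - gpt A x₀‖ / 2) ε
        (fun l => (∫ z, (z - l)⁻¹ * g z ∂μ) / (-(2 * π * I) * b)) σ := by
  obtain ⟨δl, εl, hδl, hεl, hhole⟩ := hout
  have hfin := errM_finite hA hgi x₀ b
  set w := gpt A x₀ with hw
  set τ := errM A μ g x₀ b with hτdef
  set κ₀ := kap L α with hκ₀def
  have hκ₀ : 0 < κ₀ := kap_pos hα hαL
  have hκ₀' : κ₀ ≤ 1 := kap_le_one hα
  set κ₁ := κ₀ * min εl 1 with hκ₁def
  have hm0 : 0 < min εl 1 := lt_min hεl one_pos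
  have hκ₁ : 0 < κ₁ := mul_pos hκ₀ hm0
  set v : ℂ := -(2 * π * I) * b with hv
  have hv0 : v ≠ 0 := by simp [hv, hb, Real.pi_ne_zero]
  set V := ‖v‖ with hVdef
  have hV : 0 < V := norm_pos_iff.2 hv0
  have hVb : V = 2 * π * ‖b‖ := by
    rw [hVdef, hv]; simp [abs_of_pos Real.pi_pos]
  set C' := 3 * (1 + 3 / κ₀) * (1 + 1 / κ₁) + 4 / κ₁ with hC'
  have hC'0 : 0 < C' := by positivity
  have hπ := Real.pi_pos
  obtain ⟨δ₁, hδ₁, hmain⟩ := main_term hA x₀ (ε := π * ε) (by positivity)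
  obtain ⟨δ₂, hδ₂, hpois⟩ := poisson_small (τ := τ) (w := w) hτ (e := ε * V / (2 * C'))
    (by positivity)
  obtain ⟨ρ, hρ, hρτ⟩ := hτ (ε * κ₀ * V / (4 * π)) (by positivity)
  refine ⟨min (min δl (δ₁ / 2)) (min δ₂ (ρ / 2)), by positivity, ?_⟩
  rintro l₀ ⟨hl₀b, hl₀c⟩
  set d := ‖l₀ - w‖ with hd
  rw [mem_ball, dist_eq_norm, ← hd] at hl₀b
  simp only [lt_min_iff] at hl₀b
  obtain ⟨⟨hdl, hd1⟩, hd2, hdρ⟩ := hl₀b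
  have hd0 : 0 < d := by
    rw [hd, norm_pos_iff, sub_ne_zero]
    rintro rfl
    exact lt_irrefl _ hl₀c.2
  obtain ⟨l', hl'⟩ := hhole d hd0 hdl
  have hl'mem : l' ∈ Kᶜ ∩ coneUpT d w α := hl' (mem_ball_self (by positivity))
  have hl'd : ‖l' - w‖ < d := by
    have := hl'mem.2.1; rwa [mem_ball, dist_eq_norm] at this
  have hl'far : εl * d ≤ ‖l' - w‖ := by
    by_contra! hcon
    have : w ∈ ball l' (εl * d) := by rw [mem_ball, dist_eq_norm, norm_sub_rev]; exact hcon
    exact lt_irrefl _ (hl' this).2.2.2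
  have habove : ∀ z ∈ ball l' (κ₁ * d), A z.re < z.im := by
    intro z hz
    rw [mem_ball, dist_eq_norm] at hz
    refine above_graph hA hα hαL hl'mem.2.2 (hz.trans_le ?_)
    rw [hκ₁def, mul_assoc]
    gcongr
    exact le_trans (by gcongr; exact min_le_left _ _) hl'far
  have hballK : ball l' (κ₁ * d) ⊆ Kᶜ := fun z hz => (hl' (ball_subset_ball (by
    have : κ₁ ≤ εl := by
      calc κ₁ ≤ 1 * min εl 1 := by rw [hκ₁def]; gcongr
        _ ≤ εl := by rw [one_mul]; exact min_le_left _ _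
    gcongr) hz)).1
  have hτhole : ∀ᵐ z ∂τ, z ∉ ball l' (κ₁ * d) := by
    rw [ae_iff]
    simp only [not_not]
    refine errM_null x₀ b (measure_mono_null hballK hμ) ?_
    refine lamG_null hA.continuous measurableSet_ball fun x hx => ?_
    have := habove _ hx
    simp at this
  set D := ball l₀ (κ₀ * d) with hDdef
  have hbelow : ∀ z ∈ D, z.im < A z.re := by
    intro z hz
    rw [mem_ball, dist_eq_norm] at hz
    exact below_graph hA hα hαL hl₀c hz
  have hlamD : lamG A D = 0 := lamG_null hA.continuous measurableSet_ball fun x hx => by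
    have := hbelow _ hx
    simp at this
  have hDsub : D ⊆ closedBall w (2 * d) := fun z hz => by
    rw [mem_ball, dist_eq_norm] at hz
    rw [mem_closedBall, dist_eq_norm]
    have := norm_sub_le_norm_sub_add_norm_sub z l₀ w
    nlinarith
  have hτD : τ D ≤ ENNReal.ofReal (ε * κ₀ * V / (4 * π) * (2 * d)) :=
    (measure_mono hDsub).trans (hρτ (2 * d) (by linarith) (by linarith))
  set R := κ₀ * d / 2 with hR
  have hR0 : 0 < R := by positivity
  have hBD : ball l₀ R ⊆ D := ball_subset_ball (by rw [hR]; nlinarith)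
  have hVnn : ‖v‖ₑ⁻¹ = ENNReal.ofReal V⁻¹ := by
    rw [← enorm_inv hv0, ← ofReal_norm, norm_inv]
  have heR : V⁻¹ * (π * (ε * κ₀ * V / (4 * π) * (2 * d))) = ε * R := by
    rw [hR]; field_simp; norm_num
  refine ⟨ENNReal.ofReal V⁻¹ • τ.restrict D, hR0, hε.le, ?_, ?_, ?_, ?_⟩
  · rw [Measure.smul_apply, Measure.restrict_apply_univ, smul_eq_mul]
    refine (mul_le_mul_right hτD _).trans ?_
    rw [← ENNReal.ofReal_mul (by positivity)]
    refine ENNReal.ofReal_le_ofReal ?_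
    rw [← heR]
    have h0 : 0 < ε * κ₀ * V / (4 * π) * (2 * d) := by positivity
    have h1 : ε * κ₀ * V / (4 * π) * (2 * d) ≤ π * (ε * κ₀ * V / (4 * π) * (2 * d)) := by
      have := mul_le_mul_of_nonneg_right (show (1 : ℝ) ≤ π by linarith [Real.pi_gt_three]) h0.le
      rwa [one_mul] at this
    exact mul_le_mul_of_nonneg_left h1 (inv_nonneg.2 hV.le)
  · exact (cauchy_integrableOn hgi l₀ hR0).div_const v
  · intro φ hφ hφs hφt M hM
    have hM0 : 0 ≤ M := (norm_nonneg _).trans (hM 0)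
    have e1 : ∫ l, dbar φ l * ((∫ z, (z - l)⁻¹ * g z ∂μ) / v) = (π * ∫ z, φ z * g z ∂μ) / v := by
      simp only [← mul_div_assoc]
      rw [integral_div, dbar_cauchy hgi hφ hφs]
    have e2 : ‖∫ z, φ z * g z ∂μ‖ₑ ≤
        ENNReal.ofReal (M * (ε * κ₀ * V / (4 * π) * (2 * d))) := by
      calc ‖∫ z, φ z * g z ∂μ‖ₑ ≤ ∫⁻ z, ‖φ z * g z‖ₑ ∂μ := enorm_integral_le_lintegral_enorm _
        _ ≤ ∫⁻ z, D.indicator (fun z => ENNReal.ofReal M * ‖g z‖ₑ) z ∂μ := by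
            refine lintegral_mono fun z => ?_
            by_cases hz : z ∈ D
            · rw [indicator_of_mem hz, enorm_mul]
              gcongr
              rw [← ofReal_norm]; exact ENNReal.ofReal_le_ofReal (hM z)
            · have : φ z = 0 := image_eq_zero_of_notMem_tsupport fun h => hz (hBD (hφt h))
              simp [this]
        _ = ENNReal.ofReal M * ∫⁻ z in D, ‖g z‖ₑ ∂μ := by
            rw [lintegral_indicator measurableSet_ball, lintegral_const_mul _ hgm.enorm]
        _ ≤ ENNReal.ofReal M * ENNReal.ofReal (ε * κ₀ * V / (4 * π) * (2 * d)) := by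
            gcongr
            exact (lintegral_le_errM hA x₀ b measurableSet_ball hlamD).trans hτD
        _ = _ := by rw [← ENNReal.ofReal_mul hM0]
    rw [← ofReal_norm, ENNReal.ofReal_le_ofReal_iff (by positivity)] at e2
    rw [e1, norm_div, norm_mul, norm_real, Real.norm_of_nonneg hπ.le, ← hVdef, ← heR]
    calc π * ‖∫ z, φ z * g z ∂μ‖ / V ≤ π * (M * (ε * κ₀ * V / (4 * π) * (2 * d))) / V := by
          gcongr
      _ = _ := by ring
  · filter_upwards [cauchy_ae_integrable hgi l₀ hR0] with l hl hlb
    have hi1 := hl hlb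
    have hlD := hBD hlb
    have hl'K : l' ∉ K := hl'mem.1
    have hi2 := hri _ (ratOn_inv_sub hl'K)
    have hF' := hann _ (ratOn_inv_sub hl'K)
    have hl'a : A l'.re < l'.im := habove l' (mem_ball_self (by positivity))
    have hlbel := hbelow l hlD
    have hng : ∀ x, gpt A x ≠ l := fun x h => by
      rw [← h] at hlbel; simp at hlbel
    have hng' : ∀ x, gpt A x ≠ l' := fun x h => by
      rw [← h] at hl'a; simp at hl'a
    have hsplit := cauchy_split hA hgm x₀ b hng hng' hi1 hi2
    rw [hF', sub_zero] at hsplit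
    have hlw : ‖l - w‖ < δ₁ := by
      rw [mem_ball, dist_eq_norm] at hlb
      have := norm_sub_le_norm_sub_add_norm_sub l l₀ w
      have : R ≤ d := by rw [hR]; nlinarith
      linarith
    have hm := hmain l l' (by rwa [mem_ball, dist_eq_norm])
      (by rw [mem_ball, dist_eq_norm]; linarith) hlbel hl'a
    set J := ∫ x in (x₀ - 1)..(x₀ + 1), ((gpt A x - l)⁻¹ - (gpt A x - l')⁻¹) * gder A x with hJ
    set F := ∫ z, (z - l)⁻¹ * g z ∂μ with hFdef
    have hkb : ∫⁻ z, ‖(z - l)⁻¹ - (z - l')⁻¹‖ₑ ∂τ ≤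
        (∫⁻ z in D, ‖(z - l)⁻¹‖ₑ ∂τ) + ENNReal.ofReal (ε * V / 2) := by
      calc _ ≤ ∫⁻ z, (D.indicator (fun z => ‖(z - l)⁻¹‖ₑ) z + ENNReal.ofReal C' *
            ENNReal.ofReal (d / (max d ‖z - w‖) ^ 2)) ∂τ := by
            refine lintegral_mono_ae ?_
            filter_upwards [hτhole] with z hz
            exact kernel_bound hd0 hκ₀ hκ₀' hκ₁ rfl hlb hl'd.le hz
        _ = (∫⁻ z in D, ‖(z - l)⁻¹‖ₑ ∂τ) + ENNReal.ofReal C' *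
            ∫⁻ z, ENNReal.ofReal (d / (max d ‖z - w‖) ^ 2) ∂τ := by
            rw [lintegral_add_left (Measurable.indicator (by fun_prop) measurableSet_ball),
              lintegral_indicator measurableSet_ball, lintegral_const_mul' _ _ ENNReal.ofReal_ne_top]
        _ ≤ (∫⁻ z in D, ‖(z - l)⁻¹‖ₑ ∂τ) + ENNReal.ofReal C' *
            ENNReal.ofReal (ε * V / (2 * C')) := by
            gcongr
            exact hpois d hd0 hd2
        _ = _ := by
            rw [← ENNReal.ofReal_mul hC'0.le]
            congr 2; field_simp
    have hFv : F / v - 1 = v⁻¹ * ((F - b * J) + b * (J + 2 * π * I)) := by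
      have : b * J + b * (2 * π * I) = b * J - v := by rw [hv]; ring
      field_simp
      linear_combination -this
    have hb2 : ‖b * (J + 2 * π * I)‖ₑ ≤ ENNReal.ofReal (ε * V / 2) := by
      rw [← ofReal_norm, norm_mul]
      refine ENNReal.ofReal_le_ofReal ?_
      rw [hVb]
      calc ‖b‖ * ‖J + 2 * π * I‖ ≤ ‖b‖ * (π * ε) := by gcongr
        _ = _ := by ring
    rw [hFv, enorm_mul, enorm_inv hv0, hVnn, lintegral_smul_measure, smul_eq_mul]
    calc ENNReal.ofReal V⁻¹ * ‖F - b * J + b * (J + 2 * π * I)‖ₑ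
        ≤ ENNReal.ofReal V⁻¹ * (((∫⁻ z in D, ‖(z - l)⁻¹‖ₑ ∂τ) + ENNReal.ofReal (ε * V / 2)) +
          ENNReal.ofReal (ε * V / 2)) := by
          gcongr
          exact (enorm_add_le _ _).trans (add_le_add (hsplit.trans hkb) hb2)
      _ = ENNReal.ofReal ε + ENNReal.ofReal V⁻¹ * ∫⁻ z in D, ‖(z - l)⁻¹‖ₑ ∂τ := by
          rw [add_assoc, ← ENNReal.ofReal_add (by positivity) (by positivity), mul_add,
            ← ENNReal.ofReal_mul (by positivity), add_comm]
          congr 2; field_simp; ring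

/-! ### Lebesgue points and vanishing of annihilators -/

lemma density_bound {A : ℝ → ℝ} (hA : Continuous A) {m : Measure ℂ} {w : ℂ}
    (hm : Tendsto (fun r => m (closedBall w r) / lamG A (closedBall w r)) (𝓝[>] 0) (𝓝 0))
    {e : ℝ} (he : 0 < e) :
    ∀ᶠ r in 𝓝[>] (0 : ℝ), m (closedBall w r) ≤ ENNReal.ofReal (e * r) := by
  have he' : 0 < ENNReal.ofReal (e / 2) := by simpa using he
  filter_upwards [hm.eventually (gt_mem_nhds he')] with r hr
  have h1 := (ENNReal.div_le_iff_le_mul (Or.inr ENNReal.ofReal_ne_top) (Or.inr he'.ne')).1 hr.le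
  refine h1.trans ((mul_le_mul_right (lamG_closedBall_le hA w r) _).trans ?_)
  rw [← ENNReal.ofReal_mul (by positivity)]
  exact ENNReal.ofReal_le_ofReal (le_of_eq (by ring))

/-- At almost every point of the graph the error measure, taken with the density of `g μ` at
that point, is `o(r)` on discs of radius `r`: the Lebesgue differentiation theorem. -/
lemma errM_small {A : ℝ → ℝ} {L : ℝ≥0} (hA : LipschitzWith L A) {μ : Measure ℂ} [IsFiniteMeasure μ]
    {g : ℂ → ℂ} (hgm : Measurable g) (hgi : Integrable g μ) :
    ∀ᵐ w ∂(lamG A), ∀ e : ℝ, 0 < e → ∃ ρ : ℝ, 0 < ρ ∧ ∀ r, 0 < r → r ≤ ρ →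
      errM A μ g w.re (((μ.rnDeriv (lamG A) w).toReal • g w) / gder A w.re) (closedBall w r) ≤
        ENNReal.ofReal (e * r) := by
  have := lamG_locFin hA.continuous
  set H : ℂ → ℂ := fun z => ((μ.rnDeriv (lamG A) z).toReal • g z) / gder A z.re with hH
  have hHi : Integrable H (lamG A) := by
    refine (integrable_density hA hgi).mono (Measurable.aestronglyMeasurable ?_)
      (Eventually.of_forall fun z => ?_)
    · exact ((Measure.measurable_rnDeriv _ _).ennreal_toReal.smul hgm).div
        ((gder_measurable A).comp measurable_re)
    · rw [hH, norm_div]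
      have h1 : 1 ≤ ‖gder A z.re‖ := by
        have := abs_re_le_norm (gder A z.re)
        rwa [gder_re, abs_one] at this
      exact div_le_self (norm_nonneg _) h1
  have hfin := isFiniteMeasure_withDensity
    (((lintegral_mono' (Measure.singularPart_le μ (lamG A)) le_rfl).trans_lt hgi.2).ne)
  have hms : ((μ.singularPart (lamG A)).withDensity (fun z => ‖g z‖ₑ)).MutuallySingular
      (lamG A) :=
    (Measure.mutuallySingular_singularPart μ (lamG A)).mono_ac
      (withDensity_absolutelyContinuous _ _) Measure.AbsolutelyContinuous.rfl
  filter_upwards [(Besicovitch.vitaliFamily (lamG A)).ae_tendsto_lintegral_enorm_sub_div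
      hHi.locallyIntegrable, Besicovitch.ae_tendsto_rnDeriv
      ((μ.singularPart (lamG A)).withDensity (fun z => ‖g z‖ₑ)) (lamG A),
      hms.rnDeriv_ae_eq_zero] with w hw1 hw2 hw3 e he
  rw [hw3] at hw2
  have hw1' := hw1.comp (Besicovitch.tendsto_filterAt (lamG A) w)
  have hL : (0:ℝ) < 1 + L := by positivity
  have h1 := density_bound hA.continuous hw2 (half_pos he)
  have h2 := density_bound (m := (lamG A).withDensity (fun z => ‖H z - H w‖ₑ)) hA.continuous
    (w := w) (by
      refine hw1'.congr fun r => ?_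
      simp only [Function.comp]
      rw [withDensity_apply _ measurableSet_closedBall]) (e := e / 2 / (1 + L)) (by positivity)
  have h3 := (h1.and h2).and (Ioo_mem_nhdsGT (show (0:ℝ) < 1 by norm_num))
  obtain ⟨u, hu, hsub⟩ := mem_nhdsGT_iff_exists_Ioo_subset.1 h3
  have hu : 0 < u := hu
  refine ⟨u / 2, by positivity, fun r hr hru => ?_⟩
  obtain ⟨⟨hr1, hr2⟩, hr3⟩ := hsub (show r ∈ Ioo 0 u from ⟨hr, by linarith⟩)
  unfold errM
  rw [Measure.add_apply]
  have hkey : (lamG A).withDensity (fun z => ‖(μ.rnDeriv (lamG A) z).toReal • g z -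
      stripF A w.re (H w) z‖ₑ) (closedBall w r) ≤ ENNReal.ofReal (e / 2 * r) := by
    rw [withDensity_apply _ measurableSet_closedBall] at hr2 ⊢
    calc ∫⁻ z in closedBall w r, ‖(μ.rnDeriv (lamG A) z).toReal • g z -
          stripF A w.re (H w) z‖ₑ ∂(lamG A)
        ≤ ∫⁻ z in closedBall w r, ENNReal.ofReal (1 + L) * ‖H z - H w‖ₑ ∂(lamG A) := by
          refine setLIntegral_mono' measurableSet_closedBall fun z hz => ?_
          rw [mem_closedBall, dist_eq_norm] at hz
          have hz' := (abs_re_le_norm (z - w)).trans hz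
          rw [sub_re, abs_le] at hz'
          have hmem : z ∈ {z : ℂ | z.re ∈ Ioc (w.re - 1) (w.re + 1)} :=
            ⟨by linarith [hr3.2], by linarith [hr3.2]⟩
          rw [stripF, indicator_of_mem hmem]
          have : (μ.rnDeriv (lamG A) z).toReal • g z - H w * gder A z.re =
              gder A z.re * (H z - H w) := by
            have := gder_ne A z.re
            simp only [hH]
            field_simp
          rw [this, enorm_mul]
          gcongr
          rw [← ofReal_norm]
          exact ENNReal.ofReal_le_ofReal (gder_bound hA z.re)
      _ = ENNReal.ofReal (1 + L) * ∫⁻ z in closedBall w r, ‖H z - H w‖ₑ ∂(lamG A) :=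
          lintegral_const_mul' _ _ ENNReal.ofReal_ne_top
      _ ≤ ENNReal.ofReal (1 + L) * ENNReal.ofReal (e / 2 / (1 + L) * r) := by gcongr
      _ = _ := by
          rw [← ENNReal.ofReal_mul hL.le]
          congr 1
          field_simp
  refine (add_le_add hr1 hkey).trans ?_
  rw [← ENNReal.ofReal_add (by positivity) (by positivity)]
  exact ENNReal.ofReal_le_ofReal (le_of_eq (by ring))

lemma lamG_ae_graph {A : ℝ → ℝ} (hA : Continuous A) : ∀ᵐ w ∂(lamG A), gpt A w.re = w := by
  have hm : MeasurableSet {w : ℂ | gpt A w.re = w} :=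
    (isClosed_eq ((gpt_continuous hA).comp continuous_re) continuous_id).measurableSet
  rw [ae_iff]
  exact lamG_null hA hm.compl fun x hx => hx (by simp)

/-- An annihilator of the rational functions has no arclength density at type I points which are
not of type II: otherwise the lower cone would consist of analytic bounded point evaluations. -/
lemma annihilator_vanishes {t : ℝ} {K Ω : Set ℂ} (hK : IsClosed K) {μ : Measure ℂ}
    [IsFiniteMeasure μ] (hμ : μ Kᶜ = 0) (habpe : abpeSet t K μ = Ω)
    {A : ℝ → ℝ} {L : ℝ≥0} (hA : LipschitzWith L A) {α : ℝ} (hα : 0 < α) (hαL : α * (L:ℝ) < 1)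
    (houter : ∀ w ∈ typeI K A α, upperOuter K w α) {c : ℝ} (hc : 0 < c)
    (hdiam : ∀ z ∉ K, ENNReal.ofReal c ≤ ediam (connectedComponentIn Kᶜ z))
    {g : ℂ → ℂ} (hgm : Measurable g) (hgi : Integrable g μ) {C₀ : ℝ}
    (hann : ∀ r ∈ RatOn K, ∫ z, r z * g z ∂μ = 0)
    (hbd : ∀ r ∈ RatOn K, ∫⁻ z, ‖r z‖ₑ * ‖g z‖ₑ ∂μ ≤ ENNReal.ofReal (C₀ * tnorm t μ r)) :
    ∀ᵐ w ∂(lamG A), w ∈ typeI K A α → w ∉ typeII K A Ω α →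
      g w = 0 ∨ (μ.rnDeriv (lamG A) w).toReal = 0 := by
  obtain ⟨ε₀, hε₀, habp⟩ := good_abpe
  have hri : ∀ r ∈ RatOn K, Integrable (fun z => r z * g z) μ := fun r hr => by
    refine ⟨((ratOn_measurable hr).mul hgm).aestronglyMeasurable, ?_⟩
    rw [hasFiniteIntegral_iff_enorm]
    simp only [enorm_mul]
    exact (hbd r hr).trans_lt ENNReal.ofReal_lt_top
  filter_upwards [lamG_ae_graph hA.continuous, errM_small hA hgm hgi] with w hw hτ hI hII
  by_contra! hne
  set b := ((μ.rnDeriv (lamG A) w).toReal • g w) / gder A w.re with hbdef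
  have hb : b ≠ 0 := div_ne_zero (smul_ne_zero hne.2 hne.1) (gder_ne A w.re)
  have hout := houter w hI
  rw [← hw] at hout
  obtain ⟨δ, hδ, hgood⟩ := cone_good hA hgm hgi (x₀ := w.re) hb hμ hann hri hα hαL hout
    (by rw [hw]; exact hτ) hε₀
  rw [hw] at hgood
  refine hII ⟨hI, Or.inr ⟨min δ c, by positivity, fun l hl => ?_⟩⟩
  have hlb : ‖l - w‖ < min δ c := by
    have := hl.1
    rwa [mem_ball, dist_eq_norm] at this
  obtain ⟨σ, hσ⟩ := hgood l ⟨ball_subset_ball (min_le_left _ _) hl.1, hl.2⟩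
  rw [← habpe]
  refine habp t K μ g C₀ c _ ε₀ _ l σ hK hμ hgm hann hbd hdiam ?_ hσ.pos ?_ le_rfl hσ
  · simp [hb, Real.pi_ne_zero]
  · have h1 := kap_le_one (L := L) hα
    have h2 := hlb.trans_le (min_le_right _ _)
    have h3 := (kap_pos hα hαL).le
    have h4 := norm_nonneg (l - w)
    nlinarith

/-! ### Functionals on `L^p` of a finite measure -/

open scoped Classical in
/-- The complex measure `E ↦ φ (1_E)` attached to a bounded functional on `L^p`. -/
def dualMeasure {p : ℝ≥0∞} [Fact (1 ≤ p)] (hp : p ≠ ∞) {μ : Measure ℂ} [IsFiniteMeasure μ]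
    (φ : Lp ℂ p μ →L[ℂ] ℂ) : ComplexMeasure ℂ where
  measureOf' E := if h : MeasurableSet E then
    φ (indicatorConstLp p h (measure_ne_top μ E) 1) else 0
  empty' := by simp
  not_measurable' E h := by simp [h]
  m_iUnion' f hf hd := by
    have hU : MeasurableSet (⋃ i, f i) := MeasurableSet.iUnion hf
    simp only [hf, hU, dite_true]
    have hmeas : ∀ s : Finset ℕ, MeasurableSet (⋃ i ∈ s, f i) := fun s =>
      s.measurableSet_biUnion fun i _ => hf i
    have hsum : ∀ s : Finset ℕ, ∑ i ∈ s, φ (indicatorConstLp p (hf i) (measure_ne_top μ _) 1) =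
        φ (indicatorConstLp p (hmeas s) (measure_ne_top μ _) 1) := by
      intro s
      induction s using Finset.induction with
      | empty => simp
      | insert a s ha ih =>
        rw [Finset.sum_insert ha, ih, ← map_add]
        congr 1
        have hdis : Disjoint (f a) (⋃ i ∈ s, f i) := by
          simp only [disjoint_iUnion_right]
          intro i hi
          exact hd (fun h => ha (h ▸ hi))
        rw [← indicatorConstLp_disjoint_union (hf a) (hmeas s) (measure_ne_top μ _)
          (measure_ne_top μ _) hdis]
        congr 1
        simp
    unfold HasSum
    simp only [hsum, SummationFilter.unconditional_filter]
    refine (φ.continuous.tendsto _).comp (tendsto_indicatorConstLp_set hp ?_)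
    have htop : ∑' i, μ (f i) ≠ ∞ := by
      rw [← measure_iUnion hd hf]; exact measure_ne_top μ _
    refine tendsto_of_tendsto_of_tendsto_of_le_of_le tendsto_const_nhds
      (ENNReal.tendsto_tsum_compl_atTop_zero htop) (fun _ => zero_le) fun s => ?_
    calc μ (symmDiff (⋃ i ∈ s, f i) (⋃ i, f i)) ≤ μ (⋃ i : {i // i ∉ s}, f i) := by
          refine measure_mono ?_
          rintro x (⟨h1, h2⟩ | ⟨h1, h2⟩)
          · exact absurd (iUnion₂_subset_iUnion _ _ h1) h2
          · obtain ⟨i, hi⟩ := mem_iUnion.1 h1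
            refine mem_iUnion.2 ⟨⟨i, fun his => h2 ?_⟩, hi⟩
            exact mem_iUnion₂.2 ⟨i, his, hi⟩
      _ ≤ _ := measure_iUnion_le _

lemma dualMeasure_apply {p : ℝ≥0∞} [Fact (1 ≤ p)] (hp : p ≠ ∞) {μ : Measure ℂ} [IsFiniteMeasure μ]
    (φ : Lp ℂ p μ →L[ℂ] ℂ) {E : Set ℂ} (hE : MeasurableSet E) :
    dualMeasure hp φ E = φ (indicatorConstLp p hE (measure_ne_top μ E) 1) := by
  exact dif_pos hE

/-- The density of the complex measure of a functional, from the Radon–Nikodym theorem. -/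
lemma exists_dual_density {p : ℝ≥0∞} [Fact (1 ≤ p)] (hp : p ≠ ∞) {μ : Measure ℂ}
    [IsFiniteMeasure μ] (φ : Lp ℂ p μ →L[ℂ] ℂ) :
    ∃ g : ℂ → ℂ, Measurable g ∧ Integrable g μ ∧ ∀ E (hE : MeasurableSet E),
      φ (indicatorConstLp p hE (measure_ne_top μ E) 1) = ∫ z in E, g z ∂μ := by
  set c := dualMeasure hp φ with hc
  have hac : ∀ E, MeasurableSet E → μ E = 0 → c E = 0 := by
    intro E hE h0
    rw [hc, dualMeasure_apply hp φ hE]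
    have : indicatorConstLp p hE (measure_ne_top μ E) (1:ℂ) = 0 := by
      rw [← norm_eq_zero, norm_indicatorConstLp (one_pos.trans_le (Fact.out : 1 ≤ p)).ne' hp]
      have : 0 < p.toReal := ENNReal.toReal_pos (one_pos.trans_le (Fact.out : 1 ≤ p)).ne' hp
      simp [Measure.real, h0, this.ne']
    rw [this, map_zero]
  have hreE : ∀ E, ComplexMeasure.re c E = (c E).re := fun E => rfl
  have himE : ∀ E, ComplexMeasure.im c E = (c E).im := fun E => rfl
  have hre : (ComplexMeasure.re c) ≪ᵥ μ.toENNRealVectorMeasure := .mk fun E hE h0 => by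
    rw [Measure.toENNRealVectorMeasure_apply_measurable hE] at h0
    rw [hreE, hac E hE h0, zero_re]
  have him : (ComplexMeasure.im c) ≪ᵥ μ.toENNRealVectorMeasure := .mk fun E hE h0 => by
    rw [Measure.toENNRealVectorMeasure_apply_measurable hE] at h0
    rw [himE, hac E hE h0, zero_im]
  have hre' := SignedMeasure.withDensityᵥ_rnDeriv_eq _ μ hre
  have him' := SignedMeasure.withDensityᵥ_rnDeriv_eq _ μ him
  set u := (ComplexMeasure.re c).rnDeriv μ with hu
  set v := (ComplexMeasure.im c).rnDeriv μ with hv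
  have hum : Measurable u := SignedMeasure.measurable_rnDeriv _ _
  have hvm : Measurable v := SignedMeasure.measurable_rnDeriv _ _
  have hui : Integrable u μ := SignedMeasure.integrable_rnDeriv _ _
  have hvi : Integrable v μ := SignedMeasure.integrable_rnDeriv _ _
  have hi1 : Integrable (fun z => (u z : ℂ)) μ := hui.ofReal
  have hi2 : Integrable (fun z => (v z : ℂ) * I) μ := hvi.ofReal.mul_const I
  refine ⟨fun z => u z + v z * I, by fun_prop, hi1.add hi2, fun E hE => ?_⟩
  rw [← dualMeasure_apply hp φ hE, ← hc, integral_add hi1.integrableOn hi2.integrableOn,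
    integral_mul_const, integral_complex_ofReal, integral_complex_ofReal]
  have e1 := congrArg (fun s : SignedMeasure ℂ => s E) hre'
  have e2 := congrArg (fun s : SignedMeasure ℂ => s E) him'
  simp only [withDensityᵥ_apply hui hE, withDensityᵥ_apply hvi hE] at e1 e2
  rw [e1, e2, hreE, himE]
  exact (re_add_im (c E)).symm

/-- The functional is integration against its density. -/
lemma dual_eq_integral {p : ℝ≥0∞} [Fact (1 ≤ p)] (hp : p ≠ ∞) {μ : Measure ℂ}
    [IsFiniteMeasure μ] (φ : Lp ℂ p μ →L[ℂ] ℂ) {g : ℂ → ℂ} (hgi : Integrable g μ)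
    (hg : ∀ E (hE : MeasurableSet E),
      φ (indicatorConstLp p hE (measure_ne_top μ E) 1) = ∫ z in E, g z ∂μ)
    {f : ℂ → ℂ} (hf : Measurable f) (hfp : MemLp f p μ)
    (hfg : Integrable (fun z => f z * g z) μ) :
    φ (hfp.toLp f) = ∫ z, f z * g z ∂μ := by
  have hsi : ∀ s : SimpleFunc ℂ ℂ, Integrable (fun z => s z * g z) μ := fun s => by
    obtain ⟨C, hC⟩ := s.exists_forall_norm_le
    exact hgi.bdd_mul s.aestronglyMeasurable (ae_of_all _ hC)
  have hsimple : ∀ s : SimpleFunc ℂ ℂ, ∀ hs : MemLp s p μ, φ (hs.toLp s) = ∫ z, s z * g z ∂μ := by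
    intro s
    induction s using SimpleFunc.induction with
    | const c hE =>
      rename_i E
      intro hs
      have e1 : hs.toLp _ = c • indicatorConstLp p hE (measure_ne_top μ E) (1:ℂ) := by
        rw [indicatorConstLp, ← MemLp.toLp_const_smul]
        refine MemLp.toLp_congr _ _ (ae_of_all _ fun z => ?_)
        simp [SimpleFunc.coe_piecewise, Set.piecewise, indicator]
      rw [e1, map_smul, hg E hE, ← integral_indicator hE, smul_eq_mul, ← integral_const_mul]
      congr 1
      ext z
      simp [SimpleFunc.coe_piecewise, Set.piecewise, indicator]
    | add hd h1 h2 =>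
      rename_i s1 s2
      intro hs
      have m1 := s1.memLp_of_isFiniteMeasure p μ
      have m2 := s2.memLp_of_isFiniteMeasure p μ
      have : hs.toLp _ = m1.toLp s1 + m2.toLp s2 := by
        rw [← MemLp.toLp_add]; rfl
      rw [this, map_add, h1, h2, ← integral_add (hsi s1) (hsi s2)]
      congr 1
      ext z
      simp [add_mul]
  have t1 := (φ.continuous.tendsto _).comp (SimpleFunc.tendsto_approxOn_range_Lp hp hf hfp)
  have t2 : Tendsto (fun n => ∫ z, SimpleFunc.approxOn f hf (range f ∪ {0}) 0 (by simp) n z * g z ∂μ)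
      atTop (𝓝 (∫ z, f z * g z ∂μ)) := by
    refine tendsto_integral_of_dominated_convergence (fun z => 2 * ‖f z * g z‖)
      (fun n => (hsi _).1) (hfg.norm.const_mul 2) (fun n => ae_of_all _ fun z => ?_)
      (ae_of_all _ fun z => ?_)
    · have := SimpleFunc.norm_approxOn_zero_le hf (s := range f ∪ {0}) (by simp) z n
      rw [norm_mul, norm_mul]
      nlinarith [norm_nonneg (g z)]
    · exact (SimpleFunc.tendsto_approxOn hf _ (subset_closure (by simp))).mul_const _
  refine tendsto_nhds_unique t1 (t2.congr fun n => ?_)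
  exact (hsimple _ _).symm

/-- A bound for `∫ |f g| dμ`, from testing the functional on `f` times a unimodular function. -/
lemma dual_lintegral_le {p : ℝ≥0∞} [Fact (1 ≤ p)] (hp : p ≠ ∞) {μ : Measure ℂ}
    [IsFiniteMeasure μ] (φ : Lp ℂ p μ →L[ℂ] ℂ) {g : ℂ → ℂ} (hgm : Measurable g)
    (hgi : Integrable g μ)
    (hg : ∀ E (hE : MeasurableSet E),
      φ (indicatorConstLp p hE (measure_ne_top μ E) 1) = ∫ z in E, g z ∂μ)
    {f : ℂ → ℂ} (hf : Measurable f) (hfp : MemLp f p μ)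
    (hfg : Integrable (fun z => f z * g z) μ) :
    ∫⁻ z, ‖f z‖ₑ * ‖g z‖ₑ ∂μ ≤ ENNReal.ofReal (‖φ‖ * ‖hfp.toLp f‖) := by
  set u : ℂ → ℂ := fun z => (starRingEnd ℂ) (f z * g z) / ‖f z * g z‖ with hu
  have hum : Measurable u := by
    refine Measurable.div ?_ ?_
    · exact continuous_conj.measurable.comp (hf.mul hgm)
    · exact measurable_ofReal.comp (hf.mul hgm).norm
  have hu1 : ∀ z, ‖u z‖ ≤ 1 := fun z => by
    simp only [hu, norm_div, RCLike.norm_conj, norm_real, norm_norm]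
    exact div_self_le_one _
  have hmod : ∀ z, u z * f z * g z = (‖f z * g z‖ : ℂ) := fun z => by
    by_cases h0 : f z * g z = 0
    · rw [mul_assoc, h0]; simp
    · have hn : (‖f z * g z‖ : ℂ) ≠ 0 := by simpa using h0
      rw [mul_assoc, hu]
      simp only
      rw [div_mul_eq_mul_div, mul_comm, mul_conj, normSq_eq_norm_sq, div_eq_iff hn]
      push_cast; ring
  have hle : ∀ z, ‖u z * f z‖ ≤ ‖f z‖ := fun z => by
    rw [norm_mul]; exact mul_le_of_le_one_left (norm_nonneg _) (hu1 z)
  have hkp : MemLp (fun z => u z * f z) p μ :=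
    hfp.mono (hum.mul hf).aestronglyMeasurable (ae_of_all _ hle)
  have hkg : Integrable (fun z => u z * f z * g z) μ := by
    simp only [hmod]; exact hfg.norm.ofReal
  have h1 := dual_eq_integral hp φ hgi hg (hum.fun_mul hf) hkp hkg
  rw [integral_congr_ae (ae_of_all _ hmod), integral_complex_ofReal] at h1
  have h2 := φ.le_opNorm (hkp.toLp _)
  rw [h1, norm_real, Real.norm_of_nonneg (integral_nonneg fun _ => norm_nonneg _)] at h2
  have h3 : ‖hkp.toLp _‖ ≤ ‖hfp.toLp f‖ := by
    rw [Lp.norm_toLp, Lp.norm_toLp]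
    exact ENNReal.toReal_mono hfp.2.ne (eLpNorm_mono hle)
  simp only [← enorm_mul]
  rw [← ofReal_integral_norm_eq_lintegral_enorm hfg]
  exact ENNReal.ofReal_le_ofReal (h2.trans (by gcongr))

/-! ### Duality for `R^t(K, μ)` and irreducibility -/

lemma ratOn_add {K : Set ℂ} {f g : ℂ → ℂ} (hf : f ∈ RatOn K) (hg : g ∈ RatOn K) :
    ∃ h ∈ RatOn K, ∀ z ∈ K, h z = f z + g z := by
  obtain ⟨p, q, hq, rfl⟩ := hf
  obtain ⟨p', q', hq', rfl⟩ := hg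
  refine ⟨_, ⟨p * q' + p' * q, q * q', fun z hz => ?_, rfl⟩, fun z hz => ?_⟩
  · simp [hq z hz, hq' z hz]
  · have := hq z hz
    have := hq' z hz
    simp only [Polynomial.eval_add, Polynomial.eval_mul]
    field_simp

lemma ratOn_smul {K : Set ℂ} {f : ℂ → ℂ} (hf : f ∈ RatOn K) (c : ℂ) :
    (fun z => c * f z) ∈ RatOn K := by
  obtain ⟨p, q, hq, rfl⟩ := hf
  refine ⟨Polynomial.C c * p, q, hq, ?_⟩
  ext z
  simp [mul_div_assoc]

lemma ratOn_ae_bounded {K : Set ℂ} (hK : IsCompact K) {μ : Measure ℂ} (hμ : μ Kᶜ = 0) {r : ℂ → ℂ}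
    (hr : r ∈ RatOn K) : ∃ C : ℝ, ∀ᵐ z ∂μ, ‖r z‖ ≤ C := by
  obtain ⟨C, hC⟩ := hK.exists_bound_of_continuousOn (ratOn_differentiableOn hr).continuousOn
  refine ⟨C, ?_⟩
  have : ∀ᵐ z ∂μ, z ∈ K := hμ
  exact this.mono hC

lemma ratOn_memLp {K : Set ℂ} (hK : IsCompact K) {μ : Measure ℂ} [IsFiniteMeasure μ]
    (hμ : μ Kᶜ = 0) {r : ℂ → ℂ} (hr : r ∈ RatOn K) (p : ℝ≥0∞) : MemLp r p μ := by
  obtain ⟨C, hC⟩ := ratOn_ae_bounded hK hμ hr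
  exact MemLp.of_bound (ratOn_measurable hr).aestronglyMeasurable C hC

lemma norm_toLp_eq_tnorm {t : ℝ} (ht : 1 ≤ t) {μ : Measure ℂ} {f : ℂ → ℂ}
    (hf : MemLp f (ENNReal.ofReal t) μ) : ‖hf.toLp f‖ = tnorm t μ f := by
  have h0 : ENNReal.ofReal t ≠ 0 := by
    simpa using (by linarith : 0 < t)
  rw [Lp.norm_toLp, hf.eLpNorm_eq_integral_rpow_norm h0 ENNReal.ofReal_ne_top,
    ENNReal.toReal_ofReal (by linarith : 0 ≤ t), ENNReal.toReal_ofReal (by positivity), tnorm,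
    one_div]

/-- `Rat(K)` as a subspace of `L^t(μ)`. -/
def ratSub (p : ℝ≥0∞) (K : Set ℂ) (μ : Measure ℂ) (hμ : μ Kᶜ = 0) : Submodule ℂ (Lp ℂ p μ) where
  carrier := {F | ∃ r ∈ RatOn K, F =ᵐ[μ] r}
  add_mem' := by
    rintro F G ⟨r, hr, hFr⟩ ⟨s, hs, hGs⟩
    obtain ⟨h, hh, hadd⟩ := ratOn_add hr hs
    refine ⟨h, hh, ?_⟩
    have hK : ∀ᵐ z ∂μ, z ∈ K := hμ
    filter_upwards [Lp.coeFn_add F G, hFr, hGs, hK] with z h1 h2 h3 h4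
    rw [h1, Pi.add_apply, h2, h3, hadd z h4]
  zero_mem' := ⟨_, ⟨0, 1, by simp, rfl⟩, by
    filter_upwards [Lp.coeFn_zero ℂ p μ] with z hz
    exact hz.trans (by simp)⟩
  smul_mem' := by
    rintro c F ⟨r, hr, hFr⟩
    refine ⟨_, ratOn_smul hr c, ?_⟩
    filter_upwards [Lp.coeFn_smul c F, hFr] with z h1 h2
    rw [h1, Pi.smul_apply, h2, smul_eq_mul]

/-- Hahn–Banach separation of a point from the closure of a subspace. -/
lemma exists_functional {E : Type*} [NormedAddCommGroup E] [NormedSpace ℂ E] {S : Submodule ℂ E}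
    {x : E} (hx : x ∉ closure (S : Set E)) : ∃ φ : E →L[ℂ] ℂ, (∀ y ∈ S, φ y = 0) ∧ φ x ≠ 0 := by
  have hn : ‖S.mkQ x‖ ≠ 0 := fun h => hx (by
    have := (QuotientAddGroup.norm_mk_eq_zero_iff_mem_closure (S := S.toAddSubgroup) (m := x)).1 h
    exact this)
  obtain ⟨φ, -, hφ⟩ := exists_dual_vector ℂ (S.mkQ x) hn
  refine ⟨φ.comp S.mkQL, fun y hy => ?_, ?_⟩
  · have : S.mkQ y = 0 := by simpa using hy
    change φ (S.mkQ y) = 0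
    rw [this, map_zero]
  · change φ (S.mkQ x) ≠ 0
    rw [hφ]
    simpa using hn

/-- Duality: a characteristic function annihilated by every density which annihilates `Rat(K)` and
defines a bounded functional on `L^t(μ)` belongs to `R^t(K, μ)`. -/
lemma indicator_rtMem {t : ℝ} (ht : 1 ≤ t) {K : Set ℂ} (hK : IsCompact K) {μ : Measure ℂ}
    [IsFiniteMeasure μ] (hμ : μ Kᶜ = 0) {E : Set ℂ} (hE : MeasurableSet E)
    (H : ∀ (g : ℂ → ℂ) (C₀ : ℝ), Measurable g → Integrable g μ →
      (∀ r ∈ RatOn K, ∫ z, r z * g z ∂μ = 0) →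
      (∀ r ∈ RatOn K, ∫⁻ z, ‖r z‖ₑ * ‖g z‖ₑ ∂μ ≤ ENNReal.ofReal (C₀ * tnorm t μ r)) →
      ∫ z in E, g z ∂μ = 0) : RtMem t K μ (E.indicator 1) := by
  set p := ENNReal.ofReal t with hp
  have hpt : p ≠ ∞ := ENNReal.ofReal_ne_top
  have hFact : Fact (1 ≤ p) := ⟨by rw [hp]; simpa using ht⟩
  set x := indicatorConstLp p hE (measure_ne_top μ E) (1:ℂ) with hx
  by_cases hmem : x ∈ closure (ratSub p K μ hμ : Set (Lp ℂ p μ))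
  · obtain ⟨y, hy, hlim⟩ := mem_closure_iff_seq_limit.1 hmem
    choose r hr hyr using hy
    refine ⟨r, hr, ?_⟩
    have hlim' := tendsto_iff_norm_sub_tendsto_zero.1 hlim
    have hpow := hlim'.rpow_const (p := t) (Or.inr (by linarith))
    rw [Real.zero_rpow (by linarith : t ≠ 0)] at hpow
    refine hpow.congr fun n => ?_
    have hi : MemLp (E.indicator (1 : ℂ → ℂ)) p μ :=
      memLp_indicator_const p hE 1 (Or.inr (measure_ne_top μ E))
    have hm : MemLp (fun z => r n z - E.indicator (1 : ℂ → ℂ) z) p μ :=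
      (ratOn_memLp hK hμ (hr n) p).sub hi
    have heq : y n - x = hm.toLp _ := by
      refine Lp.ext ?_
      filter_upwards [Lp.coeFn_sub (y n) x, hyr n, hm.coeFn_toLp,
        indicatorConstLp_coeFn (p := p) (hs := hE) (hμs := measure_ne_top μ E) (c := (1:ℂ))]
        with z h1 h2 h3 h4
      rw [h1, Pi.sub_apply, h2, h3, hx, h4]
      rfl
    rw [heq, norm_toLp_eq_tnorm ht hm, tnorm, ← Real.rpow_mul
      (integral_nonneg fun z => by positivity), one_div, inv_mul_cancel₀ (by linarith : t ≠ 0),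
      Real.rpow_one]
  · exfalso
    obtain ⟨φ, hφ0, hφx⟩ := exists_functional hmem
    obtain ⟨g, hgm, hgi, hg⟩ := exists_dual_density hpt φ
    have hri : ∀ r ∈ RatOn K, Integrable (fun z => r z * g z) μ := fun r hr => by
      obtain ⟨C, hC⟩ := ratOn_ae_bounded hK hμ hr
      exact hgi.bdd_mul (ratOn_measurable hr).aestronglyMeasurable hC
    refine hφx ?_
    rw [hx, hg E hE]
    refine H g ‖φ‖ hgm hgi (fun r hr => ?_) fun r hr => ?_
    · have hm := ratOn_memLp hK hμ hr p
      rw [← dual_eq_integral hpt φ hgi hg (ratOn_measurable hr) hm (hri r hr)]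
      exact hφ0 _ ⟨r, hr, hm.coeFn_toLp⟩
    · have hm := ratOn_memLp hK hμ hr p
      rw [← norm_toLp_eq_tnorm ht hm]
      exact dual_lintegral_le hpt φ hgm hgi hg (ratOn_measurable hr) hm (hri r hr)

/-- A measure without atoms for which every measurable set is null or conull vanishes. -/
lemma zero_of_zero_one {ν : Measure ℂ} (h01 : ∀ E, MeasurableSet E → ν E = 0 ∨ ν Eᶜ = 0)
    (hat : ∀ z, ν {z} = 0) : ν univ = 0 := by
  by_contra hne
  obtain ⟨z, -, hz⟩ := exists_mem_forall_mem_nhdsWithin_pos_measure hne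
  simp only [nhdsWithin_univ] at hz
  have h1 : ∀ n : ℕ, ν (ball z (1 / (n + 1)))ᶜ = 0 := fun n =>
    (h01 _ measurableSet_ball).resolve_left
      (hz _ (ball_mem_nhds z Nat.one_div_pos_of_nat)).ne'
  have h2 : (univ : Set ℂ) ⊆ {z} ∪ ⋃ n : ℕ, (ball z (1 / (n + 1)))ᶜ := by
    intro w _
    by_cases hw : w = z
    · exact Or.inl hw
    · obtain ⟨n, hn⟩ := exists_nat_one_div_lt (dist_pos.2 hw)
      exact Or.inr (mem_iUnion.2 ⟨n, fun h => lt_irrefl _ ((mem_ball.1 h).trans hn)⟩)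
  exact hne (measure_mono_null h2 (measure_union_null (hat z) (measure_iUnion_null h1)))

/-- Arclength on the graph is absolutely continuous with respect to `lamG A`. -/
lemma H1_restrict_ac {A : ℝ → ℝ} {L : ℝ≥0} (hA : LipschitzWith L A) {T : Set ℂ}
    (hT : T ⊆ lipGraph A) : H1m.restrict T ≪ lamG A := by
  have hgm : MeasurableSet (lipGraph A) :=
    (isClosed_eq continuous_im (hA.continuous.comp continuous_re)).measurableSet
  refine Measure.AbsolutelyContinuous.trans
    (Measure.absolutelyContinuous_of_le (Measure.restrict_mono hT le_rfl)) ?_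
  refine Measure.AbsolutelyContinuous.mk fun s hs h0 => ?_
  rw [Measure.restrict_apply hs]
  rw [lamG_apply hA.continuous hs] at h0
  have hsub : s ∩ lipGraph A ⊆ gpt A '' (gpt A ⁻¹' s) := by
    rintro w ⟨hw, hwg⟩
    have : gpt A w.re = w := by
      apply Complex.ext
      · simp
      · rw [gpt_im]; exact hwg.symm
    exact ⟨w.re, by rw [mem_preimage, this]; exact hw, this⟩
  refine measure_mono_null hsub ?_
  have := (gpt_lipschitz hA).hausdorffMeasure_image_le (d := 1) zero_le_one (gpt A ⁻¹' s)
  rw [hausdorffMeasure_real, h0, mul_zero] at this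
  exact le_antisymm this zero_le

/-! ### Conclusion -/

/-- A part of `μ` that is absolutely continuous with respect to arclength on the graph lives where
the density of `μ` is positive. -/
lemma rnDeriv_ne_zero_ae {A : ℝ → ℝ} {L : ℝ≥0} (hA : LipschitzWith L A) {μ μa : Measure ℂ}
    [IsFiniteMeasure μ] (hle : μa ≤ μ) (hac : μa ≪ lamG A) :
    ∀ᵐ w ∂μa, (μ.rnDeriv (lamG A) w).toReal ≠ 0 := by
  have := lamG_locFin hA.continuous
  have hN : MeasurableSet {w | μ.rnDeriv (lamG A) w = 0} :=
    Measure.measurable_rnDeriv _ _ (measurableSet_singleton 0)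
  obtain ⟨B, hB, hσ, hlam⟩ := Measure.mutuallySingular_singularPart μ (lamG A)
  have h0 : μa {w | μ.rnDeriv (lamG A) w = 0} = 0 := by
    refine measure_mono_null (fun w hw => ?_) (measure_union_null (s := {w | μ.rnDeriv (lamG A) w = 0} ∩ B)
      (t := Bᶜ) ?_ (hac hlam))
    · by_cases hwB : w ∈ B
      · exact Or.inl ⟨hw, hwB⟩
      · exact Or.inr hwB
    · refine le_antisymm ((hle _).trans ?_) zero_le
      have hdec := congrArg (fun m : Measure ℂ => m ({w | μ.rnDeriv (lamG A) w = 0} ∩ B))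
        (mu_decomp hA (μ := μ))
      refine le_of_eq (hdec.trans ?_)
      rw [Measure.add_apply, measure_mono_null inter_subset_right hσ, zero_add,
        withDensity_apply_eq_zero (Measure.measurable_rnDeriv _ _)]
      convert measure_empty (μ := lamG A)
      ext w
      simp only [mem_inter_iff, mem_ofPred_eq, mem_empty_iff_false, iff_false]
      tauto
  have h1 : ∀ᵐ w ∂μa, μ.rnDeriv (lamG A) w ≠ 0 := by
    rw [ae_iff]; simpa using h0
  filter_upwards [h1, hac.ae_le (Measure.rnDeriv_lt_top μ (lamG A))] with w hw1 hw2
  exact ENNReal.toReal_ne_zero.2 ⟨hw1, hw2.ne⟩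

/-- Theorem 3(b) (SBTheorem b): under the hypotheses of Theorem 3(a), if the
diameters of all connected components of `ℂ ∖ K` are bounded away from zero,
then `μ_a`-almost every type I point is a type II point. -/
theorem stmt14
    (t : ℝ) (ht : 1 ≤ t)
    (Ω : Set ℂ) (hΩo : IsOpen Ω)
    (K : Set ℂ) (hK : K = closure Ω) (hKc : IsCompact K)
    (μ : Measure ℂ) [IsFiniteMeasure μ] (hsupp : μ Kᶜ = 0)
    (hirr : RtIrred t K μ) (habpe : abpeSet t K μ = Ω)
    (A : ℝ → ℝ) (L : ℝ≥0) (hA : LipschitzWith L A)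
    (α : ℝ) (hα : 0 < α) (hαL : α * (L:ℝ) < 1)
    (houter : ∀ w ∈ typeI K A α, upperOuter K w α)
    (h : ℂ → ℝ) (μa μs : Measure ℂ)
    (hμa : μa = (H1m.restrict (typeI K A α)).withDensity
      (fun z => ENNReal.ofReal (h z / (2 * Real.pi))))
    (hdec : μ = μa + μs)
    (hsing : μs.MutuallySingular (H1m.restrict (typeI K A α)))
    (hdiam : ∃ c : ℝ, 0 < c ∧ ∀ z ∉ K,
      ENNReal.ofReal c ≤ EMetric.diam (connectedComponentIn Kᶜ z)) :
    μa (typeI K A α \ typeII K A Ω α) = 0 := by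
  obtain ⟨c, hc, hdiam⟩ := hdiam
  obtain ⟨S, hS, hμsS, hSc⟩ := hsing
  set E₀ := typeI K A α \ typeII K A Ω α with hE₀
  have hacH : μa ≪ H1m.restrict (typeI K A α) := by
    rw [hμa]; exact withDensity_absolutelyContinuous _ _
  have hac : μa ≪ lamG A := hacH.trans (H1_restrict_ac hA fun z hz => hz.1)
  have hle : μa ≤ μ := by rw [hdec]; exact Measure.le_add_right le_rfl
  -- Every annihilating density vanishes `μa`-almost everywhere on `E₀`.
  have hvan : ∀ (g : ℂ → ℂ) (C₀ : ℝ), Measurable g → Integrable g μ →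
      (∀ r ∈ RatOn K, ∫ z, r z * g z ∂μ = 0) →
      (∀ r ∈ RatOn K, ∫⁻ z, ‖r z‖ₑ * ‖g z‖ₑ ∂μ ≤ ENNReal.ofReal (C₀ * tnorm t μ r)) →
      μa (E₀ ∩ {w | g w ≠ 0}) = 0 := by
    intro g C₀ hgm hgi hann hbd
    have h1 := hac.ae_le (annihilator_vanishes hKc.isClosed hsupp habpe hA hα hαL houter hc hdiam
      hgm hgi hann hbd)
    have h2 := rnDeriv_ne_zero_ae hA hle hac
    have h3 : ∀ᵐ w ∂μa, w ∉ E₀ ∩ {w | g w ≠ 0} := by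
      filter_upwards [h1, h2] with w hw1 hw2 hw
      exact hw.2 ((hw1 hw.1.1 hw.1.2).resolve_right hw2)
    exact measure_eq_zero_iff_ae_notMem.2 h3
  -- `E₀` need not be measurable; `Z` is a measurable hull of its part off the carrier of `μs`.
  set Z := toMeasurable μ (E₀ ∩ S) ∩ S with hZ
  have hZm : MeasurableSet Z := (measurableSet_toMeasurable _ _).inter hS
  have hZg : ∀ G, MeasurableSet G → μa (E₀ ∩ G) = 0 → μ (Z ∩ G) = 0 := by
    intro G hG h0
    rw [hZ, inter_assoc, Measure.measure_toMeasurable_inter (hS.inter hG) (measure_ne_top μ _),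
      hdec, Measure.add_apply, add_eq_zero]
    have hsub : E₀ ∩ S ∩ (S ∩ G) ⊆ E₀ ∩ G := fun w hw => ⟨hw.1.1, hw.2.2⟩
    have hsub' : E₀ ∩ S ∩ (S ∩ G) ⊆ S := fun w hw => hw.1.2
    exact ⟨measure_mono_null hsub h0, measure_mono_null hsub' hμsS⟩
  have hmem : ∀ E, MeasurableSet E → RtMem t K μ ((E ∩ Z).indicator 1) := by
    intro E hE
    refine indicator_rtMem ht hKc hsupp (hE.inter hZm) fun g C₀ hgm hgi hann hbd => ?_
    have hG : MeasurableSet {w | g w ≠ 0} := (hgm (measurableSet_singleton 0)).compl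
    have h0 := hZg _ hG (hvan g C₀ hgm hgi hann hbd)
    refine setIntegral_eq_zero_of_ae_eq_zero ?_
    have h1 : ∀ᵐ w ∂μ, w ∉ Z ∩ {w | g w ≠ 0} := measure_eq_zero_iff_ae_notMem.1 h0
    filter_upwards [h1] with w hw hwE
    by_contra hne
    exact hw ⟨hwE.2, hne⟩
  have h01 : ∀ E, MeasurableSet E → μ.restrict Z E = 0 ∨ μ.restrict Z Eᶜ = 0 := by
    intro E hE
    rw [Measure.restrict_apply hE, Measure.restrict_apply hE.compl]
    refine (hirr _ (hE.inter hZm) (hmem E hE)).imp id fun h0 => measure_mono_null ?_ h0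
    exact fun w hw h' => hw.1 h'.1
  have hat : ∀ z, μ.restrict Z {z} = 0 := by
    intro z
    rw [Measure.restrict_apply (measurableSet_singleton z), inter_comm]
    refine hZg _ (measurableSet_singleton z) (measure_mono_null inter_subset_right (hacH ?_))
    have := Measure.nullSingletonClass_hausdorff ℂ (d := 1) one_pos
    refine le_antisymm ((Measure.restrict_apply_le _ _).trans ?_) zero_le
    exact (measure_singleton (μ := (Measure.hausdorffMeasure 1 : Measure ℂ)) z).le
  have hμZ : μ Z = 0 := by
    have := zero_of_zero_one h01 hat
    rwa [Measure.restrict_apply_univ] at this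
  refine measure_mono_null (fun w hw => ?_)
    (measure_union_null (s := Z) (t := Sᶜ) (le_antisymm ((hle _).trans hμZ.le) zero_le) (hacH hSc))
  by_cases hwS : w ∈ S
  · exact Or.inl ⟨subset_toMeasurable _ _ ⟨hw, hwS⟩, hwS⟩
  · exact Or.inr hwS

end
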